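/- Fix m ∈ ℕ and q ∈ ℕ. There exist δ > 0, r > 0 and C > 0 such that the following holds: for every K ∈ ℕ and every polynomial P of total degree at most m in K variables, with decomposition P = Q + R where Q lies in the degree-m Hermite span and deg R ≤ m−1, letting N ~ γ_K, F = P(N) and J_m F = Q(N), if the Lévy–Prokhorov distance between the law of J_m F and N(0,1) is at most δ, then E[ Γ[F,F]^{−q} ] ≤ C · ( E[F²] )^{r/2}, where Γ[F,F] := Σ_{k=1}^K (∂_k P(N))². -/

import Mathlib

open MeasureTheory ProbabilityTheory MvPolynomial Filter Topology

noncomputable def gaussPi (ι : Type) [Fintype ι] : Measure (ι → ℝ) :=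
  Measure.pi fun _ => gaussianReal 0 1

noncomputable def hermiteProd {K : ℕ} (k : Fin K → ℕ) : MvPolynomial (Fin K) ℝ :=
  ∏ i, Polynomial.aeval (MvPolynomial.X i) (Polynomial.hermite (k i))

noncomputable def chaos (K m : ℕ) : Submodule ℝ (MvPolynomial (Fin K) ℝ) :=
  Submodule.span ℝ {P | ∃ k : Fin K → ℕ, ∑ i, k i = m ∧ P = hermiteProd k}

noncomputable def sqField {ι : Type} [Fintype ι] (P : MvPolynomial ι ℝ) (x : ι → ℝ) : ℝ :=
  ∑ i, (eval x (pderiv i P)) ^ 2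

def TendstoInLaw {E : Type} [MeasurableSpace E] [TopologicalSpace E]
    (μs : ℕ → Measure E) (μ : Measure E) : Prop :=
  ∀ f : BoundedContinuousFunction E ℝ,
    Tendsto (fun n => ∫ x, f x ∂μs n) atTop (𝓝 (∫ x, f x ∂μ))

instance instGaussPiProb (ι : Type) [Fintype ι] : IsProbabilityMeasure (gaussPi ι) := by
  unfold gaussPi; infer_instance

lemma g1_integrable_pow (n : ℕ) : Integrable (fun x : ℝ => x ^ n) (gaussianReal 0 1) := by
  have h := memLp_id_gaussianReal (μ := 0) (v := 1) n
  rcases Nat.eq_zero_or_pos n with rfl | hn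
  · simp
  have := h.integrable_norm_pow (by positivity)
  refine (integrable_norm_iff (by fun_prop)).1 ?_
  simpa using this

/-- Stein recursion in one dimension. -/
lemma g1_stein (n : ℕ) : ∫ x : ℝ, x ^ (n + 1) ∂(gaussianReal 0 1) =
    n * ∫ x : ℝ, x ^ (n - 1) ∂(gaussianReal 0 1) := by
  have hintg : ∀ k : ℕ, Integrable (fun x : ℝ => x ^ k * gaussianPDFReal 0 1 x) := by
    intro k
    have h := g1_integrable_pow k
    rw [gaussianReal_of_var_ne_zero _ one_ne_zero] at h
    rw [integrable_withDensity_iff_integrable_smul' (by fun_prop)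
      (Eventually.of_forall fun x => by simp [gaussianPDF])] at h
    refine h.congr (Eventually.of_forall fun x => ?_)
    simp [gaussianPDF, gaussianPDFReal_nonneg, mul_comm]
  have hd : ∀ x : ℝ, HasDerivAt (gaussianPDFReal 0 1) (-x * gaussianPDFReal 0 1 x) x := by
    intro x
    have h1 : HasDerivAt (fun x : ℝ => -(x - 0) ^ 2 / (2 * ((1 : NNReal) : ℝ))) (-x) x := by
      have := (((hasDerivAt_id x).sub_const 0).pow 2).neg.div_const (2 * ((1 : NNReal) : ℝ))
      refine this.congr_deriv ?_
      norm_num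
      ring
    have h2 := (h1.exp).const_mul ((√(2 * Real.pi * ((1 : NNReal) : ℝ)))⁻¹)
    rw [gaussianPDFReal_def]
    refine h2.congr_deriv ?_
    ring
  have key := integral_mul_deriv_eq_deriv_mul_of_integrable
    (u := fun x : ℝ => x ^ n) (v := gaussianPDFReal 0 1)
    (u' := fun x : ℝ => n * x ^ (n - 1)) (v' := fun x => -x * gaussianPDFReal 0 1 x)
    (fun x _ => by simpa using hasDerivAt_pow n x) (fun x _ => hd x)
    (by
      refine ((hintg (n + 1)).neg).congr (Eventually.of_forall fun x => ?_)
      simp [pow_succ]; ring)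
    (by
      refine ((hintg (n - 1)).const_mul (n : ℝ)).congr (Eventually.of_forall fun x => ?_)
      simp; ring)
    (hintg n)
  rw [integral_gaussianReal_eq_integral_smul one_ne_zero,
    integral_gaussianReal_eq_integral_smul one_ne_zero, ← integral_const_mul]
  have e1 : ∫ x : ℝ, gaussianPDFReal 0 1 x • x ^ (n + 1) =
      - ∫ x : ℝ, x ^ n * (-x * gaussianPDFReal 0 1 x) := by
    rw [← integral_neg]; congr 1; ext x; simp [pow_succ]; ring
  rw [e1, key, neg_neg]
  congr 1; ext x; simp; ring

/-- Gaussian expectation of a polynomial. -/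
noncomputable def gE {K : ℕ} (F : MvPolynomial (Fin K) ℝ) : ℝ :=
  ∫ x, eval x F ∂gaussPi (Fin K)

lemma eval_monomial_prod {K : ℕ} (s : Fin K →₀ ℕ) (a : ℝ) (x : Fin K → ℝ) :
    eval x (monomial s a) = a * ∏ i, x i ^ s i := by
  rw [eval_monomial, Finsupp.prod_fintype _ _ (by simp)]

lemma integrable_monomial {K : ℕ} (s : Fin K →₀ ℕ) (a : ℝ) :
    Integrable (fun x => eval x (monomial s a)) (gaussPi (Fin K)) := by
  simp only [eval_monomial_prod]
  refine Integrable.const_mul ?_ _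
  unfold gaussPi
  exact Integrable.fintype_prod (f := fun i x => x ^ s i) fun i => g1_integrable_pow (s i)

lemma integrable_poly {K : ℕ} (F : MvPolynomial (Fin K) ℝ) :
    Integrable (fun x => eval x F) (gaussPi (Fin K)) := by
  induction F using MvPolynomial.induction_on' with
  | monomial s a => exact integrable_monomial s a
  | add p q hp hq => simp only [map_add]; exact hp.add hq

lemma gE_add {K : ℕ} (F G : MvPolynomial (Fin K) ℝ) : gE (F + G) = gE F + gE G := by
  simp only [gE, map_add]
  exact integral_add (integrable_poly F) (integrable_poly G)

lemma gE_smul {K : ℕ} (a : ℝ) (F : MvPolynomial (Fin K) ℝ) : gE (a • F) = a * gE F := by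
  simp only [gE, smul_eval, integral_const_mul]

/-- Gaussian expectation as linear map. -/
noncomputable def gEl (K : ℕ) : MvPolynomial (Fin K) ℝ →ₗ[ℝ] ℝ where
  toFun := gE
  map_add' := gE_add
  map_smul' := gE_smul

lemma gEl_apply {K : ℕ} (F : MvPolynomial (Fin K) ℝ) : gEl K F = gE F := rfl

lemma gE_monomial {K : ℕ} (s : Fin K →₀ ℕ) (a : ℝ) :
    gE (monomial s a) = a * ∏ i, ∫ x : ℝ, x ^ s i ∂(gaussianReal 0 1) := by
  simp only [gE, eval_monomial_prod, integral_const_mul]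
  unfold gaussPi
  rw [integral_fintype_prod_eq_prod (fun i x => x ^ s i)]

/-- Gaussian integration by parts. -/
lemma gE_ibp {K : ℕ} (i : Fin K) (F : MvPolynomial (Fin K) ℝ) :
    gE (X i * F) = gE (pderiv i F) := by
  induction F using MvPolynomial.induction_on' with
  | monomial s a =>
    rw [pderiv_monomial, mul_comm, ← pow_one (X i), ← monomial_add_single, gE_monomial, gE_monomial]
    rw [← Finset.mul_prod_erase _ _ (Finset.mem_univ i), ← Finset.mul_prod_erase _ _ (Finset.mem_univ i)]
    have e : ∀ j ∈ Finset.univ.erase i, ∫ x : ℝ, x ^ ((s + Finsupp.single i 1 : Fin K →₀ ℕ) j) ∂(gaussianReal 0 1)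
        = ∫ x : ℝ, x ^ ((s - Finsupp.single i 1 : Fin K →₀ ℕ) j) ∂(gaussianReal 0 1) := by
      intro j hj
      have : i ≠ j := fun h => by simp [h] at hj
      simp [Finsupp.single_apply, this]
    rw [Finset.prod_congr rfl e]
    simp only [Finsupp.add_apply, Finsupp.single_eq_same, Finsupp.tsub_apply]
    rw [g1_stein]; ring
  | add p q hp hq => rw [mul_add, map_add, gE_add, gE_add, hp, hq]

lemma gE_C {K : ℕ} (a : ℝ) : gE (C a : MvPolynomial (Fin K) ℝ) = a := by
  simp [gE]

lemma gE_one {K : ℕ} : gE (1 : MvPolynomial (Fin K) ℝ) = 1 := by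
  simp [gE]

lemma gE_X {K : ℕ} (i : Fin K) : gE (X i : MvPolynomial (Fin K) ℝ) = 0 := by
  have := gE_ibp i (1 : MvPolynomial (Fin K) ℝ)
  rw [mul_one] at this
  rw [this]; simp [gE]

lemma gE_sq_nonneg {K : ℕ} (F : MvPolynomial (Fin K) ℝ) : 0 ≤ gE (F ^ 2) := by
  unfold gE; apply integral_nonneg; intro x; simp; positivity
lemma gE_mono {K : ℕ} (F G : MvPolynomial (Fin K) ℝ) (h : ∀ x, eval x F ≤ eval x G) : gE F ≤ gE G := 
  integral_mono (integrable_poly F) (integrable_poly G) h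

lemma pderiv_comm' {K : ℕ} (i j : Fin K) (F : MvPolynomial (Fin K) ℝ) :
    pderiv i (pderiv j F) = pderiv j (pderiv i F) := by
  ext s
  simp only [coeff_pderiv]
  by_cases h : i = j
  · subst h; rfl
  · have h' : j ≠ i := fun e => h e.symm
    simp [h, h', add_right_comm]; ring

/-- `f` has degree `< n`, expressed through derivatives. -/
def DegLT {K : ℕ} : ℕ → MvPolynomial (Fin K) ℝ → Prop
  | 0, f => f = 0
  | n + 1, f => ∀ k, DegLT n (pderiv k f)

lemma DegLT.zero {K : ℕ} (n : ℕ) : DegLT n (0 : MvPolynomial (Fin K) ℝ) := by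
  induction n with
  | zero => rfl
  | succ n ih => intro k; simpa using ih

lemma DegLT.add {K : ℕ} {n : ℕ} : ∀ {f g : MvPolynomial (Fin K) ℝ}, DegLT n f → DegLT n g →
    DegLT n (f + g) := by
  induction n with
  | zero => intro f g hf hg; simp only [DegLT] at *; simp [hf, hg]
  | succ n ih => intro f g hf hg k; rw [map_add]; exact ih (hf k) (hg k)

lemma DegLT.smul {K : ℕ} {n : ℕ} (a : ℝ) : ∀ {f : MvPolynomial (Fin K) ℝ}, DegLT n f →
    DegLT n (a • f) := by
  induction n with
  | zero => intro f hf; simp only [DegLT] at *; simp [hf]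
  | succ n ih => intro f hf k; rw [Derivation.map_smul]; exact ih (hf k)

lemma DegLT.sum {K : ℕ} {n : ℕ} {ι : Type*} (s : Finset ι) (f : ι → MvPolynomial (Fin K) ℝ)
    (h : ∀ i ∈ s, DegLT n (f i)) : DegLT n (∑ i ∈ s, f i) := by
  classical
  induction s using Finset.induction_on with
  | empty => simpa using DegLT.zero n
  | insert a s ha ih =>
    rw [Finset.sum_insert ha]
    exact (h a (by simp)).add (ih fun i hi => h i (by simp [hi]))

lemma DegLT.succ {K : ℕ} {n : ℕ} : ∀ {f : MvPolynomial (Fin K) ℝ}, DegLT n f → DegLT (n + 1) f := by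
  induction n with
  | zero => intro f hf k; simp only [DegLT] at *; simp [hf]
  | succ n ih => intro f hf k; exact ih (hf k)

lemma DegLT.mono {K : ℕ} {n m : ℕ} (h : n ≤ m) {f : MvPolynomial (Fin K) ℝ} (hf : DegLT n f) :
    DegLT m f := by
  induction m, h using Nat.le_induction with
  | base => exact hf
  | succ m _ ih => exact ih.succ

lemma DegLT.pderiv {K : ℕ} {n : ℕ} {f : MvPolynomial (Fin K) ℝ} (hf : DegLT n f) (k : Fin K) :
    DegLT n (pderiv k f) := hf.succ k

lemma degLT_monomial {K : ℕ} (n : ℕ) : ∀ (s : Fin K →₀ ℕ) (a : ℝ), s.degree < n →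
    DegLT n (monomial s a) := by
  induction n with
  | zero => intro s a h; simp at h
  | succ n ih =>
    intro s a h k
    rw [pderiv_monomial]
    by_cases hk : s k = 0
    · simp [hk, DegLT.zero]
    · apply ih
      have : s = (s - Finsupp.single k 1) + Finsupp.single k 1 := by
        ext j
        by_cases hj : k = j
        · subst hj; simp; omega
        · simp [Finsupp.single_apply, hj]
      have h2 : s.degree = (s - Finsupp.single k 1).degree + 1 := by
        conv_lhs => rw [this]
        simp
      omega

lemma degLT_of_totalDegree {K n : ℕ} {f : MvPolynomial (Fin K) ℝ} (h : f.totalDegree < n) :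
    DegLT n f := by
  rw [f.as_sum]
  apply DegLT.sum
  intro s hs
  apply degLT_monomial
  have := le_totalDegree hs
  have e : s.degree = s.sum fun _ e => e := rfl
  omega

/-- Iterated derivative along a multi-index. -/
noncomputable def dd {K : ℕ} : (n : ℕ) → (Fin n → Fin K) →
    (MvPolynomial (Fin K) ℝ →ₗ[ℝ] MvPolynomial (Fin K) ℝ)
  | 0, _ => LinearMap.id
  | n + 1, I => (dd n (Fin.tail I)).comp (pderiv (I 0)).toLinearMap

lemma dd_zero {K : ℕ} (I : Fin 0 → Fin K) (f : MvPolynomial (Fin K) ℝ) : dd 0 I f = f := rfl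

lemma dd_succ {K n : ℕ} (I : Fin (n + 1) → Fin K) (f : MvPolynomial (Fin K) ℝ) :
    dd (n + 1) I f = dd n (Fin.tail I) (pderiv (I 0) f) := rfl

lemma dd_cons {K n : ℕ} (k : Fin K) (I : Fin n → Fin K) (f : MvPolynomial (Fin K) ℝ) :
    dd (n + 1) (Fin.cons k I : Fin (n + 1) → Fin K) f = dd n I (pderiv k f) := by
  simp [dd]

lemma dd_pderiv {K n : ℕ} (k : Fin K) : ∀ (I : Fin n → Fin K) (f : MvPolynomial (Fin K) ℝ),
    dd n I (pderiv k f) = pderiv k (dd n I f) := by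
  induction n with
  | zero => intro I f; rfl
  | succ n ih => intro I f; simp only [dd_succ]; rw [pderiv_comm', ih]

lemma dd_dd {K n m : ℕ} (I : Fin n → Fin K) : ∀ (J : Fin m → Fin K) (f : MvPolynomial (Fin K) ℝ),
    dd n I (dd m J f) = dd m J (dd n I f) := by
  induction m with
  | zero => intro J f; rfl
  | succ m ih => intro J f; simp only [dd_succ]; rw [ih, dd_pderiv]

lemma sum_cons {K n : ℕ} {M : Type*} [AddCommMonoid M] (g : (Fin (n + 1) → Fin K) → M) :
    ∑ I, g I = ∑ k, ∑ I : Fin n → Fin K, g (Fin.cons k I) := by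
  rw [← Fintype.sum_prod_type', ← (Fin.consEquiv (fun _ : Fin (n + 1) => Fin K)).sum_comp]
  rfl

lemma DegLT.dd_eq_zero {K n : ℕ} : ∀ {f : MvPolynomial (Fin K) ℝ}, DegLT n f →
    ∀ I : Fin n → Fin K, dd n I f = 0 := by
  induction n with
  | zero => intro f hf I; exact hf
  | succ n ih => intro f hf I; exact ih (hf _) _

/-- The form `∑_{|I| = r} ℓ(∂_I F) ℓ(∂_I G)`. -/
noncomputable def BB {K : ℕ} (l : MvPolynomial (Fin K) ℝ →ₗ[ℝ] ℝ) (r : ℕ)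
    (F G : MvPolynomial (Fin K) ℝ) : ℝ := ∑ I : Fin r → Fin K, l (dd r I F) * l (dd r I G)

section BBlemmas
variable {K : ℕ} (l : MvPolynomial (Fin K) ℝ →ₗ[ℝ] ℝ) (r : ℕ)

lemma BB_zero (F G : MvPolynomial (Fin K) ℝ) : BB l 0 F G = l F * l G := by
  simp [BB, dd_zero]

lemma BB_succ (F G : MvPolynomial (Fin K) ℝ) :
    BB l (r + 1) F G = ∑ k, BB l r (pderiv k F) (pderiv k G) := by
  simp only [BB, sum_cons, dd_cons]

lemma BB_comm (F G : MvPolynomial (Fin K) ℝ) : BB l r F G = BB l r G F := by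
  simp only [BB, mul_comm]

lemma BB_add_left (F F' G : MvPolynomial (Fin K) ℝ) :
    BB l r (F + F') G = BB l r F G + BB l r F' G := by
  simp only [BB, map_add, add_mul, Finset.sum_add_distrib]

lemma BB_smul_left (a : ℝ) (F G : MvPolynomial (Fin K) ℝ) :
    BB l r (a • F) G = a * BB l r F G := by
  simp only [BB, map_smul, smul_eq_mul, mul_assoc, Finset.mul_sum]

lemma BB_add_right (F F' G : MvPolynomial (Fin K) ℝ) :
    BB l r G (F + F') = BB l r G F + BB l r G F' := by
  simp only [BB, map_add, mul_add, Finset.sum_add_distrib]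

lemma BB_smul_right (a : ℝ) (F G : MvPolynomial (Fin K) ℝ) :
    BB l r G (a • F) = a * BB l r G F := by
  rw [BB_comm, BB_smul_left, BB_comm]

lemma BB_zero_left (G : MvPolynomial (Fin K) ℝ) : BB l r 0 G = 0 := by
  simp [BB]

lemma BB_self_nonneg (F : MvPolynomial (Fin K) ℝ) : 0 ≤ BB l r F F :=
  Finset.sum_nonneg fun _ _ => mul_self_nonneg _

lemma BB_eq_zero_of_degLT {F : MvPolynomial (Fin K) ℝ} (h : DegLT r F) (G : MvPolynomial (Fin K) ℝ) :
    BB l r F G = 0 := by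
  simp [BB, h.dd_eq_zero]

lemma BB_X_mul {c : ℝ} (hl : ∀ i F, l (X i * F) = c * l (pderiv i F)) (i : Fin K) :
    ∀ (F G : MvPolynomial (Fin K) ℝ), BB l r (X i * F) G =
      c * BB l r (pderiv i F) G + r * BB l (r - 1) F (pderiv i G) := by
  induction r with
  | zero => intro F G; simp [BB_zero, hl, mul_assoc]
  | succ r ih =>
    intro F G
    simp only [BB_succ, Derivation.leibniz, pderiv_X, smul_eq_mul, BB_add_left, ih,
      Finset.sum_add_distrib, Nat.add_sub_cancel]
    have e1 : ∑ k, BB l r (F * Pi.single (M := fun _ => MvPolynomial (Fin K) ℝ) k 1 i) (pderiv k G) = BB l r F (pderiv i G) := by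
      rw [Finset.sum_eq_single i]
      · simp
      · intro b _ hb; simp [hb.symm, BB_zero_left]
      · simp
    rw [e1]
    have e2 : ∑ k, (r : ℝ) * BB l (r - 1) (pderiv k F) (pderiv i (pderiv k G)) =
        r * BB l r F (pderiv i G) := by
      rcases r with _ | r
      · simp
      · rw [← Finset.mul_sum]
        congr 1
        rw [BB_succ]
        exact Finset.sum_congr rfl fun k _ => by rw [pderiv_comm' i k]; rfl
    rw [e2]
    have e3 : ∑ k, c * BB l r (pderiv i (pderiv k F)) (pderiv k G) =
        c * ∑ k, BB l r (pderiv k (pderiv i F)) (pderiv k G) := by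
      rw [Finset.mul_sum]
      exact Finset.sum_congr rfl fun k _ => by rw [pderiv_comm' i k]
    rw [e3]
    push_cast
    ring
end BBlemmas

/-- Truncated Parseval sum. -/
noncomputable def SS {K : ℕ} (l : MvPolynomial (Fin K) ℝ →ₗ[ℝ] ℝ) (M : ℕ)
    (F G : MvPolynomial (Fin K) ℝ) : ℝ := ∑ r ∈ Finset.range M, BB l r F G / (r.factorial : ℝ)

lemma SS_stable {K : ℕ} (l : MvPolynomial (Fin K) ℝ →ₗ[ℝ] ℝ) {M M' : ℕ} (h : M ≤ M')
    {F : MvPolynomial (Fin K) ℝ} (hF : DegLT M F) (G : MvPolynomial (Fin K) ℝ) :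
    SS l M' F G = SS l M F G := by
  unfold SS
  symm
  apply Finset.sum_subset
  · intro r hr; simp at *; omega
  · intro r _ hr
    rw [BB_eq_zero_of_degLT l r (hF.mono (by simpa using hr)), zero_div]

lemma SS_X {K : ℕ} (l : MvPolynomial (Fin K) ℝ →ₗ[ℝ] ℝ) {c : ℝ}
    (hl : ∀ i F, l (X i * F) = c * l (pderiv i F)) (i : Fin K) (M : ℕ)
    (F G : MvPolynomial (Fin K) ℝ) :
    SS l (M + 1) (X i * F) G = c * SS l (M + 1) (pderiv i F) G + SS l M F (pderiv i G) := by
  have h2 : SS l M F (pderiv i G) =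
      ∑ r ∈ Finset.range (M + 1), (r : ℝ) * BB l (r - 1) F (pderiv i G) / (r.factorial : ℝ) := by
    rw [Finset.sum_range_succ']
    simp only [Nat.cast_zero, zero_mul, zero_div, add_zero, SS]
    refine Finset.sum_congr rfl fun r _ => ?_
    have : (r.factorial : ℝ) ≠ 0 := by positivity
    rw [Nat.factorial_succ]; push_cast; field_simp
  rw [h2]
  simp only [SS, BB_X_mul l _ hl i F G, Finset.mul_sum, ← Finset.sum_add_distrib]
  refine Finset.sum_congr rfl fun r _ => ?_
  ring

lemma SS_comm {K : ℕ} (l : MvPolynomial (Fin K) ℝ →ₗ[ℝ] ℝ) (M : ℕ)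
    (F G : MvPolynomial (Fin K) ℝ) : SS l M F G = SS l M G F := by
  simp only [SS, BB_comm l _ F G]

lemma SS_add_left {K : ℕ} (l : MvPolynomial (Fin K) ℝ →ₗ[ℝ] ℝ) (M : ℕ)
    (F F' G : MvPolynomial (Fin K) ℝ) : SS l M (F + F') G = SS l M F G + SS l M F' G := by
  simp only [SS, BB_add_left, add_div, Finset.sum_add_distrib]

lemma SS_C {K : ℕ} (l : MvPolynomial (Fin K) ℝ →ₗ[ℝ] ℝ) (M : ℕ) (a : ℝ)
    (G : MvPolynomial (Fin K) ℝ) : SS l (M + 1) (C a) G = l (C a) * l G := by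
  have h : DegLT 1 (C a : MvPolynomial (Fin K) ℝ) := by intro k; simp [DegLT]
  rw [SS_stable l (by omega : 1 ≤ M + 1) h]
  simp [SS, BB_zero]

lemma parseval_aux {K : ℕ} (F : MvPolynomial (Fin K) ℝ) :
    ∃ M0, ∀ M ≥ M0, ∀ G, gE (F * G) = SS (gEl K) M F G := by
  have hl : ∀ (i : Fin K) F, gEl K (X i * F) = 1 * gEl K (pderiv i F) := by
    intro i F; rw [one_mul]; exact gE_ibp i F
  induction F using MvPolynomial.induction_on with
  | C a =>
    refine ⟨1, fun M hM G => ?_⟩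
    obtain ⟨M, rfl⟩ : ∃ k, M = k + 1 := ⟨M - 1, by omega⟩
    rw [SS_C, gEl_apply, gEl_apply, gE_C, ← smul_eq_C_mul, gE_smul]
  | add p q hp hq =>
    obtain ⟨M1, h1⟩ := hp
    obtain ⟨M2, h2⟩ := hq
    refine ⟨max M1 M2, fun M hM G => ?_⟩
    rw [add_mul, gE_add, SS_add_left, h1 M (by omega), h2 M (by omega)]
  | mul_X p i hp =>
    obtain ⟨M1, h1⟩ := hp
    refine ⟨max M1 (p.totalDegree + 1) + 1, fun M hM G => ?_⟩
    obtain ⟨M, rfl⟩ : ∃ k, M = k + 1 := ⟨M - 1, by omega⟩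
    have hd : DegLT M p := degLT_of_totalDegree (by omega)
    rw [mul_comm p, SS_X _ hl, mul_assoc, mul_left_comm, h1 (M + 1) (by omega), SS_comm, SS_X _ hl,
      SS_comm, SS_comm _ _ G, SS_stable _ (by omega : M ≤ M + 1) hd,
      SS_stable _ (by omega : M ≤ M + 1) (hd.pderiv i)]
    ring

lemma parseval {K M : ℕ} {F : MvPolynomial (Fin K) ℝ} (hF : DegLT M F)
    (G : MvPolynomial (Fin K) ℝ) : gE (F * G) = SS (gEl K) M F G := by
  obtain ⟨M0, h⟩ := parseval_aux F
  rw [h (max M M0) (by omega), SS_stable _ (by omega) hF]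

lemma exists_degLT {K : ℕ} (F : MvPolynomial (Fin K) ℝ) : ∃ M, DegLT M F :=
  ⟨_, degLT_of_totalDegree (Nat.lt_succ_self _)⟩

lemma BB_div_nonneg {K : ℕ} (l : MvPolynomial (Fin K) ℝ →ₗ[ℝ] ℝ) (r : ℕ) (F : MvPolynomial (Fin K) ℝ) :
    0 ≤ BB l r F F / (r.factorial : ℝ) := div_nonneg (BB_self_nonneg _ _ _) (by positivity)

lemma gE_sum_le {K : ℕ} (F : MvPolynomial (Fin K) ℝ) (s : Finset ℕ) :
    ∑ r ∈ s, BB (gEl K) r F F / (r.factorial : ℝ) ≤ gE (F * F) := by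
  obtain ⟨M, hM⟩ := exists_degLT F
  obtain ⟨M', hM'⟩ := s.exists_nat_subset_range
  rw [parseval (hM.mono (le_max_left M M'))]
  refine Finset.sum_le_sum_of_subset_of_nonneg ?_ fun r _ _ => BB_div_nonneg _ _ _
  intro r hr
  have := hM' hr
  simp at *; omega

lemma gE_sum {K : ℕ} {ι : Type*} (s : Finset ι) (f : ι → MvPolynomial (Fin K) ℝ) :
    gE (∑ i ∈ s, f i) = ∑ i ∈ s, gE (f i) := map_sum (gEl K) f s

lemma grad_eq {K M : ℕ} {F : MvPolynomial (Fin K) ℝ} (hF : DegLT M F) :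
    ∑ k, gE (pderiv k F * pderiv k F) = ∑ r ∈ Finset.range M, BB (gEl K) (r + 1) F F / (r.factorial : ℝ) := by
  simp only [fun k => parseval (hF.pderiv k) (pderiv k F), SS]
  rw [Finset.sum_comm]
  simp only [BB_succ, Finset.sum_div]

lemma poincare {K : ℕ} (F : MvPolynomial (Fin K) ℝ) :
    gE (F * F) ≤ gE F ^ 2 + ∑ k, gE (pderiv k F * pderiv k F) := by
  obtain ⟨M, hM⟩ := exists_degLT F
  rw [grad_eq hM, parseval hM.succ, SS, Finset.sum_range_succ', add_comm]
  simp only [BB_zero, gEl_apply, Nat.factorial_zero, Nat.cast_one, div_one, sq]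
  gcongr with r hr
  · exact BB_self_nonneg _ _ _
  · omega

lemma grad_le {K M : ℕ} {F : MvPolynomial (Fin K) ℝ} (hF : DegLT M F) :
    ∑ k, gE (pderiv k F * pderiv k F) ≤ M * gE (F * F) := by
  rw [grad_eq hF]
  have h1 : ∑ r ∈ Finset.range M, BB (gEl K) (r + 1) F F / (r.factorial : ℝ) ≤
      M * ∑ r ∈ Finset.range M, BB (gEl K) (r + 1) F F / ((r + 1).factorial : ℝ) := by
    rw [Finset.mul_sum]
    refine Finset.sum_le_sum fun r hr => ?_
    have h2 := BB_div_nonneg (gEl K) (r + 1) F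
    have h3 : BB (gEl K) (r + 1) F F / (r.factorial : ℝ) =
        (r + 1 : ℝ) * (BB (gEl K) (r + 1) F F / ((r + 1).factorial : ℝ)) := by
      have : (r.factorial : ℝ) ≠ 0 := by positivity
      rw [Nat.factorial_succ]; push_cast; field_simp
    rw [h3]
    refine mul_le_mul_of_nonneg_right ?_ h2
    have : r + 1 ≤ M := by simp at hr; omega
    exact_mod_cast this
  refine h1.trans (mul_le_mul_of_nonneg_left ?_ (by positivity))
  rw [parseval hF.succ, SS, Finset.sum_range_succ']
  have := BB_div_nonneg (gEl K) 0 F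
  linarith

lemma gE_cs {K : ℕ} (A B : MvPolynomial (Fin K) ℝ) : gE (A * B) ^ 2 ≤ gE (A * A) * gE (B * B) := by
  have h := discrim_le_zero (a := gE (A * A)) (b := 2 * gE (A * B)) (c := gE (B * B)) (fun t => by
    have := gE_sq_nonneg (t • A + B)
    have e : (t • A + B) ^ 2 = (t * t) • (A * A) + (2 * t) • (A * B) + B * B := by
      simp only [smul_eq_C_mul, C_mul]
      have : (C 2 : MvPolynomial (Fin K) ℝ) = 2 := map_ofNat C 2
      rw [this]; ring
    rw [e, gE_add, gE_add, gE_smul, gE_smul] at this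
    linarith)
  unfold discrim at h
  nlinarith

set_option maxHeartbeats 1000000 in
lemma hyper (n : ℕ) : ∃ C > (0 : ℝ), ∀ (K : ℕ) (F : MvPolynomial (Fin K) ℝ), DegLT n F →
    gE ((F * F) * (F * F)) ≤ C * gE (F * F) ^ 2 := by
  induction n with
  | zero =>
    refine ⟨1, one_pos, fun K F hF => ?_⟩
    simp only [DegLT] at hF
    simp [hF, gE]
  | succ n ih =>
    obtain ⟨C, hC, h⟩ := ih
    refine ⟨2 + 16 * C * (n + 1) ^ 2, by positivity, fun K F hF => ?_⟩
    set g : ℝ := ∑ k, gE (pderiv k F * pderiv k F) with hg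
    have hg0 : 0 ≤ g := Finset.sum_nonneg fun k _ => by rw [← sq]; exact gE_sq_nonneg _
    have hgle : g ≤ (n + 1) * gE (F * F) := by simpa using grad_le hF
    have hs0 : 0 ≤ gE (F * F) := by rw [← sq]; exact gE_sq_nonneg _
    set Γ : MvPolynomial (Fin K) ℝ := ∑ k, pderiv k F * pderiv k F with hΓ
    have h1 := poincare (F * F)
    have h2 : ∑ k, gE (pderiv k (F * F) * pderiv k (F * F)) ≤
        (1 / 2) * gE ((F * F) * (F * F)) + 8 * gE (Γ * Γ) := by
      rw [← gE_sum, ← gE_smul, ← gE_smul, ← gE_add]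
      apply gE_mono
      intro x
      have e : eval x (∑ k, pderiv k (F * F) * pderiv k (F * F)) = 4 * eval x F ^ 2 * eval x Γ := by
        rw [hΓ, map_sum, map_sum, Finset.mul_sum]
        refine Finset.sum_congr rfl fun k _ => ?_
        simp only [Derivation.leibniz, smul_eq_mul, map_mul, map_add]
        ring
      rw [e]
      simp only [map_add, smul_eval, map_mul]
      nlinarith [sq_nonneg (eval x F ^ 2 - 4 * eval x Γ)]
    have h3 : gE (Γ * Γ) ≤ C * g ^ 2 := by
      rw [hΓ, Finset.sum_mul_sum, gE_sum, hg, sq, Finset.sum_mul_sum, Finset.mul_sum]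
      refine Finset.sum_le_sum fun k _ => ?_
      rw [gE_sum, Finset.mul_sum]
      refine Finset.sum_le_sum fun j _ => ?_
      have hk := h K _ (hF k)
      have hj := h K _ (hF j)
      have hk0 : 0 ≤ gE (pderiv k F * pderiv k F) := by rw [← sq]; exact gE_sq_nonneg _
      have hj0 : 0 ≤ gE (pderiv j F * pderiv j F) := by rw [← sq]; exact gE_sq_nonneg _
      have hc := gE_cs (pderiv k F * pderiv k F) (pderiv j F * pderiv j F)
      refine abs_le_of_sq_le_sq' ?_ (by positivity) |>.2
      refine hc.trans ?_
      refine (mul_le_mul hk hj (by rw [← sq]; exact gE_sq_nonneg _) (by positivity)).trans (le_of_eq ?_)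
      ring
    have h4 : C * g ^ 2 ≤ C * ((n + 1) * gE (F * F)) ^ 2 :=
      mul_le_mul_of_nonneg_left (pow_le_pow_left₀ hg0 hgle 2) hC.le
    have h5 : C * ((n + 1) * gE (F * F)) ^ 2 = C * (n + 1) ^ 2 * gE (F * F) ^ 2 := by ring
    linarith

lemma hermite_deriv (n : ℕ) : Polynomial.derivative (Polynomial.hermite (n + 1)) =
    ((n + 1 : ℕ) : Polynomial ℤ) * Polynomial.hermite n := by
  induction n with
  | zero => simp
  | succ n ih =>
    rw [Polynomial.hermite_succ (n + 1)]
    simp only [Polynomial.derivative_sub, Polynomial.derivative_mul, Polynomial.derivative_X, one_mul]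
    rw [ih, Polynomial.derivative_mul, Polynomial.derivative_natCast, Polynomial.hermite_succ n]
    push_cast
    ring

/-- hermite in variable i. -/
noncomputable def hv {K : ℕ} (i : Fin K) (n : ℕ) : MvPolynomial (Fin K) ℝ :=
  Polynomial.aeval (X i) (Polynomial.hermite n)

lemma pderiv_hv {K : ℕ} (i j : Fin K) (n : ℕ) : pderiv j (hv i n) =
    Polynomial.aeval (X i : MvPolynomial (Fin K) ℝ) (Polynomial.derivative (Polynomial.hermite n)) * pderiv j (X i) := by
  unfold hv
  have h : ∀ p : Polynomial ℤ, pderiv j (Polynomial.aeval (X i : MvPolynomial (Fin K) ℝ) p) =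
      Polynomial.aeval (X i : MvPolynomial (Fin K) ℝ) (Polynomial.derivative p) * pderiv j (X i) := by
    intro p
    induction p using Polynomial.induction_on' with
    | add p q hp hq => simp only [map_add, hp, hq, add_mul]
    | monomial n a =>
      rw [Polynomial.aeval_monomial, Polynomial.derivative_monomial, Polynomial.aeval_monomial]
      have : (algebraMap ℤ (MvPolynomial (Fin K) ℝ)) a = C (a : ℝ) := by simp
      rw [Derivation.leibniz, Derivation.leibniz_pow, this, pderiv_C]
      simp
      ring
  exact h _

lemma hermiteProd_eq {K : ℕ} (k : Fin K → ℕ) (i : Fin K) :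
    hermiteProd k = hv i (k i) * ∏ j ∈ Finset.univ.erase i, hv j (k j) := by
  unfold hermiteProd
  rw [← Finset.mul_prod_erase _ _ (Finset.mem_univ i)]
  rfl

lemma pderiv_rest {K : ℕ} (k : Fin K → ℕ) (i : Fin K) :
    pderiv i (∏ j ∈ Finset.univ.erase i, hv j (k j)) = 0 := by
  have key : ∀ s : Finset (Fin K), i ∉ s → pderiv i (∏ j ∈ s, hv j (k j)) = 0 := by
    intro s
    induction s using Finset.induction_on with
    | empty => intro _; simp
    | insert a s ha ih =>
      intro hi
      simp only [Finset.mem_insert, not_or] at hi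
      rw [Finset.prod_insert ha, Derivation.leibniz, ih hi.2, pderiv_hv, pderiv_X_of_ne (Ne.symm hi.1)]
      simp
  exact key _ (by simp)

lemma hermiteProd_update {K : ℕ} (k : Fin K → ℕ) (i : Fin K) (n : ℕ) :
    hermiteProd (Function.update k i n) = hv i n * ∏ j ∈ Finset.univ.erase i, hv j (k j) := by
  rw [hermiteProd_eq _ i]
  simp only [Function.update_self]
  congr 1
  refine Finset.prod_congr rfl fun j hj => ?_
  rw [Function.update_of_ne (Finset.mem_erase.1 hj).1]

lemma pderiv_hermiteProd {K : ℕ} (k : Fin K → ℕ) (i : Fin K) :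
    pderiv i (hermiteProd k) = (k i : ℝ) • hermiteProd (Function.update k i (k i - 1)) := by
  rw [hermiteProd_update, hermiteProd_eq k i, Derivation.leibniz, pderiv_rest, pderiv_hv, pderiv_X_self]
  rcases k i with _ | n
  · simp
  · rw [hermite_deriv]
    simp [hv, smul_eq_C_mul]
    ring

lemma gE_hermiteProd {K : ℕ} (k : Fin K → ℕ) (h : 0 < ∑ i, k i) : gE (hermiteProd k) = 0 := by
  obtain ⟨i, hi⟩ : ∃ i, k i ≠ 0 := by
    by_contra! hc
    simp [hc] at h
  obtain ⟨n, hn⟩ := Nat.exists_eq_succ_of_ne_zero hi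
  have e : hermiteProd k = X i * hermiteProd (Function.update k i n) +
      (-1 : ℝ) • pderiv i (hermiteProd (Function.update k i n)) := by
    rw [hermiteProd_update, hermiteProd_eq k i, hn, Derivation.leibniz, pderiv_rest, pderiv_hv, pderiv_X_self]
    simp only [hv, Nat.succ_eq_add_one, Polynomial.hermite_succ, map_sub, map_mul, Polynomial.aeval_X]
    simp
    ring
  rw [e, gE_add, gE_smul, gE_ibp]; ring

lemma chaos_pderiv {K m : ℕ} {Q : MvPolynomial (Fin K) ℝ} (hQ : Q ∈ chaos K (m + 1)) (i : Fin K) :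
    pderiv i Q ∈ chaos K m := by
  unfold chaos at hQ
  induction hQ using Submodule.span_induction with
  | mem x hx =>
    obtain ⟨k, hk, rfl⟩ := hx
    rw [pderiv_hermiteProd]
    by_cases h0 : k i = 0
    · simp [h0]
    refine Submodule.smul_mem _ _ (Submodule.subset_span ⟨_, ?_, rfl⟩)
    rw [← Finset.add_sum_erase _ _ (Finset.mem_univ i)] at hk ⊢
    have : ∑ j ∈ Finset.univ.erase i, Function.update k i (k i - 1) j = ∑ j ∈ Finset.univ.erase i, k j :=
      Finset.sum_congr rfl fun j hj => by rw [Function.update_of_ne (Finset.mem_erase.1 hj).1]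
    rw [this, Function.update_self]
    omega
  | zero => simp
  | add x y _ _ hx hy => rw [map_add]; exact Submodule.add_mem _ hx hy
  | smul a x _ hx => rw [Derivation.map_smul]; exact Submodule.smul_mem _ _ hx

lemma chaos_gE {K m : ℕ} {Q : MvPolynomial (Fin K) ℝ} (hQ : Q ∈ chaos K (m + 1)) : gE Q = 0 := by
  unfold chaos at hQ
  induction hQ using Submodule.span_induction with
  | mem x hx =>
    obtain ⟨k, hk, rfl⟩ := hx
    exact gE_hermiteProd k (by omega)
  | zero => simp [gE]
  | add x y _ _ hx hy => rw [gE_add, hx, hy, add_zero]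
  | smul a x _ hx => rw [gE_smul, hx, mul_zero]

lemma chaos_zero {K : ℕ} {Q : MvPolynomial (Fin K) ℝ} (hQ : Q ∈ chaos K 0) : ∃ a, Q = C a := by
  unfold chaos at hQ
  induction hQ using Submodule.span_induction with
  | mem x hx =>
    obtain ⟨k, hk, rfl⟩ := hx
    refine ⟨1, ?_⟩
    have : ∀ i, k i = 0 := by simpa using hk
    simp [hermiteProd, this]
  | zero => exact ⟨0, by simp⟩
  | add x y _ _ hx hy =>
    obtain ⟨a, rfl⟩ := hx
    obtain ⟨b, rfl⟩ := hy
    exact ⟨a + b, by simp⟩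
  | smul a x _ hx =>
    obtain ⟨b, rfl⟩ := hx
    exact ⟨a * b, by simp [smul_eq_C_mul]⟩

lemma chaos_degLT {K m : ℕ} : ∀ {Q : MvPolynomial (Fin K) ℝ}, Q ∈ chaos K m → DegLT (m + 1) Q := by
  induction m with
  | zero =>
    intro Q hQ k
    obtain ⟨a, rfl⟩ := chaos_zero hQ
    simp [DegLT]
  | succ m ih => intro Q hQ k; exact ih (chaos_pderiv hQ k)

lemma chaos_BB {K m : ℕ} : ∀ {Q : MvPolynomial (Fin K) ℝ}, Q ∈ chaos K m → ∀ r < m, ∀ G,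
    BB (gEl K) r Q G = 0 := by
  induction m with
  | zero => intro Q hQ r hr; omega
  | succ m ih =>
    intro Q hQ r hr G
    rcases r with _ | r
    · rw [BB_zero, gEl_apply, chaos_gE hQ, zero_mul]
    · rw [BB_succ]
      exact Finset.sum_eq_zero fun k _ => ih (chaos_pderiv hQ k) r (by omega) _

lemma chaos_sq {K m : ℕ} {Q : MvPolynomial (Fin K) ℝ} (hQ : Q ∈ chaos K m) :
    gE (Q * Q) = BB (gEl K) m Q Q / (m.factorial : ℝ) := by
  rw [parseval (chaos_degLT hQ), SS, Finset.sum_range_succ, Finset.sum_eq_zero, zero_add]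
  intro r hr
  rw [chaos_BB hQ r (by simpa using hr), zero_div]

/-- Evaluation at zero. -/
noncomputable def e0 (K : ℕ) : MvPolynomial (Fin K) ℝ →ₗ[ℝ] ℝ where
  toFun f := eval 0 f
  map_add' := by simp
  map_smul' := by simp

lemma e0_apply {K : ℕ} (f : MvPolynomial (Fin K) ℝ) : e0 K f = eval 0 f := rfl

lemma DegLT.eq_C {K : ℕ} {f : MvPolynomial (Fin K) ℝ} (hf : DegLT 1 f) : f = C (e0 K f) := by
  ext s
  rw [coeff_C]
  split_ifs with h
  · subst h; rw [e0_apply, ← constantCoeff_eq, eval_zero]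
  · obtain ⟨i, hi⟩ : ∃ i, s i ≠ 0 := by
      by_contra! hc
      exact h (by ext i; simp [hc])
    have h1 := coeff_pderiv (i := i) (p := f) (m := s - Finsupp.single i 1)
    have h2 : MvPolynomial.pderiv i f = 0 := hf i
    have h3 : s - Finsupp.single i 1 + Finsupp.single i 1 = s := by
      ext j
      by_cases hj : i = j
      · subst hj; simp; omega
      · simp [hj]
    rw [h2, h3] at h1
    simp at h1
    rcases h1 with h1 | h1
    · exact h1
    · have : (0 : ℝ) < ((s i - 1 : ℕ) : ℝ) + 1 := by positivity
      exact absurd h1 this.ne'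

lemma DegLT.dd {K : ℕ} {n m : ℕ} : ∀ {f : MvPolynomial (Fin K) ℝ}, DegLT (n + m) f →
    ∀ I : Fin m → Fin K, DegLT n (dd m I f) := by
  induction m with
  | zero => intro f hf I; exact hf
  | succ m ih => intro f hf I; rw [dd_succ]; exact ih (hf _) _

lemma gE_dd {K m : ℕ} {f : MvPolynomial (Fin K) ℝ} (hf : DegLT (m + 1) f) (I : Fin m → Fin K) :
    gEl K (dd m I f) = e0 K (dd m I f) := by
  have h : DegLT 1 (_root_.dd m I f) := DegLT.dd (by rwa [add_comm]) I
  rw [h.eq_C, gEl_apply, gE_C]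
  simp [e0_apply]

lemma BB_gE_e0 {K m : ℕ} {F G : MvPolynomial (Fin K) ℝ} (hF : DegLT (m + 1) F) (hG : DegLT (m + 1) G) :
    BB (gEl K) m F G = BB (e0 K) m F G := by
  simp only [BB, gE_dd hF, gE_dd hG]

lemma DegLT.mul {K : ℕ} (n : ℕ) : ∀ (a b : ℕ), a + b = n → ∀ (f g : MvPolynomial (Fin K) ℝ),
    DegLT a f → DegLT (b + 1) g → DegLT n (f * g) := by
  induction n with
  | zero =>
    intro a b h f g hf hg
    obtain rfl : a = 0 := by omega
    simp only [DegLT] at hf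
    simp [hf, DegLT.zero]
  | succ n ih =>
    intro a b h f g hf hg k
    rcases a with _ | a
    · simp only [DegLT] at hf
      simp [hf, DegLT.zero]
    rw [Derivation.leibniz, smul_eq_mul, smul_eq_mul]
    refine DegLT.add ?_ ?_
    · rcases b with _ | b
      · have : MvPolynomial.pderiv k g = 0 := hg k
        simp [this, DegLT.zero]
      · exact ih (a + 1) b (by omega) _ _ hf (hg k)
    · rw [mul_comm]
      exact ih a b (by omega) _ _ (hf k) hg

lemma hc_pderiv {K : ℕ} (m : ℕ) (k : Fin K) (f : MvPolynomial (Fin K) ℝ) :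
    pderiv k (homogeneousComponent (m + 1) f) = homogeneousComponent m (pderiv k f) := by
  ext s
  simp only [coeff_pderiv, coeff_homogeneousComponent]
  simp only [map_add, Finsupp.degree_single, add_left_inj]
  split_ifs <;> simp

lemma degLT_sub_hc {K m : ℕ} : ∀ {f : MvPolynomial (Fin K) ℝ}, DegLT (m + 1) f →
    DegLT m (f - homogeneousComponent m f) := by
  induction m with
  | zero =>
    intro f hf
    simp only [DegLT, homogeneousComponent_zero]
    rw [DegLT.eq_C hf]; simp
  | succ m ih => intro f hf k; rw [map_sub, hc_pderiv]; exact ih (hf k)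

/-- Fischer inner product. -/
noncomputable def fpl (K : ℕ) :
    MvPolynomial (Fin K) ℝ →ₗ[ℝ] (MvPolynomial (Fin K) ℝ →ₗ[ℝ] ℝ) :=
  (basisMonomials (Fin K) ℝ).constr ℝ
    (fun s => ((∏ i, (s i).factorial : ℕ) : ℝ) • lcoeff ℝ s)

lemma fpl_monomial {K : ℕ} (s : Fin K →₀ ℕ) (a : ℝ) (G : MvPolynomial (Fin K) ℝ) :
    fpl K (monomial s a) G = a * ((∏ i, (s i).factorial : ℕ) : ℝ) * coeff s G := by
  have h : monomial s a = a • (basisMonomials (Fin K) ℝ) s := by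
    simp [coe_basisMonomials, smul_monomial]
  rw [h, map_smul, fpl, Module.Basis.constr_basis]
  simp [mul_assoc]

lemma fpl_C {K : ℕ} (a : ℝ) (G : MvPolynomial (Fin K) ℝ) :
    fpl K (C a) G = a * e0 K G := by
  rw [← monomial_zero', fpl_monomial]
  simp [e0_apply, constantCoeff_eq]

lemma fpl_X {K : ℕ} (k : Fin K) (F G : MvPolynomial (Fin K) ℝ) :
    fpl K (X k * F) G = fpl K F (pderiv k G) := by
  induction F using MvPolynomial.induction_on' with
  | monomial s a =>
    rw [mul_comm, ← pow_one (X k), ← monomial_add_single, fpl_monomial, fpl_monomial, coeff_pderiv,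
      ← Finset.mul_prod_erase _ _ (Finset.mem_univ k), ← Finset.mul_prod_erase _ _ (Finset.mem_univ k)]
    have e : ∏ j ∈ Finset.univ.erase k, ((s + Finsupp.single k 1 : Fin K →₀ ℕ) j).factorial
        = ∏ j ∈ Finset.univ.erase k, (s j).factorial := by
      refine Finset.prod_congr rfl fun j hj => ?_
      have : k ≠ j := fun h => by simp [h] at hj
      simp [this]
    rw [e]
    simp only [Finsupp.add_apply, Finsupp.single_eq_same, Nat.factorial_succ]
    push_cast
    ring
  | add p q hp hq => rw [mul_add, map_add, map_add, LinearMap.add_apply, LinearMap.add_apply, hp, hq]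

lemma e0_X {K : ℕ} (i : Fin K) (F : MvPolynomial (Fin K) ℝ) : e0 K (X i * F) = 0 * e0 K (pderiv i F) := by
  simp [e0_apply]

lemma fpl_SS {K : ℕ} (F : MvPolynomial (Fin K) ℝ) :
    ∃ M0, ∀ M ≥ M0, ∀ G, fpl K F G = SS (e0 K) M F G := by
  induction F using MvPolynomial.induction_on with
  | C a =>
    refine ⟨1, fun M hM G => ?_⟩
    obtain ⟨M, rfl⟩ : ∃ k, M = k + 1 := ⟨M - 1, by omega⟩
    rw [SS_C, fpl_C]; simp [e0_apply]
  | add p q hp hq =>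
    obtain ⟨M1, h1⟩ := hp
    obtain ⟨M2, h2⟩ := hq
    refine ⟨max M1 M2, fun M hM G => ?_⟩
    rw [map_add, LinearMap.add_apply, SS_add_left, h1 M (by omega), h2 M (by omega)]
  | mul_X p i hp =>
    obtain ⟨M1, h1⟩ := hp
    refine ⟨M1 + 1, fun M hM G => ?_⟩
    obtain ⟨M, rfl⟩ : ∃ k, M = k + 1 := ⟨M - 1, by omega⟩
    rw [mul_comm p, SS_X _ e0_X, fpl_X, h1 M (by omega)]
    ring

lemma fpl_comm {K : ℕ} (F G : MvPolynomial (Fin K) ℝ) : fpl K F G = fpl K G F := by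
  obtain ⟨M1, h1⟩ := fpl_SS F
  obtain ⟨M2, h2⟩ := fpl_SS G
  rw [h1 (max M1 M2) (by omega), h2 (max M1 M2) (by omega), SS_comm]

lemma hom_dd {K : ℕ} {r : ℕ} : ∀ {n : ℕ} {p : MvPolynomial (Fin K) ℝ}, p.IsHomogeneous (n + r) →
    ∀ I : Fin r → Fin K, (dd r I p).IsHomogeneous n := by
  induction r with
  | zero => intro n p hp I; exact hp
  | succ r ih =>
    intro n p hp I
    rw [dd_succ]
    refine ih ?_ _
    have := hp.pderiv (i := I 0)
    simpa using this

lemma fpl_hom {K n : ℕ} {p : MvPolynomial (Fin K) ℝ} (hp : p.IsHomogeneous n) (G : MvPolynomial (Fin K) ℝ) :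
    fpl K p G = BB (e0 K) n p G / (n.factorial : ℝ) := by
  obtain ⟨M, h⟩ := fpl_SS p
  rw [h (max M (n + 1)) (by omega), SS, Finset.sum_eq_single n]
  · intro r _ hr
    rcases lt_or_gt_of_ne hr with h1 | h1
    · rw [BB, Finset.sum_eq_zero, zero_div]
      intro I _
      have h2 : (dd r I p).IsHomogeneous (n - r) := hom_dd (by rwa [Nat.sub_add_cancel h1.le]) I
      have h3 : e0 K (dd r I p) = 0 := by
        rw [e0_apply, eval_zero, constantCoeff_eq]
        by_contra hc
        have := h2 hc
        simp at this
        omega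
      rw [h3, zero_mul]
    · rw [BB_eq_zero_of_degLT, zero_div]
      exact degLT_of_totalDegree (hp.totalDegree_le.trans_lt h1)
  · intro h; simp at h

/-- Auxiliary form for the product formula. -/
noncomputable def Psi {K : ℕ} (r s : ℕ) (p f g h : MvPolynomial (Fin K) ℝ) : ℝ :=
  ∑ I : Fin r → Fin K, ∑ J : Fin s → Fin K,
    fpl K (dd r I p) (dd s J g) * fpl K (dd s J f) (dd r I h)

section Psi
variable {K : ℕ}

lemma Psi_swap (r s : ℕ) (p f g h : MvPolynomial (Fin K) ℝ) : Psi r s p f g h = Psi s r f p h g := by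
  unfold Psi
  rw [Finset.sum_comm]
  simp only [mul_comm]

lemma Psi_succ (r s : ℕ) (p f g h : MvPolynomial (Fin K) ℝ) :
    Psi (r + 1) s p f g h = ∑ k, Psi r s (pderiv k p) f g (pderiv k h) := by
  simp only [Psi, sum_cons, dd_cons]

lemma Psi_add (r s : ℕ) (p p' f g h : MvPolynomial (Fin K) ℝ) :
    Psi r s (p + p') f g h = Psi r s p f g h + Psi r s p' f g h := by
  simp only [Psi, map_add, LinearMap.add_apply, add_mul, Finset.sum_add_distrib]

lemma Psi_zero (r s : ℕ) (f g h : MvPolynomial (Fin K) ℝ) :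
    Psi r s 0 f g h = 0 := by
  simp [Psi]

lemma Psi_X (s : ℕ) (k : Fin K) (r : ℕ) : ∀ (p f g h : MvPolynomial (Fin K) ℝ),
    Psi r s (X k * p) f g h = Psi r s p f (pderiv k g) h + r * Psi (r - 1) s p f g (pderiv k h) := by
  induction r with
  | zero =>
    intro p f g h
    simp [Psi, dd_zero, fpl_X, dd_pderiv]
  | succ r ih =>
    intro p f g h
    simp only [Psi_succ, Derivation.leibniz, pderiv_X, smul_eq_mul, Psi_add, ih,
      Finset.sum_add_distrib, Nat.add_sub_cancel]
    have e1 : ∑ j, Psi r s (p * Pi.single (M := fun _ => MvPolynomial (Fin K) ℝ) j 1 k) f g (pderiv j h) =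
        Psi r s p f g (pderiv k h) := by
      rw [Finset.sum_eq_single k]
      · simp
      · intro b _ hb; simp [hb.symm, Psi_zero]
      · simp
    rw [e1]
    have e2 : ∑ j, (r : ℝ) * Psi (r - 1) s (pderiv j p) f g (pderiv k (pderiv j h)) =
        r * Psi r s p f g (pderiv k h) := by
      rcases r with _ | r
      · simp
      · rw [← Finset.mul_sum]
        congr 1
        rw [Psi_succ]
        exact Finset.sum_congr rfl fun j _ => by rw [pderiv_comm' k j]; rfl
    rw [e2]
    push_cast
    ring

/-- Truncated double sum. -/
noncomputable def TT (M N : ℕ) (p f g h : MvPolynomial (Fin K) ℝ) : ℝ :=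
  ∑ r ∈ Finset.range M, ∑ s ∈ Finset.range N, Psi r s p f g h / ((r.factorial : ℝ) * s.factorial)

lemma TT_swap (M N : ℕ) (p f g h : MvPolynomial (Fin K) ℝ) : TT M N p f g h = TT N M f p h g := by
  unfold TT
  rw [Finset.sum_comm]
  refine Finset.sum_congr rfl fun r _ => Finset.sum_congr rfl fun s _ => ?_
  rw [Psi_swap, mul_comm]

lemma TT_add (M N : ℕ) (p p' f g h : MvPolynomial (Fin K) ℝ) :
    TT M N (p + p') f g h = TT M N p f g h + TT M N p' f g h := by
  simp only [TT, Psi_add, add_div, Finset.sum_add_distrib]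

lemma TT_X (M N : ℕ) (k : Fin K) (p f g h : MvPolynomial (Fin K) ℝ) :
    TT (M + 1) N (X k * p) f g h = TT (M + 1) N p f (pderiv k g) h + TT M N p f g (pderiv k h) := by
  have h2 : TT M N p f g (pderiv k h) =
      ∑ r ∈ Finset.range (M + 1), ∑ s ∈ Finset.range N,
        (r : ℝ) * Psi (r - 1) s p f g (pderiv k h) / ((r.factorial : ℝ) * s.factorial) := by
    rw [Finset.sum_range_succ']
    simp only [Nat.cast_zero, zero_mul, zero_div, Finset.sum_const_zero, add_zero, TT]
    refine Finset.sum_congr rfl fun r _ => Finset.sum_congr rfl fun s _ => ?_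
    have : (r.factorial : ℝ) ≠ 0 := by positivity
    have : (s.factorial : ℝ) ≠ 0 := by positivity
    rw [Nat.factorial_succ]; push_cast; field_simp
  rw [h2]
  simp only [TT, Psi_X, ← Finset.sum_add_distrib, add_div]

lemma TT_C (M N : ℕ) (a b : ℝ) (g h : MvPolynomial (Fin K) ℝ) :
    TT (M + 1) (N + 1) (C a) (C b) g h = a * e0 K g * (b * e0 K h) := by
  have hC : ∀ (a : ℝ) (r : ℕ) (I : Fin (r + 1) → Fin K), dd (r + 1) I (C a) = 0 := by
    intro a r I; rw [dd_succ, pderiv_C, map_zero]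
  unfold TT
  rw [Finset.sum_range_succ', Finset.sum_eq_zero, zero_add, Finset.sum_range_succ', Finset.sum_eq_zero, zero_add]
  · simp [Psi, dd_zero, fpl_C]
  · intro s _; simp [Psi, hC]
  · intro r _; refine Finset.sum_eq_zero fun s _ => ?_
    simp [Psi, hC]

lemma fpl_mul_aux1 (a : ℝ) (f : MvPolynomial (Fin K) ℝ) :
    ∃ M0, ∀ M ≥ M0, ∀ N ≥ M0, ∀ g h, fpl K (C a * f) (g * h) = TT M N (C a) f g h := by
  induction f using MvPolynomial.induction_on with
  | C b =>
    refine ⟨1, fun M hM N hN g h => ?_⟩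
    obtain ⟨M, rfl⟩ : ∃ k, M = k + 1 := ⟨M - 1, by omega⟩
    obtain ⟨N, rfl⟩ : ∃ k, N = k + 1 := ⟨N - 1, by omega⟩
    rw [TT_C, ← C_mul, fpl_C]; simp [e0_apply]; ring
  | add p q hp hq =>
    obtain ⟨M1, h1⟩ := hp
    obtain ⟨M2, h2⟩ := hq
    refine ⟨max M1 M2, fun M hM N hN g h => ?_⟩
    rw [mul_add, map_add, LinearMap.add_apply, TT_swap, TT_add, TT_swap, TT_swap N M q,
      h1 M (by omega) N (by omega), h2 M (by omega) N (by omega)]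
  | mul_X p i hp =>
    obtain ⟨M1, h1⟩ := hp
    refine ⟨M1 + 1, fun M hM N hN g h => ?_⟩
    obtain ⟨N, rfl⟩ : ∃ k, N = k + 1 := ⟨N - 1, by omega⟩
    rw [mul_comm p, TT_swap, TT_X, TT_swap, TT_swap N M, ← h1 M (by omega) (N + 1) (by omega),
      ← h1 M (by omega) N (by omega), mul_left_comm, fpl_X, Derivation.leibniz, smul_eq_mul, smul_eq_mul, map_add,
      mul_comm h]

lemma fpl_mul_aux (p f : MvPolynomial (Fin K) ℝ) :
    ∃ M0, ∀ M ≥ M0, ∀ N ≥ M0, ∀ g h, fpl K (p * f) (g * h) = TT M N p f g h := by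
  induction p using MvPolynomial.induction_on with
  | C b => exact fpl_mul_aux1 b f
  | add p q hp hq =>
    obtain ⟨M1, h1⟩ := hp
    obtain ⟨M2, h2⟩ := hq
    refine ⟨max M1 M2, fun M hM N hN g h => ?_⟩
    rw [add_mul, map_add, LinearMap.add_apply, TT_add,
      h1 M (by omega) N (by omega), h2 M (by omega) N (by omega)]
  | mul_X p i hp =>
    obtain ⟨M1, h1⟩ := hp
    refine ⟨M1 + 1, fun M hM N hN g h => ?_⟩
    obtain ⟨M, rfl⟩ : ∃ k, M = k + 1 := ⟨M - 1, by omega⟩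
    rw [mul_comm p, TT_X, ← h1 (M + 1) (by omega) N (by omega),
      ← h1 M (by omega) N (by omega), mul_assoc, fpl_X, Derivation.leibniz, smul_eq_mul, smul_eq_mul, map_add,
      mul_comm h, add_comm]
end Psi

/-- Contraction norms. -/
noncomputable def VV {K : ℕ} (r s : ℕ) (f : MvPolynomial (Fin K) ℝ) : ℝ :=
  ∑ I : Fin r → Fin K, ∑ J : Fin r → Fin K, BB (e0 K) s (dd r I f) (dd r J f) ^ 2

lemma Psi_self_nonneg {K : ℕ} (r s : ℕ) (p : MvPolynomial (Fin K) ℝ) : 0 ≤ Psi r s p p p p := by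
  unfold Psi
  refine Finset.sum_nonneg fun I _ => Finset.sum_nonneg fun J _ => ?_
  rw [fpl_comm (dd s J p)]
  exact mul_self_nonneg _

lemma fp_sq_ge {K : ℕ} (p : MvPolynomial (Fin K) ℝ) (S : Finset ℕ) :
    ∑ r ∈ S, Psi r r p p p p / ((r.factorial : ℝ) * r.factorial) ≤ fpl K (p * p) (p * p) := by
  obtain ⟨M0, h⟩ := fpl_mul_aux p p
  obtain ⟨M', hM'⟩ := S.exists_nat_subset_range
  have hn : ∀ r s, 0 ≤ Psi r s p p p p / ((r.factorial : ℝ) * s.factorial) := fun r s =>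
    div_nonneg (Psi_self_nonneg _ _ _) (by positivity)
  rw [h (max M0 M') (by omega) (max M0 M') (by omega), TT]
  have hsub : S ⊆ Finset.range (max M0 M') := by
    intro r hr
    have := hM' hr
    simp at *; omega
  calc ∑ r ∈ S, Psi r r p p p p / ((r.factorial : ℝ) * r.factorial)
      ≤ ∑ r ∈ S, ∑ s ∈ Finset.range (max M0 M'), Psi r s p p p p / ((r.factorial : ℝ) * s.factorial) := by
        refine Finset.sum_le_sum fun r hr => ?_
        exact Finset.single_le_sum (f := fun s => Psi r s p p p p / ((r.factorial : ℝ) * s.factorial))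
          (fun s _ => hn r s) (hsub hr)
    _ ≤ _ := Finset.sum_le_sum_of_subset_of_nonneg hsub fun r _ _ =>
        Finset.sum_nonneg fun s _ => hn r s

lemma Psi_hom {K r s : ℕ} {p : MvPolynomial (Fin K) ℝ} (hp : p.IsHomogeneous (s + r)) :
    Psi r r p p p p = VV r s p / (s.factorial : ℝ) ^ 2 := by
  unfold Psi VV
  rw [Finset.sum_div]
  refine Finset.sum_congr rfl fun I _ => ?_
  rw [Finset.sum_div]
  refine Finset.sum_congr rfl fun J _ => ?_
  rw [fpl_comm (dd r J p), fpl_hom (hom_dd hp I)]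
  ring

lemma dd_congr {K m r s : ℕ} (h : s + r = m) {f g : MvPolynomial (Fin K) ℝ} (hd : DegLT m (f - g))
    (I : Fin r → Fin K) (J : Fin s → Fin K) : dd s J (dd r I f) = dd s J (dd r I g) := by
  subst h
  have h1 := (DegLT.dd hd I).dd_eq_zero J
  rw [map_sub, map_sub] at h1
  exact sub_eq_zero.1 h1

lemma VV_congr {K m r s : ℕ} (h : s + r = m) {f g : MvPolynomial (Fin K) ℝ} (hd : DegLT m (f - g)) :
    VV r s f = VV r s g := by
  simp only [VV, BB, dd_congr h hd]

lemma BB_congr {K m : ℕ} (l : MvPolynomial (Fin K) ℝ →ₗ[ℝ] ℝ) {f g : MvPolynomial (Fin K) ℝ} (hd : DegLT m (f - g)) :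
    BB l m f f = BB l m g g := by
  have : ∀ I : Fin m → Fin K, dd m I f = dd m I g := by
    intro I
    have := hd.dd_eq_zero I
    rw [map_sub] at this
    exact sub_eq_zero.1 this
  simp only [BB, this]

lemma VV_zero {K s : ℕ} (f : MvPolynomial (Fin K) ℝ) : VV 0 s f = BB (e0 K) s f f ^ 2 := by
  simp [VV, dd_zero]

lemma VV_zero_right {K r : ℕ} (f : MvPolynomial (Fin K) ℝ) : VV r 0 f = BB (e0 K) r f f ^ 2 := by
  simp only [VV, BB_zero]
  rw [BB, sq, Finset.sum_mul_sum]
  refine Finset.sum_congr rfl fun I _ => Finset.sum_congr rfl fun J _ => ?_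
  ring

lemma fourth_moment {K r s : ℕ} (hr : 1 ≤ r) (hs : 1 ≤ s) {Q : MvPolynomial (Fin K) ℝ}
    (hQ : Q ∈ chaos K (s + r)) :
    VV r s Q ≤ ((r.factorial : ℝ) * s.factorial) ^ 2 * (gE ((Q * Q) * (Q * Q)) - 3 * gE (Q * Q) ^ 2) := by
  obtain ⟨m, hm⟩ : ∃ m, m = s + r := ⟨_, rfl⟩
  rw [← hm] at hQ
  set p := homogeneousComponent m Q with hp
  have hph : p.IsHomogeneous m := homogeneousComponent_isHomogeneous m Q
  have hQd := chaos_degLT hQ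
  have hd : DegLT m (Q - p) := degLT_sub_hc hQd
  have hpd : DegLT (m + 1) p := degLT_of_totalDegree (hph.totalDegree_le.trans_lt (Nat.lt_succ_self m))
  have hQ2 : gE (Q * Q) = BB (e0 K) m p p / (m.factorial : ℝ) := by
    rw [chaos_sq hQ, BB_gE_e0 hQd hQd, BB_congr _ hd]
  have h1 := gE_sum_le (Q * Q) {0, 2 * m}
  rw [Finset.sum_pair (by omega), BB_zero, gEl_apply] at h1
  have hQQd : DegLT (2 * m + 1) (Q * Q) := DegLT.mul _ (m + 1) m (by omega) _ _ hQd hQd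
  have hppd : DegLT (2 * m) (Q * Q - p * p) := by
    have : Q * Q - p * p = (Q - p) * (Q + p) := by ring
    rw [this]
    exact DegLT.mul _ m m (by omega) _ _ hd (hQd.add hpd)
  have h2 : BB (gEl K) (2 * m) (Q * Q) (Q * Q) / ((2 * m).factorial : ℝ) = fpl K (p * p) (p * p) := by
    rw [BB_gE_e0 hQQd hQQd, BB_congr _ hppd, fpl_hom (n := 2 * m)]
    rw [two_mul]; exact hph.mul hph
  rw [h2] at h1
  have h3 := fp_sq_ge p {0, m, r}
  rw [Finset.sum_insert (by simp; omega), Finset.sum_pair (by omega)] at h3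
  rw [Psi_hom (r := 0) (s := m) (by simpa using hph), Psi_hom (r := m) (s := 0) (by simpa using hph),
    Psi_hom (r := r) (s := s) (by rwa [← hm]), VV_zero, VV_zero_right] at h3
  rw [VV_congr hm.symm hd]
  simp only [Nat.factorial_zero, Nat.cast_one, one_pow, div_one, mul_one] at h1 h3
  have e1 : BB (e0 K) m p p ^ 2 / (m.factorial : ℝ) ^ 2 = gE (Q * Q) ^ 2 := by rw [hQ2]; ring
  have e2 : BB (e0 K) m p p ^ 2 / ((m.factorial : ℝ) * m.factorial) = gE (Q * Q) ^ 2 := by rw [hQ2]; ring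
  rw [e1, e2] at h3
  have h4 : VV r s p / (s.factorial : ℝ) ^ 2 / ((r.factorial : ℝ) * r.factorial) ≤
      gE ((Q * Q) * (Q * Q)) - 3 * gE (Q * Q) ^ 2 := by nlinarith
  have hrp : (0 : ℝ) < r.factorial := by positivity
  have hsp : (0 : ℝ) < s.factorial := by positivity
  rw [div_div, div_le_iff₀ (by positivity)] at h4
  refine h4.trans (le_of_eq ?_)
  ring

lemma gauss_cexp {K : ℕ} (v : Fin K → ℝ) :
    ∫ x, Complex.exp ((∑ i, v i * x i : ℝ) * Complex.I) ∂gaussPi (Fin K) = Complex.exp (-(∑ i, v i ^ 2 : ℝ) / 2) := by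
  have h1 : ∀ x : Fin K → ℝ, Complex.exp ((∑ i, v i * x i : ℝ) * Complex.I) =
      ∏ i, Complex.exp (v i * x i * Complex.I) := by
    intro x
    rw [← Complex.exp_sum]
    congr 1
    push_cast
    rw [Finset.sum_mul]
  simp only [h1]
  unfold gaussPi
  rw [integral_fintype_prod_eq_prod (fun i (t : ℝ) => Complex.exp (v i * t * Complex.I))]
  have h2 : ∀ i, ∫ t : ℝ, Complex.exp (v i * t * Complex.I) ∂gaussianReal 0 1 = Complex.exp (-(v i ^ 2 : ℝ) / 2) := by
    intro i
    rw [← charFun_apply_real, charFun_gaussianReal]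
    congr 1
    simp
    ring
  simp only [h2]
  rw [← Complex.exp_sum]
  congr 1
  push_cast
  rw [← Finset.sum_div, ← Finset.sum_neg_distrib]

lemma gauss_cos {K : ℕ} (v : Fin K → ℝ) :
    ∫ x, Real.cos (∑ i, v i * x i) ∂gaussPi (Fin K) = Real.exp (-(∑ i, v i ^ 2) / 2) := by
  have h := congrArg Complex.re (gauss_cexp v)
  rw [← RCLike.re_eq_complex_re, ← integral_re] at h
  · simp only [RCLike.re_eq_complex_re, Complex.exp_ofReal_mul_I_re] at h
    rw [h]
    have : (-((∑ i, v i ^ 2 : ℝ) : ℂ) / 2) = ((-(∑ i, v i ^ 2) / 2 : ℝ) : ℂ) := by push_cast; ring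
    rw [this, Complex.exp_ofReal_re]
  · refine Integrable.of_bound (C := 1) ?_ ?_
    · apply Continuous.aestronglyMeasurable
      fun_prop
    · refine Eventually.of_forall fun x => ?_
      rw [Complex.norm_exp_ofReal_mul_I]

lemma gE_X2 {K : ℕ} (a b : Fin K) : gE (X a * X b : MvPolynomial (Fin K) ℝ) = if a = b then 1 else 0 := by
  rw [gE_ibp]
  by_cases h : a = b
  · subst h; simp [gE_one]
  · rw [pderiv_X_of_ne (Ne.symm h)]; simp [h, gE]

lemma gE_X4 {K : ℕ} (a b c d : Fin K) : gE (X a * (X b * (X c * X d)) : MvPolynomial (Fin K) ℝ) =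
    (if a = b then 1 else 0) * (if c = d then 1 else 0) +
    (if a = c then 1 else 0) * (if b = d then 1 else 0) +
    (if a = d then 1 else 0) * (if b = c then 1 else 0) := by
  have hX : ∀ a b : Fin K, (pderiv a (X b : MvPolynomial (Fin K) ℝ)) = C (if a = b then 1 else 0) := by
    intro a b
    by_cases h : a = b
    · subst h; simp
    · rw [pderiv_X_of_ne (Ne.symm h)]; simp [h]
  rw [gE_ibp]
  simp only [Derivation.leibniz, smul_eq_mul, hX]
  have e : X b * (X c * C (if a = d then (1:ℝ) else 0) + X d * C (if a = c then 1 else 0)) + X c * X d * C (if a = b then 1 else 0)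
    = (if a = d then (1:ℝ) else 0) • (X b * X c) + (if a = c then (1:ℝ) else 0) • (X b * X d) + (if a = b then (1:ℝ) else 0) • (X c * X d : MvPolynomial (Fin K) ℝ) := by
    simp only [smul_eq_C_mul]; ring
  rw [e, gE_add, gE_add, gE_smul, gE_smul, gE_smul, gE_X2, gE_X2, gE_X2]
  ring

/-- Quadratic form polynomial. -/
noncomputable def quadP {K : ℕ} (M : Fin K → Fin K → ℝ) : MvPolynomial (Fin K) ℝ :=
  ∑ k, ∑ l, M k l • (X k * X l)

lemma eval_quadP {K : ℕ} (M : Fin K → Fin K → ℝ) (x : Fin K → ℝ) :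
    eval x (quadP M) = ∑ k, ∑ l, x k * x l * M k l := by
  simp only [quadP, map_sum, smul_eval, map_mul, eval_X]
  exact Finset.sum_congr rfl fun k _ => Finset.sum_congr rfl fun l _ => by ring

lemma gE_quadP {K : ℕ} (M : Fin K → Fin K → ℝ) : gE (quadP M) = ∑ k, M k k := by
  simp only [quadP, gE_sum, gE_smul, gE_X2]
  simp

lemma gE_quadP_sq {K : ℕ} (M : Fin K → Fin K → ℝ) : gE (quadP M * quadP M) =
    (∑ k, M k k) ^ 2 + ∑ k, ∑ l, M k l ^ 2 + ∑ k, ∑ l, M k l * M l k := by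
  have e : quadP M * quadP M = ∑ k, ∑ l, ∑ a, ∑ b, (M k l * M a b) • (X k * (X l * (X a * X b))) := by
    simp only [quadP, Finset.sum_mul, Finset.mul_sum]
    refine Finset.sum_congr rfl fun k _ => Finset.sum_congr rfl fun l _ =>
      Finset.sum_congr rfl fun a _ => Finset.sum_congr rfl fun b _ => ?_
    simp only [smul_eq_C_mul, C_mul]; ring
  rw [e]
  simp only [gE_sum, gE_smul, gE_X4, mul_add, Finset.sum_add_distrib]
  congr 1
  · congr 1
    · simp only [mul_ite, mul_one, mul_zero, Finset.sum_ite_eq, Finset.mem_univ, if_true, sq, Finset.sum_mul_sum]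
      refine Finset.sum_congr rfl fun k _ => ?_
      rw [Finset.sum_eq_single k]
      · simp
      · intro b _ hb; simp [hb.symm]
      · simp
    · refine Finset.sum_congr rfl fun k _ => Finset.sum_congr rfl fun l _ => ?_
      rw [Finset.sum_eq_single k]
      · simp [sq]
      · intro b _ hb; simp [hb.symm]
      · simp
  · refine Finset.sum_congr rfl fun k _ => Finset.sum_congr rfl fun l _ => ?_
    rw [Finset.sum_eq_single l]
    · simp
    · intro b _ hb; simp [hb.symm]
    · simp

lemma quad_swap_le {K : ℕ} (M : Fin K → Fin K → ℝ) :
    ∑ k, ∑ l, M k l * M l k ≤ ∑ k, ∑ l, M k l ^ 2 := by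
  have h : ∑ k, ∑ l, M k l * M l k ≤ ∑ k, ∑ l, (M k l ^ 2 / 2 + M l k ^ 2 / 2) := by
    refine Finset.sum_le_sum fun k _ => Finset.sum_le_sum fun l _ => ?_
    nlinarith [sq_nonneg (M k l - M l k)]
  refine h.trans (le_of_eq ?_)
  simp only [Finset.sum_add_distrib]
  rw [Finset.sum_comm (f := fun k l => M l k ^ 2 / 2)]
  simp only [← Finset.sum_div]; ring

lemma quad_sq_int {K : ℕ} (M : Fin K → Fin K → ℝ) :
    ∫ x, (∑ k, ∑ l, x k * x l * M k l) ^ 2 ∂gaussPi (Fin K) ≤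
      (∑ k, M k k) ^ 2 + 2 * ∑ k, ∑ l, M k l ^ 2 := by
  have h := gE_quadP_sq M
  have h2 := quad_swap_le M
  simp only [gE, ← sq, map_pow, eval_quadP] at h
  linarith

lemma quad_var_int {K : ℕ} (M : Fin K → Fin K → ℝ) :
    ∫ x, ((∑ k, ∑ l, x k * x l * M k l) - ∑ k, M k k) ^ 2 ∂gaussPi (Fin K) ≤
      2 * ∑ k, ∑ l, M k l ^ 2 := by
  have h := gE_quadP_sq M
  have h2 := quad_swap_le M
  set t := ∑ k, M k k with ht
  have e : gE ((quadP M - C t) * (quadP M - C t)) = gE (quadP M * quadP M) - t ^ 2 := by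
    have : (quadP M - C t) * (quadP M - C t) = quadP M * quadP M + (-2 * t) • quadP M + C (t * t) := by
      simp only [smul_eq_C_mul, C_mul, C_neg]
      rw [show (C 2 : MvPolynomial (Fin K) ℝ) = 2 from map_ofNat C 2]
      ring
    rw [this, gE_add, gE_add, gE_smul, gE_C, gE_quadP, ← ht]; ring
  have e2 : ∫ x, ((∑ k, ∑ l, x k * x l * M k l) - t) ^ 2 ∂gaussPi (Fin K) = gE ((quadP M - C t) * (quadP M - C t)) := by
    simp only [gE, ← sq, map_pow, map_sub, eval_quadP, eval_C]
  rw [e2, e]; linarith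

lemma lin_sq_int {K : ℕ} (v : Fin K → ℝ) :
    ∫ x, (∑ k, x k * v k) ^ 2 ∂gaussPi (Fin K) = ∑ k, v k ^ 2 := by
  have h := gE_quadP (fun k l => v k * v l)
  simp only [gE, eval_quadP] at h
  simp only [sq]
  rw [← h]
  congr 1
  ext x
  rw [Finset.sum_mul_sum]
  exact Finset.sum_congr rfl fun k _ => Finset.sum_congr rfl fun l _ => by ring

/-- Directional derivative. -/
noncomputable def Dir {K : ℕ} (x : Fin K → ℝ) : MvPolynomial (Fin K) ℝ →ₗ[ℝ] MvPolynomial (Fin K) ℝ :=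
  ∑ k, x k • (pderiv k).toLinearMap

lemma Dir_apply {K : ℕ} (x : Fin K → ℝ) (f : MvPolynomial (Fin K) ℝ) :
    Dir x f = ∑ k, x k • pderiv k f := by
  simp [Dir]

lemma BB_sum_left {K : ℕ} (l : MvPolynomial (Fin K) ℝ →ₗ[ℝ] ℝ) (r : ℕ) {ι : Type*} (s : Finset ι)
    (f : ι → MvPolynomial (Fin K) ℝ) (G : MvPolynomial (Fin K) ℝ) :
    BB l r (∑ i ∈ s, f i) G = ∑ i ∈ s, BB l r (f i) G := by
  simp only [BB, map_sum, Finset.sum_mul]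
  rw [Finset.sum_comm]

lemma BB_lin2 {K : ℕ} (l : MvPolynomial (Fin K) ℝ →ₗ[ℝ] ℝ) (r : ℕ) {ι : Type*} (s : Finset ι)
    (f g : ι → MvPolynomial (Fin K) ℝ) (a b : ι → ℝ) :
    BB l r (∑ i ∈ s, a i • f i) (∑ i ∈ s, b i • g i) = ∑ i ∈ s, ∑ j ∈ s, a i * b j * BB l r (f i) (g j) := by
  simp only [BB_sum_left, BB_smul_left]
  refine Finset.sum_congr rfl fun i _ => ?_
  rw [BB_comm, BB_sum_left, Finset.mul_sum]
  refine Finset.sum_congr rfl fun j _ => ?_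
  rw [BB_smul_left, BB_comm]; ring

lemma BB_Dir {K : ℕ} (l : MvPolynomial (Fin K) ℝ →ₗ[ℝ] ℝ) (r : ℕ) (x y : Fin K → ℝ) (f g : MvPolynomial (Fin K) ℝ) :
    BB l r (Dir x f) (Dir y g) = ∑ i, ∑ j, x i * y j * BB l r (pderiv i f) (pderiv j g) := by
  rw [Dir_apply, Dir_apply, BB_lin2]

lemma VV_Dir {K : ℕ} (r s : ℕ) (x : Fin K → ℝ) (f : MvPolynomial (Fin K) ℝ) :
    VV r s (Dir x f) = ∑ I : Fin r → Fin K, ∑ J : Fin r → Fin K,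
      (∑ i, ∑ j, x i * x j * BB (e0 K) s (dd r I (pderiv i f)) (dd r J (pderiv j f))) ^ 2 := by
  unfold VV
  refine Finset.sum_congr rfl fun I _ => Finset.sum_congr rfl fun J _ => ?_
  rw [Dir_apply, map_sum, map_sum]
  simp only [map_smul]
  rw [BB_lin2]

lemma VV_one {K : ℕ} (s : ℕ) (f : MvPolynomial (Fin K) ℝ) :
    VV 1 s f = ∑ k, ∑ l, BB (e0 K) s (pderiv k f) (pderiv l f) ^ 2 := by
  simp [VV, sum_cons (n := 0), dd_cons (n := 0), dd_zero]

lemma VV_succ {K : ℕ} (r s : ℕ) (f : MvPolynomial (Fin K) ℝ) :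
    VV (r + 1) s f = ∑ I : Fin r → Fin K, ∑ J : Fin r → Fin K,
      ∑ k, ∑ l, BB (e0 K) s (dd r I (pderiv k f)) (dd r J (pderiv l f)) ^ 2 := by
  simp only [VV, sum_cons, dd_cons]
  rw [Finset.sum_comm]
  refine Finset.sum_congr rfl fun I _ => ?_
  rw [Finset.sum_comm' (t' := Finset.univ) (s' := fun _ => Finset.univ) (by simp)]
  rw [Finset.sum_congr rfl fun l _ => Finset.sum_comm, Finset.sum_comm]
  exact Finset.sum_congr rfl fun J _ => Finset.sum_comm

lemma mat_cross {ι κ : Type*} [Fintype ι] [Fintype κ] (a b : ι → κ → ℝ) :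
    ∑ i, ∑ j, (∑ l, a i l * b j l) ^ 2 = ∑ l, ∑ l', (∑ i, a i l * a i l') * (∑ j, b j l * b j l') := by
  calc ∑ i, ∑ j, (∑ l, a i l * b j l) ^ 2
      = ∑ i, ∑ j, ∑ l, ∑ l', (a i l * a i l') * (b j l * b j l') := by
        refine Finset.sum_congr rfl fun i _ => Finset.sum_congr rfl fun j _ => ?_
        rw [sq, Finset.sum_mul_sum]
        exact Finset.sum_congr rfl fun l _ => Finset.sum_congr rfl fun l' _ => by ring
    _ = ∑ i, ∑ l, ∑ l', ∑ j, (a i l * a i l') * (b j l * b j l') := by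
        refine Finset.sum_congr rfl fun i _ => ?_
        rw [Finset.sum_comm]
        exact Finset.sum_congr rfl fun l _ => Finset.sum_comm
    _ = ∑ l, ∑ l', ∑ i, ∑ j, (a i l * a i l') * (b j l * b j l') := by
        rw [Finset.sum_comm]
        exact Finset.sum_congr rfl fun l _ => Finset.sum_comm
    _ = _ := by
        refine Finset.sum_congr rfl fun l _ => Finset.sum_congr rfl fun l' _ => ?_
        rw [Finset.sum_mul_sum]

lemma mat_add {ι κ : Type*} [Fintype ι] [Fintype κ] (a b : ι → κ → ℝ) :
    ∑ i, ∑ j, (∑ l, (a i l + b i l) * (a j l + b j l)) ^ 2 ≤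
      8 * ∑ i, ∑ j, (∑ l, a i l * a j l) ^ 2 + 8 * ∑ i, ∑ j, (∑ l, b i l * b j l) ^ 2 := by
  have h1 : ∑ i, ∑ j, (∑ l, (a i l + b i l) * (a j l + b j l)) ^ 2 ≤
      ∑ i, ∑ j, (4 * (∑ l, a i l * a j l) ^ 2 + 4 * (∑ l, a i l * b j l) ^ 2
        + 4 * (∑ l, b i l * a j l) ^ 2 + 4 * (∑ l, b i l * b j l) ^ 2) := by
    refine Finset.sum_le_sum fun i _ => Finset.sum_le_sum fun j _ => ?_
    have : ∑ l, (a i l + b i l) * (a j l + b j l) =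
        ∑ l, a i l * a j l + ∑ l, a i l * b j l + ∑ l, b i l * a j l + ∑ l, b i l * b j l := by
      simp only [← Finset.sum_add_distrib]
      exact Finset.sum_congr rfl fun l _ => by ring
    rw [this]
    generalize ∑ l, a i l * a j l = w
    generalize ∑ l, a i l * b j l = x
    generalize ∑ l, b i l * a j l = y
    generalize ∑ l, b i l * b j l = z
    nlinarith [sq_nonneg (w - x), sq_nonneg (w - y), sq_nonneg (w - z), sq_nonneg (x - y), sq_nonneg (x - z), sq_nonneg (y - z)]
  have h2 : ∑ i, ∑ j, (∑ l, b i l * a j l) ^ 2 = ∑ i, ∑ j, (∑ l, a i l * b j l) ^ 2 := by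
    rw [Finset.sum_comm]
    simp only [mul_comm]
  have h3 : ∑ i, ∑ j, (∑ l, a i l * b j l) ^ 2 ≤
      (1 / 2) * ∑ i, ∑ j, (∑ l, a i l * a j l) ^ 2 + (1 / 2) * ∑ i, ∑ j, (∑ l, b i l * b j l) ^ 2 := by
    rw [mat_cross, mat_cross, mat_cross]
    rw [Finset.mul_sum, Finset.mul_sum, ← Finset.sum_add_distrib]
    refine Finset.sum_le_sum fun l _ => ?_
    rw [Finset.mul_sum, Finset.mul_sum, ← Finset.sum_add_distrib]
    refine Finset.sum_le_sum fun l' _ => ?_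
    nlinarith [sq_nonneg ((∑ i, a i l * a i l') - ∑ i, b i l * b i l')]
  simp only [Finset.sum_add_distrib, ← Finset.mul_sum] at h1
  rw [h2] at h1
  linarith

lemma VV_add_le {K : ℕ} (r s : ℕ) (f g : MvPolynomial (Fin K) ℝ) :
    VV r s (f + g) ≤ 8 * VV r s f + 8 * VV r s g := by
  have := mat_add (fun (I : Fin r → Fin K) (L : Fin s → Fin K) => e0 K (dd s L (dd r I f)))
    (fun (I : Fin r → Fin K) (L : Fin s → Fin K) => e0 K (dd s L (dd r I g)))
  simpa only [VV, BB, map_add] using this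

lemma VV_smul {K : ℕ} (r s : ℕ) (c : ℝ) (f : MvPolynomial (Fin K) ℝ) :
    VV r s (c • f) = c ^ 4 * VV r s f := by
  simp only [VV, map_smul, BB_smul_left, BB_smul_right, Finset.mul_sum]
  exact Finset.sum_congr rfl fun l _ => Finset.sum_congr rfl fun l' _ => by ring

lemma VV_nonneg {K : ℕ} (r s : ℕ) (f : MvPolynomial (Fin K) ℝ) : 0 ≤ VV r s f :=
  Finset.sum_nonneg fun _ _ => Finset.sum_nonneg fun _ _ => sq_nonneg _

lemma VV_sum_le {K : ℕ} (r s : ℕ) {ι : Type*} (S : Finset ι) (f : ι → MvPolynomial (Fin K) ℝ) :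
    VV r s (∑ i ∈ S, f i) ≤ 8 ^ S.card * ∑ i ∈ S, VV r s (f i) := by
  classical
  induction S using Finset.induction_on with
  | empty => simp [VV, BB]
  | insert a S ha ih =>
    rw [Finset.sum_insert ha, Finset.card_insert_of_notMem ha, Finset.sum_insert ha, pow_succ]
    have h1 := VV_add_le r s (f a) (∑ i ∈ S, f i)
    have h2 : (1 : ℝ) ≤ 8 ^ S.card := one_le_pow₀ (by norm_num)
    have h3 := VV_nonneg r s (f a)
    nlinarith

/-- polynomial version of VV of directional derivative -/
noncomputable def VVP {K : ℕ} (r s : ℕ) (f : MvPolynomial (Fin K) ℝ) : MvPolynomial (Fin K) ℝ :=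
  ∑ I : Fin r → Fin K, ∑ J : Fin r → Fin K,
    (quadP fun i j => BB (e0 K) s (dd r I (pderiv i f)) (dd r J (pderiv j f))) ^ 2

lemma eval_VVP {K : ℕ} (r s : ℕ) (x : Fin K → ℝ) (f : MvPolynomial (Fin K) ℝ) :
    eval x (VVP r s f) = VV r s (Dir x f) := by
  simp only [VV_Dir, VVP, map_sum, map_pow, eval_quadP]

lemma VV_Dir_int {K : ℕ} (r s : ℕ) (f : MvPolynomial (Fin K) ℝ) :
    ∫ x, VV r s (Dir x f) ∂gaussPi (Fin K) ≤ VV r (s + 1) f + 2 * VV (r + 1) s f := by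
  simp only [← eval_VVP]
  have : ∫ x, eval x (VVP r s f) ∂gaussPi (Fin K) = gE (VVP r s f) := rfl
  rw [this, VVP, gE_sum, VV_succ, VV]
  simp only [gE_sum, Finset.mul_sum, ← Finset.sum_add_distrib]
  refine Finset.sum_le_sum fun I _ => Finset.sum_le_sum fun J _ => ?_
  have h := quad_sq_int (fun i j => BB (e0 K) s (dd r I (pderiv i f)) (dd r J (pderiv j f)))
  simp only [← Finset.mul_sum]
  simp only [gE, map_pow, eval_quadP]
  refine h.trans (le_of_eq ?_)
  simp only [BB_succ, dd_pderiv]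

lemma BB_Dir_var {K : ℕ} (n : ℕ) (f : MvPolynomial (Fin K) ℝ) :
    ∫ x, (BB (e0 K) n (Dir x f) (Dir x f) - BB (e0 K) (n + 1) f f) ^ 2 ∂gaussPi (Fin K) ≤ 2 * VV 1 n f := by
  simp only [BB_Dir, BB_succ, VV_one]
  exact quad_var_int fun i j => BB (e0 K) n (pderiv i f) (pderiv j f)

lemma BB_Dir_cross {K : ℕ} (n : ℕ) (f : MvPolynomial (Fin K) ℝ) :
    ∫ y, ∫ x, (BB (e0 K) n (Dir x f) (Dir y f)) ^ 2 ∂gaussPi (Fin K) ∂gaussPi (Fin K) = VV 1 n f := by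
  have h : ∀ y, ∫ x, (BB (e0 K) n (Dir x f) (Dir y f)) ^ 2 ∂gaussPi (Fin K) =
      ∑ i, (∑ j, y j * BB (e0 K) n (pderiv i f) (pderiv j f)) ^ 2 := by
    intro y
    rw [← lin_sq_int]
    congr 1
    ext x
    rw [BB_Dir]
    simp only [Finset.mul_sum, mul_assoc]
  simp only [h]
  rw [integral_finsetSum]
  · simp only [lin_sq_int, VV_one]
  · intro i _
    have := integrable_poly ((∑ j, BB (e0 K) n (pderiv i f) (pderiv j f) • X j : MvPolynomial (Fin K) ℝ) ^ 2)
    simpa only [map_pow, map_sum, smul_eval, eval_X, mul_comm] using this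

/-- Polarized n-th derivative at zero. -/
noncomputable def tau {K : ℕ} : (n : ℕ) → (Fin n → Fin K → ℝ) → (MvPolynomial (Fin K) ℝ →ₗ[ℝ] ℝ)
  | 0, _ => e0 K
  | n + 1, y => (tau n (Fin.tail y)).comp (Dir (y 0))

lemma tau_succ {K n : ℕ} (y : Fin (n + 1) → Fin K → ℝ) (f : MvPolynomial (Fin K) ℝ) :
    tau (n + 1) y f = tau n (Fin.tail y) (Dir (y 0) f) := rfl

lemma tau_cons {K n : ℕ} (x : Fin K → ℝ) (y : Fin n → Fin K → ℝ) (f : MvPolynomial (Fin K) ℝ) :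
    tau (n + 1) (Fin.cons x y : Fin (n + 1) → Fin K → ℝ) f = tau n y (Dir x f) := by
  rw [tau_succ]; simp

lemma tau_Dir {K n : ℕ} (x : Fin K → ℝ) (y : Fin n → Fin K → ℝ) (f : MvPolynomial (Fin K) ℝ) :
    tau n y (Dir x f) = ∑ k, x k * tau n y (pderiv k f) := by
  rw [Dir_apply, map_sum]; simp

lemma tau_continuous {K n : ℕ} : ∀ (f : MvPolynomial (Fin K) ℝ),
    Continuous fun y : Fin n → Fin K → ℝ => tau n y f := by
  induction n with
  | zero => intro f; exact continuous_const
  | succ n ih =>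
    intro f
    simp only [tau_succ, tau_Dir]
    refine continuous_finsetSum _ fun k _ => Continuous.mul (by fun_prop) ?_
    refine (ih _).comp ?_
    unfold Fin.tail
    fun_prop

@[fun_prop]
lemma tau_continuous' {K n : ℕ} {α : Type*} [TopologicalSpace α] (f : MvPolynomial (Fin K) ℝ)
    {u : α → Fin n → Fin K → ℝ} (hu : Continuous u) : Continuous fun a => tau n (u a) f :=
  (tau_continuous f).comp hu

/-- product of copies of Gaussian measure -/
noncomputable def piG (n K : ℕ) : Measure (Fin n → Fin K → ℝ) := Measure.pi fun _ => gaussPi (Fin K)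

instance instPiGProb (n K : ℕ) : IsProbabilityMeasure (piG n K) := by
  unfold piG; infer_instance

/-- characteristic-type functional -/
noncomputable def phi {K : ℕ} (n : ℕ) (f : MvPolynomial (Fin K) ℝ) : ℝ :=
  ∫ y, Real.cos (tau n y f) ∂piG n K

lemma integrable_cont_bdd {α : Type*} [TopologicalSpace α] [MeasurableSpace α] [OpensMeasurableSpace α]
    {μ : Measure α} [IsFiniteMeasure μ] {g : α → ℝ} (hg : Continuous g) (b : ℝ) (hb : ∀ a, |g a| ≤ b) :
    Integrable g μ :=
  Integrable.of_bound hg.measurable.aestronglyMeasurable b (Eventually.of_forall hb)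

lemma phi_le_one {K n : ℕ} (f : MvPolynomial (Fin K) ℝ) : phi n f ≤ 1 := by
  unfold phi
  have : ∫ y, Real.cos (tau n y f) ∂piG n K ≤ ∫ y, (1 : ℝ) ∂piG n K := by
    apply integral_mono (integrable_cont_bdd (by fun_prop) 1 fun a => Real.abs_cos_le_one _) (integrable_const _)
    intro y; exact Real.cos_le_one _
  simpa using this

lemma piG_succ_integral {n K : ℕ} {E : Type*} [NormedAddCommGroup E] [NormedSpace ℝ E] (g : (Fin (n + 1) → Fin K → ℝ) → E) :
    ∫ y, g y ∂piG (n + 1) K = ∫ z, g (Fin.cons z.1 z.2) ∂((gaussPi (Fin K)).prod (piG n K)) := by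
  have h := (measurePreserving_piFinSuccAbove (fun _ : Fin (n + 1) => gaussPi (Fin K)) 0).symm
  unfold piG
  have h2 := h.integral_comp' (g := g)
  rw [← h2]
  congr 1
  ext z
  congr 1
  ext i
  simp [MeasurableEquiv.piFinSuccAbove, Fin.insertNthEquiv]

lemma cons_continuous {n K : ℕ} :
    Continuous fun z : (Fin K → ℝ) × (Fin n → Fin K → ℝ) => (Fin.cons z.1 z.2 : Fin (n + 1) → Fin K → ℝ) := by
  refine continuous_pi fun i => ?_
  refine Fin.cases ?_ (fun j => ?_) i
  · simp only [Fin.cons_zero]; fun_prop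
  · simp only [Fin.cons_succ]; fun_prop

lemma phi_succ {K n : ℕ} (f : MvPolynomial (Fin K) ℝ) :
    phi (n + 1) f = ∫ y, Real.exp (-(∑ k, tau n y (pderiv k f) ^ 2) / 2) ∂piG n K := by
  unfold phi
  rw [piG_succ_integral]
  simp only [tau_cons]
  rw [integral_prod_symm]
  · congr 1
    ext y
    rw [← gauss_cos]
    simp only [tau_Dir, mul_comm]
  · refine integrable_cont_bdd ?_ 1 fun a => Real.abs_cos_le_one _
    simp only [tau_Dir]
    fun_prop

lemma exp_neg_sq_le {ι : Type*} [Fintype ι] (w : ι → ℝ) (c : ℝ) (hc : 0 < c) :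
    |Real.exp (-(∑ j, w j ^ 2) / c)| ≤ 1 := by
  rw [abs_of_pos (Real.exp_pos _), Real.exp_le_one_iff, neg_div]
  have : 0 ≤ (∑ j, w j ^ 2) / c := by positivity
  linarith

lemma half_le {K : ℕ} (v : Fin K → ℝ) (e : ℝ) (he : 0 < e) (hv : ∑ k, v k ^ 2 ≤ e) :
    (1 / 2 : ℝ) ≤ ∫ x, Real.exp (-(∑ k, x k * v k) ^ 2 / (2 * e)) ∂gaussPi (Fin K) := by
  have hi : Integrable (fun x : Fin K → ℝ => (∑ k, x k * v k) ^ 2) (gaussPi (Fin K)) := by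
    have := integrable_poly ((∑ j, v j • X j : MvPolynomial (Fin K) ℝ) ^ 2)
    simpa only [map_pow, map_sum, smul_eval, eval_X, mul_comm] using this
  calc (1 / 2 : ℝ) ≤ 1 - (∑ k, v k ^ 2) / (2 * e) := by
        have : (∑ k, v k ^ 2) / (2 * e) ≤ 1 / 2 := by
          rw [div_le_div_iff₀ (by positivity) (by norm_num)]; linarith
        linarith
    _ = ∫ x, (1 - (∑ k, x k * v k) ^ 2 / (2 * e)) ∂gaussPi (Fin K) := by
        rw [integral_sub (integrable_const _) (hi.div_const _), integral_div, lin_sq_int]; simp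
    _ ≤ _ := by
        apply integral_mono ((integrable_const _).sub (hi.div_const _))
        · refine integrable_cont_bdd (by fun_prop) 1 fun x => ?_
          simpa using exp_neg_sq_le (fun _ : Unit => ∑ k, x k * v k) (2 * e) (by positivity)
        · intro x
          have := Real.add_one_le_exp (-(∑ k, x k * v k) ^ 2 / (2 * e))
          simp only [neg_div, Pi.sub_apply] at *
          linarith

/-- abstract averaging inequality -/
lemma avg_abstract {α β : Type*} [MeasurableSpace α] [MeasurableSpace β] (μ : Measure α) (ν : Measure β)
    [IsProbabilityMeasure μ] [IsProbabilityMeasure ν] (ex : α → β → ℝ)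
    (hexm : Measurable fun z : α × β => ex z.1 z.2) (hex0 : ∀ X y, 0 ≤ ex X y) (hex1 : ∀ X y, ex X y ≤ 1)
    (Bad : α → ℝ) (hBm : Measurable Bad) (hB0 : ∀ X, 0 ≤ Bad X) (hBi : Integrable Bad μ)
    (d : ℝ) (hd : 0 < d) (hBE : ∫ X, Bad X ∂μ ≤ d) (E : β → ℝ) (hEi : Integrable E ν) (hE1 : ∀ y, E y ≤ 1)
    (c : ℝ) (hc : 0 ≤ c) (hcase : ∀ y, E y ≤ c ∨ 2 * d ≤ ∫ X, ex X y ∂μ) (b : ℝ) (hb : 0 ≤ b)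
    (hgood : ∀ X, Bad X < 1 → ∫ y, ex X y ∂ν ≤ b) : ∫ y, E y ∂ν ≤ c + d⁻¹ * b := by
  classical
  obtain ⟨G, hG⟩ : ∃ G : α → β → ℝ, G = fun X y => if Bad X < 1 then ex X y else 0 := ⟨_, rfl⟩
  have hms : MeasurableSet {X | Bad X < 1} := measurableSet_lt hBm measurable_const
  have hGm : Measurable fun z : α × β => G z.1 z.2 := by
    rw [hG]
    exact Measurable.ite (measurable_fst hms) hexm measurable_const
  have hG0 : ∀ X y, 0 ≤ G X y := by
    intro X y; simp only [hG]; split_ifs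
    · exact hex0 X y
    · exact le_rfl
  have hG1 : ∀ X y, ‖G X y‖ ≤ 1 := by
    intro X y; rw [Real.norm_of_nonneg (hG0 X y)]; simp only [hG]; split_ifs
    · exact hex1 X y
    · simp
  have hGi : Integrable (fun z : α × β => G z.1 z.2) (μ.prod ν) :=
    Integrable.of_bound hGm.aestronglyMeasurable 1 (Eventually.of_forall fun z => hG1 z.1 z.2)
  have hGX : ∀ y, Integrable (fun X => G X y) μ := fun y =>
    Integrable.of_bound (hGm.comp measurable_prodMk_right).aestronglyMeasurable 1
      (Eventually.of_forall fun X => hG1 X y)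
  have hpt : ∀ y, E y ≤ c + d⁻¹ * ∫ X, G X y ∂μ := by
    intro y
    have h0 : 0 ≤ ∫ X, G X y ∂μ := integral_nonneg fun X => hG0 X y
    rcases hcase y with h | h
    · have : 0 ≤ d⁻¹ * ∫ X, G X y ∂μ := by positivity
      linarith
    · have hexX : Integrable (fun X => ex X y) μ :=
        Integrable.of_bound (hexm.comp measurable_prodMk_right).aestronglyMeasurable 1
          (Eventually.of_forall fun X => by
            rw [Real.norm_of_nonneg (hex0 _ _)]; exact hex1 _ _)
      have h1 : ∫ X, (ex X y - Bad X) ∂μ ≤ ∫ X, G X y ∂μ := by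
        refine integral_mono (hexX.sub hBi) (hGX y) fun X => ?_
        simp only [hG]
        split_ifs with h
        · have := hB0 X; linarith
        · have := hex1 X y
          push Not at h; linarith
      rw [integral_sub hexX hBi] at h1
      have h5 : (1 : ℝ) ≤ d⁻¹ * ∫ X, G X y ∂μ := by
        calc (1 : ℝ) = d⁻¹ * d := by rw [inv_mul_cancel₀ hd.ne']
          _ ≤ _ := by gcongr; linarith
      have := hE1 y
      linarith
  have hintg : Integrable (fun y => ∫ X, G X y ∂μ) ν := hGi.integral_prod_right
  calc ∫ y, E y ∂ν ≤ ∫ y, (c + d⁻¹ * ∫ X, G X y ∂μ) ∂ν :=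
        integral_mono hEi ((integrable_const _).add (hintg.const_mul _)) hpt
    _ = c + d⁻¹ * ∫ y, ∫ X, G X y ∂μ ∂ν := by
        rw [integral_add (integrable_const _) (hintg.const_mul _), integral_const_mul]; simp
    _ ≤ _ := by
        gcongr
        rw [← integral_integral_swap (f := G) hGi]
        calc ∫ X, ∫ y, G X y ∂ν ∂μ ≤ ∫ X, b ∂μ := by
              refine integral_mono hGi.integral_prod_left (integrable_const _) fun X => ?_
              simp only [hG]
              by_cases h : Bad X < 1
              · simp only [h, if_true]; exact hgood X h
              · simpa [h] using hb
          _ = b := by simp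

/-- core averaging inequality -/
lemma step_abstract {K n q : ℕ} (f : MvPolynomial (Fin K) ℝ) (e : ℝ) (he : 0 < e) (b : ℝ) (hb : 0 ≤ b)
    (Bad : (Fin q → Fin K → ℝ) → ℝ) (hBc : Continuous Bad) (hB0 : ∀ X, 0 ≤ Bad X)
    (hBi : Integrable Bad (piG q K)) (hBE : ∫ X, Bad X ∂piG q K ≤ (1 / 2) ^ (q + 1))
    (hgood : ∀ X, Bad X < 1 →
      ∫ y, Real.exp (-(∑ j, tau n y (Dir (X j) f) ^ 2) / (2 * e)) ∂piG n K ≤ b) :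
    phi (n + 1) f ≤ Real.exp (-e / 2) + 2 ^ (q + 1) * b := by
  have he2 : (0 : ℝ) < 2 * e := by positivity
  rw [phi_succ]
  have := avg_abstract (piG q K) (piG n K) (fun X y => Real.exp (-(∑ j, tau n y (Dir (X j) f) ^ 2) / (2 * e)))
    (by
      apply Continuous.measurable
      simp only [tau_Dir]; fun_prop)
    (fun X y => (Real.exp_pos _).le) (fun X y => (abs_le.1 (exp_neg_sq_le _ _ he2)).2)
    Bad hBc.measurable hB0 hBi ((1 / 2) ^ (q + 1)) (by positivity) hBE
    (fun y => Real.exp (-(∑ k, tau n y (pderiv k f) ^ 2) / 2))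
    (integrable_cont_bdd (by fun_prop) 1 fun y => exp_neg_sq_le _ _ (by norm_num))
    (fun y => (abs_le.1 (exp_neg_sq_le _ _ (by norm_num))).2) (Real.exp (-e / 2)) (Real.exp_pos _).le ?_ b hb hgood
  · simpa using this
  intro y
  by_cases hZ : ∑ k, tau n y (pderiv k f) ^ 2 ≤ e
  · right
    have e1 : ∀ X : Fin q → Fin K → ℝ, Real.exp (-(∑ j, tau n y (Dir (X j) f) ^ 2) / (2 * e)) =
        ∏ j, Real.exp (-(∑ k, X j k * tau n y (pderiv k f)) ^ 2 / (2 * e)) := by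
      intro X
      rw [← Real.exp_sum]
      simp only [tau_Dir]
      rw [← Finset.sum_div, Finset.sum_neg_distrib]
    simp only [e1]
    unfold piG
    rw [integral_fintype_prod_eq_pow (ι := Fin q) (fun x : Fin K → ℝ => Real.exp (-(∑ k, x k * tau n y (pderiv k f)) ^ 2 / (2 * e)))]
    simp only [Fintype.card_fin]
    have h2 : 2 * (1 / 2 : ℝ) ^ (q + 1) = (1 / 2) ^ q := by rw [pow_succ]; ring
    rw [h2]
    exact pow_le_pow_left₀ (by norm_num) (half_le _ e he hZ) q
  · left
    push Not at hZ
    apply Real.exp_le_exp.2; linarith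

lemma good_eq {K n q : ℕ} (F : Fin q → MvPolynomial (Fin K) ℝ) (e : ℝ) (he : 0 < e) :
    ∫ y, Real.exp (-(∑ j, tau n y (F j) ^ 2) / (2 * e)) ∂piG n K =
      ∫ g, phi n ((Real.sqrt e)⁻¹ • ∑ j, g j • F j) ∂gaussPi (Fin q) := by
  unfold phi
  have e1 : ∀ (g : Fin q → ℝ) (y : Fin n → Fin K → ℝ), tau n y ((Real.sqrt e)⁻¹ • ∑ j, g j • F j) =
      ∑ j, ((Real.sqrt e)⁻¹ * tau n y (F j)) * g j := by
    intro g y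
    simp only [map_smul, map_sum, smul_eq_mul, Finset.mul_sum]
    exact Finset.sum_congr rfl fun j _ => by ring
  simp only [e1]
  rw [integral_integral_swap]
  · congr 1
    ext y
    rw [gauss_cos]
    congr 1
    have : (Real.sqrt e) ^ 2 = e := Real.sq_sqrt he.le
    simp only [mul_pow, inv_pow, this, ← Finset.mul_sum]
    field_simp
  · refine integrable_cont_bdd ?_ 1 fun a => Real.abs_cos_le_one _
    fun_prop

lemma phi_smul_cont {K n q : ℕ} (F : Fin q → MvPolynomial (Fin K) ℝ) (c : ℝ) :
    Integrable (fun g : Fin q → ℝ => phi n (c • ∑ j, g j • F j)) (gaussPi (Fin q)) := by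
  have e1 : ∀ (g : Fin q → ℝ) (y : Fin n → Fin K → ℝ), tau n y (c • ∑ j, g j • F j) =
      ∑ j, (c * tau n y (F j)) * g j := by
    intro g y
    simp only [map_smul, map_sum, smul_eq_mul, Finset.mul_sum]
    exact Finset.sum_congr rfl fun j _ => by ring
  unfold phi
  simp only [e1]
  have : Integrable (fun z : (Fin q → ℝ) × (Fin n → Fin K → ℝ) => Real.cos (∑ j, (c * tau n z.2 (F j)) * z.1 j))
      ((gaussPi (Fin q)).prod (piG n K)) := by
    refine integrable_cont_bdd ?_ 1 fun a => Real.abs_cos_le_one _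
    fun_prop
  exact this.integral_prod_left

lemma gauss_Icc (ρ : ℝ) (hρ : 0 ≤ ρ) : (gaussianReal 0 1) (Set.Icc (-ρ) ρ) ≤ ENNReal.ofReal ρ := by
  rw [gaussianReal_apply_eq_integral _ one_ne_zero]
  apply ENNReal.ofReal_le_ofReal
  have hb : ∀ x, gaussianPDFReal 0 1 x ≤ 1 / 2 := by
    intro x
    simp only [gaussianPDFReal, NNReal.coe_one, mul_one, sub_zero]
    have h1 : (Real.sqrt (2 * Real.pi))⁻¹ ≤ 1 / 2 := by
      rw [one_div]
      apply inv_anti₀ (by norm_num)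
      apply Real.le_sqrt_of_sq_le
      have := Real.pi_gt_three
      linarith
    have h2 : Real.exp (-x ^ 2 / 2) ≤ 1 := by
      apply Real.exp_le_one_iff.2
      have := sq_nonneg x
      linarith
    have h3 := Real.exp_pos (-x ^ 2 / 2)
    nlinarith
  have := setIntegral_mono (μ := volume) (s := Set.Icc (-ρ) ρ) (f := gaussianPDFReal 0 1) (g := fun _ => 1 / 2)
    (integrable_gaussianPDFReal 0 1).integrableOn (by simp) hb
  refine this.trans ?_
  simp [Measure.real]
  rw [ENNReal.toReal_ofReal (by linarith)]; linarith

lemma ball_split {q : ℕ} (h : (Fin q → ℝ) → ℝ) (hi : Integrable h (gaussPi (Fin q))) (h1 : ∀ g, h g ≤ 1)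
    (ρ B : ℝ) (hρ : 0 ≤ ρ) (hB : 0 ≤ B) (hh : ∀ g, ρ ^ 2 < ∑ j, g j ^ 2 → h g ≤ B) :
    ∫ g, h g ∂gaussPi (Fin q) ≤ ρ ^ q + B := by
  have hms : MeasurableSet (Set.univ.pi fun _ : Fin q => Set.Icc (-ρ) ρ) :=
    MeasurableSet.univ_pi fun _ => measurableSet_Icc
  have hI : Integrable (fun g => (Set.univ.pi fun _ : Fin q => Set.Icc (-ρ) ρ).indicator (fun _ => (1 : ℝ)) g) (gaussPi (Fin q)) :=
    (integrable_const 1).indicator hms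
  calc ∫ g, h g ∂gaussPi (Fin q)
      ≤ ∫ g, ((Set.univ.pi fun _ : Fin q => Set.Icc (-ρ) ρ).indicator (fun _ => (1 : ℝ)) g + B) ∂gaussPi (Fin q) := by
        refine integral_mono hi (hI.add (integrable_const _)) fun g => ?_
        by_cases hg : ρ ^ 2 < ∑ j, g j ^ 2
        · have := Set.indicator_nonneg (s := Set.univ.pi fun _ : Fin q => Set.Icc (-ρ) ρ) (f := fun _ => (1 : ℝ)) (fun _ _ => zero_le_one) g
          have := hh g hg
          simp only
          linarith
        · push Not at hg
          have : g ∈ Set.univ.pi fun _ : Fin q => Set.Icc (-ρ) ρ := by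
            intro j _
            have h2 : g j ^ 2 ≤ ρ ^ 2 := (Finset.single_le_sum (f := fun j => g j ^ 2) (fun _ _ => sq_nonneg _) (Finset.mem_univ j)).trans hg
            exact abs_le.1 (abs_le_of_sq_le_sq h2 hρ)
          simp only [Set.indicator_of_mem this]
          have := h1 g
          linarith
    _ = (gaussPi (Fin q)).real (Set.univ.pi fun _ : Fin q => Set.Icc (-ρ) ρ) + B := by
        rw [integral_add hI (integrable_const _), integral_indicator_const _ hms]; simp
    _ ≤ _ := by
        gcongr
        unfold Measure.real gaussPi
        rw [Measure.pi_pi]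
        rw [ENNReal.toReal_prod]
        simp only [Finset.prod_const, Finset.card_univ, Fintype.card_fin]
        gcongr
        exact ENNReal.toReal_le_of_le_ofReal hρ (gauss_Icc ρ hρ)

lemma BB_gram {K n q : ℕ} (F : Fin q → MvPolynomial (Fin K) ℝ) (S : ℝ) (hS : 0 ≤ S) (g : Fin q → ℝ)
    (hG : ∑ i, ∑ j, (BB (e0 K) n (F i) (F j) - if i = j then S else 0) ^ 2 ≤ (S / 2) ^ 2) :
    S * (∑ j, g j ^ 2) / 2 ≤ BB (e0 K) n (∑ j, g j • F j) (∑ j, g j • F j) := by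
  rw [BB_lin2]
  have e1 : ∑ i, ∑ j, g i * g j * BB (e0 K) n (F i) (F j) =
      S * (∑ j, g j ^ 2) + ∑ i, ∑ j, g i * g j * (BB (e0 K) n (F i) (F j) - if i = j then S else 0) := by
    simp only [mul_sub, Finset.sum_sub_distrib, mul_ite, mul_zero, Finset.sum_ite_eq, Finset.mem_univ, if_true, Finset.mul_sum]
    have : ∑ i, g i * g i * S = ∑ i, S * g i ^ 2 := Finset.sum_congr rfl fun i _ => by ring
    rw [this]; ring
  have cs := Finset.sum_mul_sq_le_sq_mul_sq (Finset.univ : Finset (Fin q × Fin q)) (fun p => g p.1 * g p.2)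
    (fun p => BB (e0 K) n (F p.1) (F p.2) - if p.1 = p.2 then S else 0)
  rw [Fintype.sum_prod_type, Fintype.sum_prod_type, Fintype.sum_prod_type] at cs
  simp only at cs
  have e2 : ∑ i, ∑ j, (g i * g j) ^ 2 = (∑ j, g j ^ 2) ^ 2 := by
    rw [sq (∑ j, g j ^ 2), Finset.sum_mul_sum]
    simp only [mul_pow]
  rw [e2] at cs
  have hg : 0 ≤ ∑ j, g j ^ 2 := Finset.sum_nonneg fun _ _ => sq_nonneg _
  have h3 : |∑ i, ∑ j, g i * g j * (BB (e0 K) n (F i) (F j) - if i = j then S else 0)| ≤ (∑ j, g j ^ 2) * (S / 2) := by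
    apply abs_le_of_sq_le_sq _ (by positivity)
    rw [mul_pow]
    exact cs.trans (by gcongr)
  rw [e1]
  have := (abs_le.1 h3).1
  nlinarith

lemma VV_lin_le {K r s q : ℕ} (F : Fin q → MvPolynomial (Fin K) ℝ) (T : ℝ) (g : Fin q → ℝ)
    (hF : ∀ j, VV r s (F j) ≤ T) :
    VV r s (∑ j, g j • F j) ≤ 8 ^ q * (T * (∑ j, g j ^ 2) ^ 2) := by
  rcases q with _ | q
  · simp [VV, BB]
  have hT : 0 ≤ T := (VV_nonneg r s (F 0)).trans (hF 0)
  refine (VV_sum_le r s Finset.univ _).trans ?_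
  rw [Finset.card_univ, Fintype.card_fin]
  gcongr
  calc ∑ j, VV r s (g j • F j) ≤ ∑ j, g j ^ 2 * (∑ i, g i ^ 2) * T := by
        refine Finset.sum_le_sum fun j _ => ?_
        rw [VV_smul]
        have h2 : g j ^ 2 ≤ ∑ i, g i ^ 2 := Finset.single_le_sum (f := fun j => g j ^ 2) (fun _ _ => sq_nonneg _) (Finset.mem_univ j)
        calc g j ^ 4 * VV r s (F j) = g j ^ 2 * g j ^ 2 * VV r s (F j) := by ring
          _ ≤ _ := by
            have := hF j
            have := VV_nonneg r s (F j)
            gcongr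
    _ = _ := by rw [← Finset.sum_mul, ← Finset.sum_mul]; ring

lemma cross_mp {q K : ℕ} {i j : Fin q} (hij : i ≠ j) :
    MeasurePreserving (fun X : Fin q → Fin K → ℝ => (X i, X j)) (piG q K) ((gaussPi (Fin K)).prod (gaussPi (Fin K))) := by
  refine ⟨by fun_prop, ?_⟩
  have h := iIndepFun_pi (μ := fun _ : Fin q => gaussPi (Fin K)) (X := fun _ => id) (fun _ => aemeasurable_id)
  have h2 := (indepFun_iff_map_prod_eq_prod_map_map (measurable_pi_apply i).aemeasurable (measurable_pi_apply j).aemeasurable).1 (h.indepFun hij)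
  have h3 : ∀ i : Fin q, Measure.map (fun X : Fin q → Fin K → ℝ => X i) (Measure.pi fun _ => gaussPi (Fin K)) = gaussPi (Fin K) :=
    fun i => (measurePreserving_eval (fun _ : Fin q => gaussPi (Fin K)) i).map_eq
  rw [h3, h3] at h2
  exact h2

lemma eval_mp {q K : ℕ} (i : Fin q) :
    MeasurePreserving (fun X : Fin q → Fin K → ℝ => X i) (piG q K) (gaussPi (Fin K)) :=
  measurePreserving_eval (fun _ : Fin q => gaussPi (Fin K)) i

lemma prod_cross_int {n K : ℕ} (f : MvPolynomial (Fin K) ℝ) :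
    Integrable (fun z : (Fin K → ℝ) × (Fin K → ℝ) => BB (e0 K) n (Dir z.1 f) (Dir z.2 f) ^ 2)
      ((gaussPi (Fin K)).prod (gaussPi (Fin K))) := by
  have : ∀ z : (Fin K → ℝ) × (Fin K → ℝ), BB (e0 K) n (Dir z.1 f) (Dir z.2 f) ^ 2 =
      ∑ p : Fin K × Fin K, ∑ p' : Fin K × Fin K, (eval z.1 (X p.1 * X p'.1 : MvPolynomial (Fin K) ℝ) * eval z.2 (X p.2 * X p'.2 : MvPolynomial (Fin K) ℝ)) *
        (BB (e0 K) n (pderiv p.1 f) (pderiv p.2 f) * BB (e0 K) n (pderiv p'.1 f) (pderiv p'.2 f)) := by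
    intro z
    rw [BB_Dir, ← Fintype.sum_prod_type' (f := fun i j => z.1 i * z.2 j * BB (e0 K) n (pderiv i f) (pderiv j f)), sq, Finset.sum_mul_sum]
    refine Finset.sum_congr rfl fun p _ => Finset.sum_congr rfl fun p' _ => ?_
    simp only [map_mul, eval_X]; ring
  simp only [this]
  refine integrable_finsetSum _ fun p _ => integrable_finsetSum _ fun p' _ => Integrable.mul_const ?_ _
  exact (integrable_poly _).mul_prod (integrable_poly _)

lemma diag_int {n K : ℕ} (f : MvPolynomial (Fin K) ℝ) (S : ℝ) :
    Integrable (fun x : (Fin K → ℝ) => (BB (e0 K) n (Dir x f) (Dir x f) - S) ^ 2) (gaussPi (Fin K)) := by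
  have := integrable_poly ((∑ i, ∑ j, (BB (e0 K) n (pderiv i f) (pderiv j f)) • (X i * X j) - C S : MvPolynomial (Fin K) ℝ) ^ 2)
  refine this.congr (Eventually.of_forall fun x => ?_)
  simp only [map_pow, map_sub, map_sum, smul_eval, map_mul, eval_X, eval_C, BB_Dir]
  congr 2
  exact Finset.sum_congr rfl fun i _ => Finset.sum_congr rfl fun j _ => by ring

lemma gram_term {q n K : ℕ} (f : MvPolynomial (Fin K) ℝ) (i j : Fin q) :
    Integrable (fun Y : Fin q → Fin K → ℝ => (BB (e0 K) n (Dir (Y i) f) (Dir (Y j) f) - if i = j then BB (e0 K) (n + 1) f f else 0) ^ 2) (piG q K) ∧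
    ∫ Y, (BB (e0 K) n (Dir (Y i) f) (Dir (Y j) f) - if i = j then BB (e0 K) (n + 1) f f else 0) ^ 2 ∂piG q K ≤ 2 * VV 1 n f := by
  by_cases hij : i = j
  · subst hij
    simp only [if_true]
    have hi := diag_int (n := n) f (BB (e0 K) (n + 1) f f)
    constructor
    · exact (eval_mp i).integrable_comp_of_integrable hi
    · refine le_trans (le_of_eq ?_) (BB_Dir_var n f)
      rw [← (eval_mp (K := K) i).map_eq, integral_map (eval_mp i).measurable.aemeasurable]
      rw [(eval_mp i).map_eq]
      exact hi.aestronglyMeasurable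
  · simp only [hij, if_false, sub_zero]
    have hi := prod_cross_int (n := n) f
    constructor
    · exact (cross_mp hij).integrable_comp_of_integrable hi
    · have h1 : ∫ Y, (BB (e0 K) n (Dir (Y i) f) (Dir (Y j) f)) ^ 2 ∂piG q K = VV 1 n f := by
        have h2 : ∫ Y, (BB (e0 K) n (Dir (Y i) f) (Dir (Y j) f)) ^ 2 ∂piG q K =
            ∫ z, BB (e0 K) n (Dir z.1 f) (Dir z.2 f) ^ 2 ∂((gaussPi (Fin K)).prod (gaussPi (Fin K))) := by
          rw [← (cross_mp (K := K) hij).map_eq, integral_map (cross_mp hij).measurable.aemeasurable]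
          rw [(cross_mp hij).map_eq]
          exact hi.aestronglyMeasurable
        rw [h2, integral_prod_symm _ hi]
        exact BB_Dir_cross n f
      rw [h1]
      have := VV_nonneg 1 n f
      linarith

lemma VV_term {q r s K : ℕ} (f : MvPolynomial (Fin K) ℝ) (i : Fin q) :
    Integrable (fun Y : Fin q → Fin K → ℝ => VV r s (Dir (Y i) f)) (piG q K) ∧
    ∫ Y, VV r s (Dir (Y i) f) ∂piG q K ≤ VV r (s + 1) f + 2 * VV (r + 1) s f := by
  have hi : Integrable (fun x => VV r s (Dir x f)) (gaussPi (Fin K)) := by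
    simp only [← eval_VVP]; exact integrable_poly _
  constructor
  · exact (eval_mp i).integrable_comp_of_integrable hi
  · refine le_trans (le_of_eq ?_) (VV_Dir_int r s f)
    rw [← (eval_mp (K := K) i).map_eq, integral_map (eval_mp i).measurable.aemeasurable]
    rw [(eval_mp i).map_eq]
    exact hi.aestronglyMeasurable

lemma pow_exp_le (t : ℝ) (ht : 0 ≤ t) (N : ℕ) : t ^ N * Real.exp (-t / 2) ≤ 2 ^ N * N.factorial := by
  have h := Real.pow_div_factorial_le_exp (t / 2) (by positivity) N
  have hf : (0 : ℝ) < N.factorial := by positivity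
  rw [div_le_iff₀ hf, div_pow, div_le_iff₀ (by positivity)] at h
  have h2 : Real.exp (-t / 2) * Real.exp (t / 2) = 1 := by rw [← Real.exp_add]; simp; ring
  have h3 := Real.exp_pos (-t / 2)
  calc t ^ N * Real.exp (-t / 2) ≤ (Real.exp (t / 2) * N.factorial * 2 ^ N) * Real.exp (-t / 2) := by gcongr
    _ = (Real.exp (-t / 2) * Real.exp (t / 2)) * (2 ^ N * N.factorial) := by ring
    _ = _ := by rw [h2, one_mul]

lemma good_bound {K n q N : ℕ} (δ CI : ℝ) (hδ : 0 < δ) (hC : 0 < CI)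
    (IH : ∀ h : MvPolynomial (Fin K) ℝ, (∀ r s, 1 ≤ r → 1 ≤ s → r + s = n → VV r s h ≤ δ * BB (e0 K) n h h ^ 2) →
      BB (e0 K) n h h ^ N * phi n h ≤ CI)
    (F : Fin q → MvPolynomial (Fin K) ℝ) (S e ρ : ℝ) (hS : 0 < S) (he : 0 < e) (hρ : 0 < ρ)
    (hG : ∑ i, ∑ j, (BB (e0 K) n (F i) (F j) - if i = j then S else 0) ^ 2 ≤ (S / 2) ^ 2)
    (hV : ∀ r s, 1 ≤ r → 1 ≤ s → r + s = n → ∀ j, VV r s (F j) ≤ δ / (4 * 8 ^ q) * S ^ 2) :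
    ∫ y, Real.exp (-(∑ j, tau n y (F j) ^ 2) / (2 * e)) ∂piG n K ≤ ρ ^ q + CI * (2 * e / (S * ρ ^ 2)) ^ N := by
  rw [good_eq F e he]
  refine ball_split _ (phi_smul_cont F _) (fun g => phi_le_one _) ρ _ hρ.le (by positivity) fun g hg => ?_
  set h : MvPolynomial (Fin K) ℝ := (Real.sqrt e)⁻¹ • ∑ j, g j • F j with hh
  have hs : (Real.sqrt e)⁻¹ ^ 2 = e⁻¹ := by rw [inv_pow, Real.sq_sqrt he.le]
  have hB := BB_gram F S hS.le g hG
  have hg0 : 0 < ∑ j, g j ^ 2 := lt_trans (by positivity) hg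
  have hBh : BB (e0 K) n h h = e⁻¹ * BB (e0 K) n (∑ j, g j • F j) (∑ j, g j • F j) := by
    rw [hh, BB_smul_left, BB_smul_right, ← mul_assoc, ← sq, hs]
  have hB1 : e⁻¹ * (S * (∑ j, g j ^ 2) / 2) ≤ BB (e0 K) n h h := by
    rw [hBh]; gcongr
  have key := IH h (by
    intro r s hr hs' hrs
    rw [hh, VV_smul, ← hh]
    have h1 := VV_lin_le F (δ / (4 * 8 ^ q) * S ^ 2) g (hV r s hr hs' hrs)
    have h4 : (Real.sqrt e)⁻¹ ^ 4 = e⁻¹ ^ 2 := by rw [← hs]; ring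
    rw [h4]
    calc e⁻¹ ^ 2 * VV r s (∑ j, g j • F j) ≤ e⁻¹ ^ 2 * (8 ^ q * ((δ / (4 * 8 ^ q) * S ^ 2) * (∑ j, g j ^ 2) ^ 2)) := by gcongr
      _ = δ * (e⁻¹ * (S * (∑ j, g j ^ 2) / 2)) ^ 2 := by field_simp; try norm_num
      _ ≤ _ := by gcongr)
  have hB2 : S * ρ ^ 2 / (2 * e) ≤ BB (e0 K) n h h := by
    refine le_trans ?_ hB1
    rw [show S * ρ ^ 2 / (2 * e) = e⁻¹ * (S * ρ ^ 2 / 2) by field_simp]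
    gcongr
  have hpos : 0 < S * ρ ^ 2 / (2 * e) := by positivity
  have hB3 := hpos.trans_le hB2
  calc phi n h ≤ CI / BB (e0 K) n h h ^ N := by
        rw [le_div_iff₀ (by positivity), mul_comm]; exact key
    _ ≤ CI / (S * ρ ^ 2 / (2 * e)) ^ N := by gcongr
    _ = CI * (2 * e / (S * ρ ^ 2)) ^ N := by rw [div_eq_mul_inv, ← inv_pow, inv_div]

lemma exists_w (S : ℝ) (hS : 0 < S) : ∃ w : ℝ, 0 < w ∧ w ^ 8 = S := by
  refine ⟨Real.sqrt (Real.sqrt (Real.sqrt S)), by positivity, ?_⟩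
  have h1 := Real.sq_sqrt hS.le
  have h2 := Real.sq_sqrt (Real.sqrt_nonneg S)
  have h3 := Real.sq_sqrt (Real.sqrt_nonneg (Real.sqrt S))
  calc Real.sqrt (Real.sqrt (Real.sqrt S)) ^ 8 = ((Real.sqrt (Real.sqrt (Real.sqrt S)) ^ 2) ^ 2) ^ 2 := by ring
    _ = S := by rw [h3, h2, h1]

lemma BB_Dir_cont {q n K : ℕ} (f : MvPolynomial (Fin K) ℝ) (i j : Fin q) :
    Continuous fun Y : Fin q → Fin K → ℝ => BB (e0 K) n (Dir (Y i) f) (Dir (Y j) f) := by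
  simp only [BB_Dir]; fun_prop

lemma VV_Dir_cont {q r s K : ℕ} (f : MvPolynomial (Fin K) ℝ) (i : Fin q) :
    Continuous fun Y : Fin q → Fin K → ℝ => VV r s (Dir (Y i) f) := by
  simp only [VV_Dir]; fun_prop

set_option maxHeartbeats 1000000 in
lemma tensor_step {n : ℕ} (hn : 1 ≤ n) (N : ℕ) (δI CI : ℝ) (hδ : 0 < δI) (hC : 0 < CI)
    (IH : ∀ (K : ℕ) (h : MvPolynomial (Fin K) ℝ), (∀ r s, 1 ≤ r → 1 ≤ s → r + s = n → VV r s h ≤ δI * BB (e0 K) n h h ^ 2) →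
      BB (e0 K) n h h ^ (4 * N) * phi n h ≤ CI) :
    ∃ δ > (0 : ℝ), ∃ C > (0 : ℝ), ∀ (K : ℕ) (f : MvPolynomial (Fin K) ℝ),
      (∀ r s, 1 ≤ r → 1 ≤ s → r + s = n + 1 → VV r s f ≤ δ * BB (e0 K) (n + 1) f f ^ 2) →
      BB (e0 K) (n + 1) f f ^ N * phi (n + 1) f ≤ C := by
  obtain ⟨q, hq⟩ : ∃ q, q = 8 * N := ⟨_, rfl⟩
  obtain ⟨T, hT⟩ : ∃ T : Finset (ℕ × ℕ), T = (Finset.HasAntidiagonal.antidiagonal n).filter (fun p => 1 ≤ p.1 ∧ 1 ≤ p.2) := ⟨_, rfl⟩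
  obtain ⟨d2, hd2⟩ : ∃ d2 : ℝ, d2 = δI / (4 * 8 ^ q) := ⟨_, rfl⟩
  have hd2p : 0 < d2 := by rw [hd2]; positivity
  obtain ⟨D, hD⟩ : ∃ D : ℝ, D = 8 * q ^ 2 + 3 * q * T.card / d2 := ⟨_, rfl⟩
  have hD0 : 0 ≤ D := by rw [hD]; positivity
  obtain ⟨δ, hδd⟩ : ∃ δ : ℝ, δ = (1 / 2) ^ (q + 1) / (D + 1) := ⟨_, rfl⟩
  have hδp : 0 < δ := by rw [hδd]; positivity
  refine ⟨δ, hδp, 1 + 2 ^ (2 * N) * (2 * N).factorial + 2 ^ (q + 1) * (1 + CI * 2 ^ (4 * N)), by positivity, ?_⟩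
  intro K f hf
  obtain ⟨S, hSdef⟩ : ∃ S, S = BB (e0 K) (n + 1) f f := ⟨_, rfl⟩
  have hS0 : 0 ≤ S := by rw [hSdef]; exact BB_self_nonneg _ _ _
  rw [← hSdef] at hf ⊢
  rcases hS0.eq_or_lt with hS | hS
  · rw [← hS]
    have h1 := phi_le_one (n := n + 1) f
    have h2 : (0 : ℝ) ^ N ≤ 1 := pow_le_one₀ le_rfl zero_le_one
    have h3 : (0 : ℝ) ≤ 0 ^ N := by positivity
    have h4 : (0 : ℝ) ^ N * phi (n + 1) f ≤ 1 := by nlinarith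
    have h5 : (0 : ℝ) ≤ 2 ^ (2 * N) * (2 * N).factorial + 2 ^ (q + 1) * (1 + CI * 2 ^ (4 * N)) := by positivity
    linarith
  obtain ⟨w, hw, hwS⟩ := exists_w S hS
  have hb0 : (0 : ℝ) ≤ w⁻¹ ^ q + CI * (2 * w ^ 4 / (S * w⁻¹ ^ 2)) ^ (4 * N) := by positivity
  have hstep := step_abstract (n := n) (q := q) f (w ^ 4) (by positivity)
    (w⁻¹ ^ q + CI * (2 * w ^ 4 / (S * w⁻¹ ^ 2)) ^ (4 * N)) hb0
    (fun Y => (4 / S ^ 2) * (∑ i, ∑ j, (BB (e0 K) n (Dir (Y i) f) (Dir (Y j) f) - if i = j then S else 0) ^ 2) +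
      (∑ j, ∑ p ∈ T, VV p.1 p.2 (Dir (Y j) f)) / (d2 * S ^ 2))
    (by
      have h1 := fun i j : Fin q => BB_Dir_cont (n := n) f i j
      have h2 := fun (p : ℕ × ℕ) (j : Fin q) => VV_Dir_cont (r := p.1) (s := p.2) f j
      refine Continuous.add (Continuous.mul continuous_const ?_) (Continuous.div_const ?_ _)
      · exact continuous_finsetSum _ fun i _ => continuous_finsetSum _ fun j _ => ((h1 i j).sub continuous_const).pow 2
      · exact continuous_finsetSum _ fun i _ => continuous_finsetSum _ fun p _ => h2 p i)
    (by
      intro Y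
      have h1 : 0 ≤ ∑ j, ∑ p ∈ T, VV p.1 p.2 (Dir (Y j) f) :=
        Finset.sum_nonneg fun _ _ => Finset.sum_nonneg fun _ _ => VV_nonneg _ _ _
      positivity)
    ?_ ?_ ?_
  · -- final arithmetic
    have h1 : S ^ N * Real.exp (-w ^ 4 / 2) ≤ 2 ^ (2 * N) * (2 * N).factorial := by
      have := pow_exp_le (w ^ 4) (by positivity) (2 * N)
      have e1 : (w ^ 4) ^ (2 * N) = S ^ N := by rw [← hwS, ← pow_mul, ← pow_mul]; congr 1; ring
      rwa [e1] at this
    have h2 : S ^ N * (w⁻¹ ^ q + CI * (2 * w ^ 4 / (S * w⁻¹ ^ 2)) ^ (4 * N)) = 1 + CI * 2 ^ (4 * N) := by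
      have e2 : 2 * w ^ 4 / (S * w⁻¹ ^ 2) = 2 * w⁻¹ ^ 2 := by rw [← hwS]; field_simp
      have e3 : S ^ N = w ^ (8 * N) := by rw [← hwS, pow_mul]
      have e4 : w ^ (8 * N) * w⁻¹ ^ (8 * N) = 1 := by rw [← mul_pow, mul_inv_cancel₀ hw.ne', one_pow]
      have e5 : (w⁻¹ ^ 2) ^ (4 * N) = w⁻¹ ^ (8 * N) := by rw [← pow_mul]; congr 1; ring
      rw [e2, mul_pow, e5, e3, hq]
      linear_combination (1 + CI * 2 ^ (4 * N)) * e4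
    calc S ^ N * phi (n + 1) f ≤ S ^ N * (Real.exp (-w ^ 4 / 2) + 2 ^ (q + 1) * (w⁻¹ ^ q + CI * (2 * w ^ 4 / (S * w⁻¹ ^ 2)) ^ (4 * N))) := by gcongr
      _ = S ^ N * Real.exp (-w ^ 4 / 2) + 2 ^ (q + 1) * (S ^ N * (w⁻¹ ^ q + CI * (2 * w ^ 4 / (S * w⁻¹ ^ 2)) ^ (4 * N))) := by ring
      _ ≤ _ := by rw [h2]; linarith
  · -- integrability
    rw [hSdef]
    refine Integrable.add (Integrable.const_mul ?_ _) (Integrable.div_const ?_ _)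
    · exact integrable_finsetSum _ fun i _ => integrable_finsetSum _ fun j _ => (gram_term f i j).1
    · exact integrable_finsetSum _ fun i _ => integrable_finsetSum _ fun p _ => (VV_term f i).1
  · -- expectation
    have hi1 : Integrable (fun Y : Fin q → Fin K → ℝ => ∑ i, ∑ j, (BB (e0 K) n (Dir (Y i) f) (Dir (Y j) f) - if i = j then S else 0) ^ 2) (piG q K) := by
      rw [hSdef]
      exact integrable_finsetSum _ fun i _ => integrable_finsetSum _ fun j _ => (gram_term f i j).1
    have hi2 : Integrable (fun Y : Fin q → Fin K → ℝ => ∑ j, ∑ p ∈ T, VV p.1 p.2 (Dir (Y j) f)) (piG q K) :=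
      integrable_finsetSum _ fun i _ => integrable_finsetSum _ fun p _ => (VV_term f i).1
    rw [integral_add (hi1.const_mul _) (hi2.div_const _), integral_const_mul, integral_div]
    have b1 : ∫ Y, (∑ i, ∑ j, (BB (e0 K) n (Dir (Y i) f) (Dir (Y j) f) - if i = j then S else 0) ^ 2) ∂piG q K ≤ q ^ 2 * (2 * (δ * S ^ 2)) := by
      have hv := hf 1 n le_rfl hn (by omega)
      rw [hSdef] at hv ⊢
      rw [integral_finsetSum _ fun i _ => integrable_finsetSum _ fun j _ => (gram_term f i j).1]
      calc _ ≤ ∑ i : Fin q, ∑ j : Fin q, 2 * (δ * BB (e0 K) (n + 1) f f ^ 2) := by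
            refine Finset.sum_le_sum fun i _ => ?_
            rw [integral_finsetSum _ fun j _ => (gram_term f i j).1]
            refine Finset.sum_le_sum fun j _ => (gram_term f i j).2.trans (by linarith)
        _ = _ := by simp; ring
    have b2 : ∫ Y, (∑ j, ∑ p ∈ T, VV p.1 p.2 (Dir (Y j) f)) ∂piG q K ≤ q * (T.card * (3 * (δ * S ^ 2))) := by
      rw [integral_finsetSum _ fun i _ => integrable_finsetSum _ fun p _ => (VV_term f i).1]
      calc _ ≤ ∑ i : Fin q, ∑ p ∈ T, 3 * (δ * S ^ 2) := by
            refine Finset.sum_le_sum fun i _ => ?_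
            rw [integral_finsetSum _ fun p _ => (VV_term f i).1]
            refine Finset.sum_le_sum fun p hp => (VV_term f i).2.trans ?_
            simp only [hT, Finset.mem_filter, Finset.HasAntidiagonal.mem_antidiagonal] at hp
            have a1 := hf p.1 (p.2 + 1) (by omega) (by omega) (by omega)
            have a2 := hf (p.1 + 1) p.2 (by omega) (by omega) (by omega)
            linarith
        _ = _ := by simp
    calc _ ≤ 4 / S ^ 2 * (q ^ 2 * (2 * (δ * S ^ 2))) + (q * (T.card * (3 * (δ * S ^ 2)))) / (d2 * S ^ 2) := by
          gcongr
      _ = δ * D := by rw [hD]; field_simp; ring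
      _ ≤ δ * (D + 1) := by gcongr; linarith
      _ = _ := by rw [hδd]; field_simp
  · -- good
    intro Y hY
    have hg0 : 0 ≤ ∑ i, ∑ j, (BB (e0 K) n (Dir (Y i) f) (Dir (Y j) f) - if i = j then S else 0) ^ 2 := by positivity
    have hv0 : 0 ≤ ∑ j, ∑ p ∈ T, VV p.1 p.2 (Dir (Y j) f) :=
        Finset.sum_nonneg fun _ _ => Finset.sum_nonneg fun _ _ => VV_nonneg _ _ _
    have hg1 : 0 ≤ (4 / S ^ 2) * ∑ i, ∑ j, (BB (e0 K) n (Dir (Y i) f) (Dir (Y j) f) - if i = j then S else 0) ^ 2 := by positivity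
    have hv1 : 0 ≤ (∑ j, ∑ p ∈ T, VV p.1 p.2 (Dir (Y j) f)) / (d2 * S ^ 2) := by positivity
    refine good_bound δI CI hδ hC (IH K) (fun j => Dir (Y j) f) S (w ^ 4) w⁻¹ hS (by positivity) (by positivity) ?_ ?_
    · have : (4 / S ^ 2) * (∑ i, ∑ j, (BB (e0 K) n (Dir (Y i) f) (Dir (Y j) f) - if i = j then S else 0) ^ 2) ≤ 1 := by linarith
      rw [div_mul_eq_mul_div, div_le_one (by positivity)] at this
      rw [div_pow]
      linarith
    · intro r s hr hs hrs j
      have h1 : (∑ j, ∑ p ∈ T, VV p.1 p.2 (Dir (Y j) f)) / (d2 * S ^ 2) ≤ 1 := by linarith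
      rw [div_le_one (by positivity)] at h1
      rw [← hd2]
      refine le_trans ?_ h1
      have hm : (r, s) ∈ T := by rw [hT]; simp; omega
      refine le_trans ?_ (Finset.single_le_sum (f := fun j => ∑ p ∈ T, VV p.1 p.2 (Dir (Y j) f)) (fun _ _ => Finset.sum_nonneg fun _ _ => VV_nonneg _ _ _) (Finset.mem_univ j))
      exact Finset.single_le_sum (f := fun p : ℕ × ℕ => VV p.1 p.2 (Dir (Y j) f)) (fun _ _ => VV_nonneg _ _ _) hm

/-- Polynomial decay of the top-order tensor functional. -/
theorem tensor_decay (n : ℕ) : ∀ N : ℕ, ∃ δ > (0 : ℝ), ∃ C > (0 : ℝ), ∀ (K : ℕ) (f : MvPolynomial (Fin K) ℝ),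
      (∀ r s, 1 ≤ r → 1 ≤ s → r + s = n + 1 → VV r s f ≤ δ * BB (e0 K) (n + 1) f f ^ 2) →
      BB (e0 K) (n + 1) f f ^ N * phi (n + 1) f ≤ C := by
  induction n with
  | zero =>
    intro N
    refine ⟨1, one_pos, 2 ^ N * N.factorial, by positivity, fun K f _ => ?_⟩
    have h := pow_exp_le (BB (e0 K) 1 f f) (BB_self_nonneg _ _ _) N
    rw [phi_succ]
    have : ∀ y : Fin 0 → Fin K → ℝ, ∑ k, tau 0 y (pderiv k f) ^ 2 = BB (e0 K) 1 f f := by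
      intro y
      rw [BB_succ]
      simp only [BB_zero, sq]
      rfl
    simp only [this]
    simpa using h
  | succ n ih =>
    intro N
    obtain ⟨δ, hδ, C, hC, h⟩ := ih (4 * N)
    exact tensor_step (by omega) N δ C hδ hC h

lemma gauss_rot1 (a b : ℝ) (h : a ^ 2 + b ^ 2 = 1) :
    Measure.map (fun p : ℝ × ℝ => a * p.1 + b * p.2) ((gaussianReal 0 1).prod (gaussianReal 0 1)) = gaussianReal 0 1 := by
  have h1 := gaussianReal_map_const_mul (μ := 0) (v := 1) a
  have h2 := gaussianReal_map_const_mul (μ := 0) (v := 1) b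
  have h3 := gaussianReal_conv_gaussianReal (m₁ := a * 0) (m₂ := b * 0) (v₁ := .mk (a ^ 2) (sq_nonneg _) * 1) (v₂ := .mk (b ^ 2) (sq_nonneg _) * 1)
  rw [← h1, ← h2, Measure.conv, Measure.map_prod_map _ _ (by fun_prop) (by fun_prop), Measure.map_map (by fun_prop) (by fun_prop)] at h3
  have e1 : gaussianReal (a * 0 + b * 0) (.mk (a ^ 2) (sq_nonneg _) * 1 + .mk (b ^ 2) (sq_nonneg _) * 1) = gaussianReal 0 1 := by
    congr 1
    · simp
    · ext; simpa using h
  rw [e1] at h3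
  exact h3

lemma gauss_rot {K : ℕ} (a b : ℝ) (h : a ^ 2 + b ^ 2 = 1) :
    MeasurePreserving (fun p : (Fin K → ℝ) × (Fin K → ℝ) => a • p.1 + b • p.2)
      ((gaussPi (Fin K)).prod (gaussPi (Fin K))) (gaussPi (Fin K)) := by
  refine ⟨by fun_prop, ?_⟩
  have h1 := (measurePreserving_arrowProdEquivProdArrow ℝ ℝ (Fin K) (fun _ => gaussianReal 0 1) (fun _ => gaussianReal 0 1)).map_eq
  unfold gaussPi
  rw [← h1, Measure.map_map (by fun_prop) (by fun_prop)]
  have h2 := Measure.pi_map_pi (ι := Fin K) (μ := fun _ => (gaussianReal 0 1).prod (gaussianReal 0 1))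
    (f := fun _ (p : ℝ × ℝ) => a * p.1 + b * p.2) (hμ := fun _ => by rw [gauss_rot1 a b h]; infer_instance) (fun _ => by fun_prop)
  rw [gauss_rot1 a b h] at h2
  exact h2

lemma cos_sq_avg {α β : Type*} [MeasurableSpace α] [MeasurableSpace β] (μ : Measure α) (ν : Measure β)
    [IsProbabilityMeasure μ] [IsProbabilityMeasure ν] (h : α → β → ℝ)
    (hm : Measurable fun z : α × β => h z.1 z.2) :
    (∫ u, ∫ v, Real.cos (h u v) ∂ν ∂μ) ^ 2 + (∫ u, ∫ v, Real.sin (h u v) ∂ν ∂μ) ^ 2 ≤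
      ∫ z, ∫ u, Real.cos (h u z.1 - h u z.2) ∂μ ∂(ν.prod ν) := by
  have hu : ∀ u, Measurable (h u) := fun u => hm.comp measurable_prodMk_left
  have hc : ∀ u, Integrable (fun v => Real.cos (h u v)) ν := fun u =>
    Integrable.of_bound (Real.measurable_cos.comp (hu u)).aestronglyMeasurable 1 (Eventually.of_forall fun _ => Real.abs_cos_le_one _)
  have hs : ∀ u, Integrable (fun v => Real.sin (h u v)) ν := fun u =>
    Integrable.of_bound (Real.measurable_sin.comp (hu u)).aestronglyMeasurable 1 (Eventually.of_forall fun _ => Real.abs_sin_le_one _)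
  have hc2 : Integrable (fun z : α × β => Real.cos (h z.1 z.2)) (μ.prod ν) :=
    Integrable.of_bound (Real.measurable_cos.comp hm).aestronglyMeasurable 1 (Eventually.of_forall fun _ => Real.abs_cos_le_one _)
  have hs2 : Integrable (fun z : α × β => Real.sin (h z.1 z.2)) (μ.prod ν) :=
    Integrable.of_bound (Real.measurable_sin.comp hm).aestronglyMeasurable 1 (Eventually.of_forall fun _ => Real.abs_sin_le_one _)
  have bc : ∀ u, |∫ v, Real.cos (h u v) ∂ν| ≤ 1 := fun u => by
    have := norm_integral_le_of_norm_le_const (μ := ν) (f := fun v => Real.cos (h u v)) (C := 1) (Eventually.of_forall fun _ => Real.abs_cos_le_one _)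
    simpa using this
  have bs : ∀ u, |∫ v, Real.sin (h u v) ∂ν| ≤ 1 := fun u => by
    have := norm_integral_le_of_norm_le_const (μ := ν) (f := fun v => Real.sin (h u v)) (C := 1) (Eventually.of_forall fun _ => Real.abs_sin_le_one _)
    simpa using this
  have sqi : ∀ k : α → ℝ, Integrable k μ → (∀ u, |k u| ≤ 1) → Integrable (fun u => k u ^ 2) μ ∧ (∫ u, k u ∂μ) ^ 2 ≤ ∫ u, k u ^ 2 ∂μ := by
    intro k hk hb
    have hi : Integrable (fun u => k u ^ 2) μ :=
      Integrable.of_bound (hk.aestronglyMeasurable.pow 2) 1 (Eventually.of_forall fun u => by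
        rw [Real.norm_eq_abs, abs_pow]; exact pow_le_one₀ (abs_nonneg _) (hb u))
    refine ⟨hi, ?_⟩
    exact (Even.convexOn_pow (n := 2) (by norm_num)).map_integral_le (by fun_prop) isClosed_univ (by simp) hk hi
  obtain ⟨ic, lc⟩ := sqi _ hc2.integral_prod_left bc
  obtain ⟨is, ls⟩ := sqi _ hs2.integral_prod_left bs
  have key : ∀ u, (∫ v, Real.cos (h u v) ∂ν) ^ 2 + (∫ v, Real.sin (h u v) ∂ν) ^ 2 =
      ∫ z, Real.cos (h u z.1 - h u z.2) ∂(ν.prod ν) := by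
    intro u
    simp only [Real.cos_sub]
    rw [integral_add ((hc u).mul_prod (hc u)) ((hs u).mul_prod (hs u)), integral_prod_mul (fun v => Real.cos (h u v)) (fun v => Real.cos (h u v)), integral_prod_mul (fun v => Real.sin (h u v)) (fun v => Real.sin (h u v))]
    ring
  calc _ ≤ ∫ u, (∫ v, Real.cos (h u v) ∂ν) ^ 2 ∂μ + ∫ u, (∫ v, Real.sin (h u v) ∂ν) ^ 2 ∂μ := add_le_add lc ls
    _ = ∫ u, ∫ z, Real.cos (h u z.1 - h u z.2) ∂(ν.prod ν) ∂μ := by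
        rw [← integral_add ic is]; simp only [key]
    _ = _ := by
        apply le_antisymm <;> apply le_of_eq
        · rw [integral_integral_swap]
          refine Integrable.of_bound (Measurable.aestronglyMeasurable ?_) 1 (Eventually.of_forall fun _ => Real.abs_cos_le_one _)
          have m1 : Measurable fun p : α × (β × β) => h p.1 p.2.1 := hm.comp (by fun_prop : Measurable fun p : α × (β × β) => (p.1, p.2.1))
          have m2 : Measurable fun p : α × (β × β) => h p.1 p.2.2 := hm.comp (by fun_prop : Measurable fun p : α × (β × β) => (p.1, p.2.2))
          exact Real.measurable_cos.comp (m1.sub m2)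
        · rw [integral_integral_swap]
          refine Integrable.of_bound (Measurable.aestronglyMeasurable ?_) 1 (Eventually.of_forall fun _ => Real.abs_cos_le_one _)
          have m1 : Measurable fun p : (β × β) × α => h p.2 p.1.1 := hm.comp (by fun_prop : Measurable fun p : (β × β) × α => (p.2, p.1.1))
          have m2 : Measurable fun p : (β × β) × α => h p.2 p.1.2 := hm.comp (by fun_prop : Measurable fun p : (β × β) × α => (p.2, p.1.2))
          exact Real.measurable_cos.comp (m1.sub m2)

/-- affine substitution -/
noncomputable def subst {K : ℕ} (s : ℝ) (v : Fin K → ℝ) : MvPolynomial (Fin K) ℝ →ₐ[ℝ] MvPolynomial (Fin K) ℝ :=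
  aeval fun i => C s * X i + C (v i)

lemma eval_subst {K : ℕ} (s : ℝ) (v u : Fin K → ℝ) (f : MvPolynomial (Fin K) ℝ) :
    eval u (subst s v f) = eval (s • u + v) f := by
  induction f using MvPolynomial.induction_on with
  | C a => simp [subst]
  | add p q hp hq => simp [hp, hq]
  | mul_X p i hp => rw [map_mul, map_mul, map_mul, hp]; simp [subst]

lemma pderiv_subst {K : ℕ} (s : ℝ) (v : Fin K → ℝ) (i : Fin K) (f : MvPolynomial (Fin K) ℝ) :
    pderiv i (subst s v f) = s • subst s v (pderiv i f) := by
  induction f using MvPolynomial.induction_on with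
  | C a => simp [subst]
  | add p q hp hq => simp [hp, hq]
  | mul_X p j hp =>
    rw [map_mul, pderiv_mul, hp, pderiv_mul, map_add, map_mul, map_mul]
    have : pderiv i (subst s v (X j)) = s • subst s v (pderiv i (X j)) := by
      by_cases hij : j = i
      · subst hij
        simp [subst, smul_eq_C_mul, pderiv_mul]
      · simp [subst, pderiv_X_of_ne hij, pderiv_mul]
    rw [this, smul_add]
    simp only [smul_mul_assoc, mul_smul_comm]

lemma Dir_subst {K : ℕ} (s : ℝ) (v x : Fin K → ℝ) (f : MvPolynomial (Fin K) ℝ) :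
    Dir x (subst s v f) = s • subst s v (Dir x f) := by
  simp only [Dir_apply, pderiv_subst, map_sum, map_smul, Finset.smul_sum]
  exact Finset.sum_congr rfl fun k _ => smul_comm _ _ _

lemma Dir_comm {K : ℕ} (x y : Fin K → ℝ) (f : MvPolynomial (Fin K) ℝ) :
    Dir x (Dir y f) = Dir y (Dir x f) := by
  simp only [Dir_apply, map_sum, Derivation.map_smul, Finset.smul_sum]
  rw [Finset.sum_comm]
  refine Finset.sum_congr rfl fun k _ => Finset.sum_congr rfl fun l _ => ?_
  rw [pderiv_comm', smul_comm]

lemma DegLT.Dir {K n : ℕ} {f : MvPolynomial (Fin K) ℝ} (hf : DegLT (n + 1) f) (x : Fin K → ℝ) : DegLT n (Dir x f) := by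
  rw [Dir_apply]
  exact DegLT.sum _ _ fun k _ => (hf k).smul _

lemma DegLT.sub' {K n : ℕ} {f g : MvPolynomial (Fin K) ℝ} (hf : DegLT n f) (hg : DegLT n g) : DegLT n (f - g) := by
  have := hf.add (hg.smul (-1))
  simpa [sub_eq_add_neg] using this

lemma affine_eval {K : ℕ} {f : MvPolynomial (Fin K) ℝ} (hf : DegLT 2 f) (v : Fin K → ℝ) :
    eval v f = e0 K f + ∑ k, v k * e0 K (pderiv k f) := by
  have h1 : DegLT 1 (f - ∑ k, e0 K (pderiv k f) • X k) := by
    intro i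
    show _ = _
    rw [map_sub, map_sum, (hf i).eq_C]
    simp [Derivation.map_smul, pderiv_X, Pi.single_apply, smul_eq_C_mul]
  have h2 := congrArg (eval v) h1.eq_C
  simp only [map_sub, map_sum, smul_eval, eval_X, eval_C] at h2
  rw [sub_eq_iff_eq_add] at h2
  rw [h2]
  have : ∑ k, e0 K (pderiv k f) • e0 K (X k) = 0 := by
    apply Finset.sum_eq_zero; intro k _; simp [e0_apply]
  simp only [map_smul, this, sub_zero]
  congr 1
  exact Finset.sum_congr rfl fun k _ => by ring

lemma subst_diff_deg {K n : ℕ} (s : ℝ) (v v' : Fin K → ℝ) : ∀ {f : MvPolynomial (Fin K) ℝ}, DegLT (n + 1) f →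
    DegLT n (subst s v f - subst s v' f) := by
  induction n with
  | zero =>
    intro f hf
    show _ = _
    rw [hf.eq_C]; simp [subst]
  | succ n ih =>
    intro f hf k
    rw [map_sub, pderiv_subst, pderiv_subst, ← smul_sub]
    exact (ih (hf k)).smul _

lemma tau_subst_diff {K n : ℕ} (s : ℝ) (v v' : Fin K → ℝ) : ∀ (y : Fin n → Fin K → ℝ) {f : MvPolynomial (Fin K) ℝ}, DegLT (n + 2) f →
    tau n y (subst s v f) - tau n y (subst s v' f) = s ^ n * tau n y (Dir (v - v') f) := by
  induction n with
  | zero =>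
    intro y f hf
    have h1 : ∀ v, tau 0 y (subst s v f) = eval v f := by
      intro v
      show e0 K _ = _
      rw [e0_apply, eval_subst]; simp
    rw [h1, h1, affine_eval hf, affine_eval hf, tau_Dir]
    show _ = _ * ∑ k, _ * e0 K _
    simp [sub_mul]
  | succ n ih =>
    intro y f hf
    rw [tau_succ, tau_succ, tau_succ, Dir_subst, Dir_subst, map_smul, map_smul, smul_eq_mul, smul_eq_mul, ← mul_sub, ih _ (hf.Dir _),
      Dir_comm, pow_succ]
    ring

/-- squared modulus of the characteristic function -/
noncomputable def aa {K : ℕ} (f : MvPolynomial (Fin K) ℝ) : ℝ :=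
  (∫ x, Real.cos (eval x f) ∂gaussPi (Fin K)) ^ 2 + (∫ x, Real.sin (eval x f) ∂gaussPi (Fin K)) ^ 2

lemma aa_nonneg {K : ℕ} (f : MvPolynomial (Fin K) ℝ) : 0 ≤ aa f := by unfold aa; positivity

lemma eval_cont {K : ℕ} (f : MvPolynomial (Fin K) ℝ) : Continuous fun x => eval x f := MvPolynomial.continuous_eval f

lemma aa_le {K : ℕ} (f : MvPolynomial (Fin K) ℝ) (s : ℝ) (hs : s ^ 2 + s ^ 2 = 1) :
    aa f ≤ ∫ z, ∫ u, Real.cos (eval u (subst s (s • z.1) f - subst s (s • z.2) f)) ∂gaussPi (Fin K) ∂((gaussPi (Fin K)).prod (gaussPi (Fin K))) := by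
  have hc := eval_cont f
  have h := cos_sq_avg (gaussPi (Fin K)) (gaussPi (Fin K)) (fun u v => eval (s • u + s • v) f)
    (Continuous.measurable (hc.comp (by fun_prop : Continuous fun z : (Fin K → ℝ) × (Fin K → ℝ) => s • z.1 + s • z.2)))
  simp only [map_sub, eval_subst]
  refine le_trans (le_of_eq ?_) h
  have key : ∀ k : ℝ → ℝ, Continuous k → (∀ t, |k t| ≤ 1) →
      ∫ x, k (eval x f) ∂gaussPi (Fin K) = ∫ u, ∫ v, k (eval (s • u + s • v) f) ∂gaussPi (Fin K) ∂gaussPi (Fin K) := by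
    intro k hk hb
    rw [← integral_prod (f := fun z : (Fin K → ℝ) × (Fin K → ℝ) => k (eval (s • z.1 + s • z.2) f))]
    · have := gauss_rot (K := K) s s hs
      rw [← this.map_eq, integral_map this.measurable.aemeasurable]
      · rw [this.map_eq]
      · exact (hk.comp hc).measurable.aestronglyMeasurable
    · exact integrable_cont_bdd (hk.comp (hc.comp (by fun_prop : Continuous fun z : (Fin K → ℝ) × (Fin K → ℝ) => s • z.1 + s • z.2))) 1 fun _ => hb _
  unfold aa
  rw [key Real.cos Real.continuous_cos Real.abs_cos_le_one, key Real.sin Real.continuous_sin Real.abs_sin_le_one]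

lemma jensen_pow {α : Type*} [MeasurableSpace α] (μ : Measure α) [IsProbabilityMeasure μ] (k : α → ℝ) (p : ℕ) (hp : Even p)
    (hm : AEStronglyMeasurable k μ) (hb : ∀ u, |k u| ≤ 1) :
    Integrable (fun u => k u ^ p) μ ∧ (∫ u, k u ∂μ) ^ p ≤ ∫ u, k u ^ p ∂μ := by
  have hi : Integrable (fun u => k u ^ p) μ :=
    Integrable.of_bound (hm.pow p) 1 (Eventually.of_forall fun u => by
      rw [Real.norm_eq_abs, abs_pow]; exact pow_le_one₀ (abs_nonneg _) (hb u))
  refine ⟨hi, ?_⟩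
  exact (Even.convexOn_pow hp).map_integral_le (by fun_prop) isClosed_univ (by simp) (Integrable.of_bound hm 1 (Eventually.of_forall hb)) hi

lemma abs_int_cos_le {α : Type*} [MeasurableSpace α] (μ : Measure α) [IsProbabilityMeasure μ] (k : α → ℝ) :
    |∫ u, Real.cos (k u) ∂μ| ≤ 1 := by
  have := norm_integral_le_of_norm_le_const (μ := μ) (f := fun v => Real.cos (k v)) (C := 1) (Eventually.of_forall fun _ => Real.abs_cos_le_one _)
  simpa using this

lemma gauss_sin {K : ℕ} (v : Fin K → ℝ) : ∫ x, Real.sin (∑ i, v i * x i) ∂gaussPi (Fin K) = 0 := by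
  have h := congrArg Complex.im (gauss_cexp v)
  rw [← RCLike.im_eq_complex_im, ← integral_im] at h
  · simp only [RCLike.im_eq_complex_im, Complex.exp_ofReal_mul_I_im] at h
    rw [h]
    have : (-((∑ i, v i ^ 2 : ℝ) : ℂ) / 2) = ((-(∑ i, v i ^ 2) / 2 : ℝ) : ℂ) := by push_cast; ring
    rw [this, Complex.exp_ofReal_im]
  · refine Integrable.of_bound (C := 1) ?_ ?_
    · apply Continuous.aestronglyMeasurable
      fun_prop
    · refine Eventually.of_forall fun x => ?_
      rw [Complex.norm_exp_ofReal_mul_I]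

lemma aa_affine {K : ℕ} {f : MvPolynomial (Fin K) ℝ} (hf : DegLT 2 f) : aa f = phi 1 (Real.sqrt 2 • f) := by
  have h1 : ∀ x, eval x f = e0 K f + ∑ k, e0 K (pderiv k f) * x k := by
    intro x; rw [affine_eval hf]; congr 1; exact Finset.sum_congr rfl fun k _ => by ring
  have ic : Integrable (fun x : Fin K → ℝ => Real.cos (∑ k, e0 K (pderiv k f) * x k)) (gaussPi (Fin K)) :=
    integrable_cont_bdd (by fun_prop) 1 fun _ => Real.abs_cos_le_one _
  have is : Integrable (fun x : Fin K → ℝ => Real.sin (∑ k, e0 K (pderiv k f) * x k)) (gaussPi (Fin K)) :=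
    integrable_cont_bdd (by fun_prop) 1 fun _ => Real.abs_sin_le_one _
  unfold aa
  simp only [h1, Real.cos_add, Real.sin_add]
  rw [integral_sub (ic.const_mul _) (is.const_mul _), integral_add (ic.const_mul _) (is.const_mul _)]
  simp only [integral_const_mul, gauss_sin, gauss_cos]
  rw [phi_succ]
  have h2 : ∀ y : Fin 0 → Fin K → ℝ, ∑ k, tau 0 y (pderiv k (Real.sqrt 2 • f)) ^ 2 = 2 * ∑ k, e0 K (pderiv k f) ^ 2 := by
    intro y
    show ∑ k, (e0 K _) ^ 2 = _
    simp only [Derivation.map_smul, map_smul, smul_eq_mul, mul_pow, Finset.mul_sum]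
    norm_num
  simp only [h2]
  simp only [integral_const, probReal_univ, smul_eq_mul, one_mul, mul_zero, sub_zero, add_zero, mul_pow, ← add_mul,
    Real.cos_sq_add_sin_sq, ← Real.exp_nat_mul]
  congr 1
  push_cast; ring

lemma phi_param_int {α : Type*} [TopologicalSpace α] [SecondCountableTopology α] [MeasurableSpace α] [BorelSpace α] (μ : Measure α) [IsProbabilityMeasure μ] {K n : ℕ}
    (F : α → MvPolynomial (Fin K) ℝ) (hF : Continuous fun z : α × (Fin n → Fin K → ℝ) => tau n z.2 (F z.1)) :
    Integrable (fun a => phi n (F a)) μ := by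
  have : Integrable (fun z : α × (Fin n → Fin K → ℝ) => Real.cos (tau n z.2 (F z.1))) (μ.prod (piG n K)) :=
    integrable_cont_bdd (Real.continuous_cos.comp hF) 1 fun _ => Real.abs_cos_le_one _
  exact this.integral_prod_left

lemma phi_Dir_avg {K n : ℕ} (f : MvPolynomial (Fin K) ℝ) :
    ∫ x, phi n (Dir x f) ∂gaussPi (Fin K) = phi (n + 1) f := by
  unfold phi
  rw [piG_succ_integral]
  simp only [tau_cons]
  rw [integral_prod]
  refine integrable_cont_bdd ?_ 1 fun a => Real.abs_cos_le_one _
  simp only [tau_Dir]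
  fun_prop

lemma weyl (n : ℕ) : ∃ c > (0 : ℝ), ∀ (K : ℕ) (f : MvPolynomial (Fin K) ℝ), DegLT (n + 2) f →
    aa f ^ (2 ^ n) ≤ phi (n + 1) (c • f) := by
  induction n with
  | zero =>
    refine ⟨Real.sqrt 2, by positivity, fun K f hf => ?_⟩
    rw [pow_zero, pow_one]
    exact (aa_affine hf).le
  | succ n ih =>
    obtain ⟨c, hc, ih⟩ := ih
    obtain ⟨s, hs0, hs⟩ : ∃ s : ℝ, 0 < s ∧ s ^ 2 + s ^ 2 = 1 :=
      ⟨Real.sqrt (1 / 2), by positivity, by rw [Real.sq_sqrt (by norm_num)]; norm_num⟩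
    refine ⟨c * s ^ (n + 1), by positivity, fun K f hf => ?_⟩
    have hfc := eval_cont f
    have hp : Even (2 ^ (n + 1)) := ⟨2 ^ n, by ring⟩
    have h1 := aa_le f s hs
    have hm : Integrable (fun z : (Fin K → ℝ) × (Fin K → ℝ) => ∫ u, Real.cos (eval u (subst s (s • z.1) f - subst s (s • z.2) f)) ∂gaussPi (Fin K))
        ((gaussPi (Fin K)).prod (gaussPi (Fin K))) := by
      have : Integrable (fun z : ((Fin K → ℝ) × (Fin K → ℝ)) × (Fin K → ℝ) => Real.cos (eval z.2 (subst s (s • z.1.1) f - subst s (s • z.1.2) f)))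
          (((gaussPi (Fin K)).prod (gaussPi (Fin K))).prod (gaussPi (Fin K))) := by
        refine integrable_cont_bdd ?_ 1 fun a => Real.abs_cos_le_one _
        simp only [map_sub, eval_subst]
        refine Real.continuous_cos.comp (Continuous.sub (hfc.comp ?_) (hfc.comp ?_)) <;> fun_prop
      exact this.integral_prod_left
    obtain ⟨hi, hj⟩ := jensen_pow _ _ (2 ^ (n + 1)) hp hm.aestronglyMeasurable (fun z => abs_int_cos_le _ _)
    have ht : ∀ (z : (Fin K → ℝ) × (Fin K → ℝ)) (y : Fin (n + 1) → Fin K → ℝ),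
        tau (n + 1) y (c • (subst s (s • z.1) f - subst s (s • z.2) f)) = tau (n + 1) y (Dir (s • z.1 + (-s) • z.2) ((c * s ^ (n + 1)) • f)) := by
      intro z y
      rw [map_smul, map_sub, tau_subst_diff _ _ _ _ hf, map_smul, map_smul, smul_eq_mul, smul_eq_mul, mul_assoc]
      congr 4
      rw [neg_smul, sub_eq_add_neg]
    have hphi : ∀ z : (Fin K → ℝ) × (Fin K → ℝ), phi (n + 1) (c • (subst s (s • z.1) f - subst s (s • z.2) f)) =
        phi (n + 1) (Dir (s • z.1 + (-s) • z.2) ((c * s ^ (n + 1)) • f)) := by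
      intro z; unfold phi; simp only [ht]
    have hintg : Integrable (fun x => phi (n + 1) (Dir x ((c * s ^ (n + 1)) • f))) (gaussPi (Fin K)) := by
      apply phi_param_int
      simp only [tau_Dir]; fun_prop
    have hmp := gauss_rot (K := K) s (-s) (by rw [neg_sq]; exact hs)
    calc aa f ^ (2 ^ (n + 1)) ≤ _ := pow_le_pow_left₀ (aa_nonneg f) h1 _
      _ ≤ _ := hj
      _ ≤ ∫ z, phi (n + 1) (c • (subst s (s • z.1) f - subst s (s • z.2) f)) ∂((gaussPi (Fin K)).prod (gaussPi (Fin K))) := by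
          refine integral_mono hi ?_ fun z => ?_
          · simp only [hphi]
            exact hmp.integrable_comp_of_integrable hintg
          · refine le_trans ?_ (ih K _ (subst_diff_deg s (s • z.1) (s • z.2) hf))
            simp only
            rw [pow_succ, mul_comm, pow_mul]
            refine pow_le_pow_left₀ (sq_nonneg _) ?_ _
            unfold aa
            have := sq_nonneg (∫ x, Real.sin (eval x (subst s (s • z.1) f - subst s (s • z.2) f)) ∂gaussPi (Fin K))
            linarith
      _ = ∫ x, phi (n + 1) (Dir x ((c * s ^ (n + 1)) • f)) ∂gaussPi (Fin K) := by
          simp only [hphi]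
          rw [← hmp.map_eq, integral_map hmp.measurable.aemeasurable]
          · rw [hmp.map_eq]
          · rw [hmp.map_eq]; exact hintg.aestronglyMeasurable
      _ = _ := phi_Dir_avg _

lemma eval_Dir {K : ℕ} (x y : Fin K → ℝ) (f : MvPolynomial (Fin K) ℝ) :
    eval x (Dir y f) = ∑ k, eval x (pderiv k f) * y k := by
  rw [Dir_apply, map_sum]; simp [smul_eval, mul_comm]

lemma gamma_laplace {K : ℕ} (P : MvPolynomial (Fin K) ℝ) (t : ℝ) :
    ∫ x, Real.exp (-(t ^ 2 * sqField P x) / 2) ∂gaussPi (Fin K) =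
      ∫ y, ∫ x, Real.cos (eval x (Dir y (t • P))) ∂gaussPi (Fin K) ∂gaussPi (Fin K) := by
  have hc := fun k => eval_cont (pderiv k (t • P))
  rw [integral_integral_swap]
  · congr 1
    ext x
    simp only [eval_Dir]
    rw [gauss_cos]
    congr 2
    simp [sqField, Derivation.map_smul, smul_eval, mul_pow, Finset.mul_sum]
  · refine integrable_cont_bdd ?_ 1 fun a => Real.abs_cos_le_one _
    simp only [eval_Dir]
    fun_prop

/-- Laplace transform of the square field bounded by the tensor functional. -/
lemma laplace_le (n : ℕ) : ∃ c > (0 : ℝ), ∀ (K : ℕ) (P : MvPolynomial (Fin K) ℝ) (t : ℝ), DegLT (n + 2) P →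
    (∫ x, Real.exp (-(t ^ 2 * sqField P x) / 2) ∂gaussPi (Fin K)) ^ (2 ^ n) ≤ phi (n + 1) ((c * t) • P) := by
  rcases n with _ | n
  · refine ⟨1, one_pos, fun K P t hP => ?_⟩
    rw [pow_zero, pow_one, gamma_laplace, ← phi_Dir_avg]
    apply le_of_eq
    congr 1
    ext y
    have h1 : DegLT 1 (Dir y (t • P)) := DegLT.Dir (hP.smul t) y
    unfold phi
    have h2 : ∀ z : Fin 0 → Fin K → ℝ, tau 0 z (Dir y ((1 * t) • P)) = e0 K (Dir y (t • P)) := by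
      intro z; rw [one_mul]; rfl
    simp only [h2]
    rw [h1.eq_C]; simp [e0_apply]
  · obtain ⟨c, hc, hw⟩ := weyl n
    refine ⟨c, hc, fun K P t hP => ?_⟩
    rw [gamma_laplace]
    have hcont := fun k => eval_cont (pderiv k (t • P))
    have hp : Even (2 ^ (n + 1)) := ⟨2 ^ n, by ring⟩
    have hm : Integrable (fun y => ∫ x, Real.cos (eval x (Dir y (t • P))) ∂gaussPi (Fin K)) (gaussPi (Fin K)) := by
      have : Integrable (fun z : (Fin K → ℝ) × (Fin K → ℝ) => Real.cos (eval z.2 (Dir z.1 (t • P)))) ((gaussPi (Fin K)).prod (gaussPi (Fin K))) := by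
        refine integrable_cont_bdd ?_ 1 fun a => Real.abs_cos_le_one _
        simp only [eval_Dir]
        fun_prop
      exact this.integral_prod_left
    obtain ⟨hi, hj⟩ := jensen_pow _ _ (2 ^ (n + 1)) hp hm.aestronglyMeasurable (fun z => abs_int_cos_le _ _)
    refine hj.trans ?_
    rw [← phi_Dir_avg]
    refine integral_mono hi ?_ fun y => ?_
    · apply phi_param_int
      simp only [tau_Dir]; fun_prop
    · have h3 := hw K (Dir y (t • P)) (DegLT.Dir (hP.smul t) y)
      rw [← map_smul, smul_smul] at h3
      refine le_trans ?_ h3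
      simp only
      rw [pow_succ, mul_comm, pow_mul]
      refine pow_le_pow_left₀ (sq_nonneg _) ?_ _
      unfold aa
      have := sq_nonneg (∫ x, Real.sin (eval x (Dir y (t • P))) ∂gaussPi (Fin K))
      linarith

/-- Small Lévy–Prokhorov distance to the Gaussian controls a bounded continuous test function. -/
lemma lp_test (h : ℝ → ℝ) (hc : Continuous h) (b : ℝ) (hb : ∀ x, |h x| ≤ b) (η : ℝ) (hη : 0 < η) :
    ∃ δ > (0 : ℝ), ∀ (μ : Measure ℝ), IsProbabilityMeasure μ →
      levyProkhorovDist μ (gaussianReal 0 1) ≤ δ →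
      |∫ x, h x ∂μ - ∫ x, h x ∂(gaussianReal 0 1)| < η := by
  let H : BoundedContinuousFunction ℝ ℝ := BoundedContinuousFunction.ofNormedAddCommGroup h hc b hb
  let ν : ProbabilityMeasure ℝ := ⟨gaussianReal 0 1, inferInstance⟩
  have c1 := (LevyProkhorov.continuous_toMeasure_probabilityMeasure (Ω := ℝ)).tendsto
    (LevyProkhorov.ofMeasure ν)
  have c2 := (ProbabilityMeasure.tendsto_iff_forall_integral_tendsto.1 c1) H
  rw [Metric.tendsto_nhds] at c2
  have c3 := c2 η hη
  rw [Metric.eventually_nhds_iff] at c3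
  obtain ⟨ε, hε, h3⟩ := c3
  refine ⟨ε / 2, by positivity, fun μ hμ hd => ?_⟩
  have h4 := @h3 (LevyProkhorov.ofMeasure ⟨μ, hμ⟩) (by
    rw [LevyProkhorov.dist_probabilityMeasure_def]
    exact lt_of_le_of_lt hd (by linarith))
  rw [Real.dist_eq] at h4
  exact h4

lemma lp_poly (h : ℝ → ℝ) (hc : Continuous h) (b : ℝ) (hb : ∀ x, |h x| ≤ b) (η : ℝ) (hη : 0 < η) :
    ∃ δ > (0 : ℝ), ∀ (K : ℕ) (Q : MvPolynomial (Fin K) ℝ),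
      levyProkhorovDist (Measure.map (fun x => eval x Q) (gaussPi (Fin K))) (gaussianReal 0 1) ≤ δ →
      |∫ x, h (eval x Q) ∂gaussPi (Fin K) - ∫ x, h x ∂(gaussianReal 0 1)| < η := by
  obtain ⟨δ, hδ, H⟩ := lp_test h hc b hb η hη
  refine ⟨δ, hδ, fun K Q hd => ?_⟩
  have hm : AEMeasurable (fun x => eval x Q) (gaussPi (Fin K)) := (eval_cont Q).measurable.aemeasurable
  have := H _ (Measure.isProbabilityMeasure_map hm) hd
  rwa [integral_map hm hc.aestronglyMeasurable] at this

lemma min_ge (a y M : ℝ) (ha : 0 ≤ a) (ha1 : a ≤ 1) (hy : 0 ≤ y) (hM : 0 < M) :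
    a * y - a ^ 2 / (4 * M) * (y * y) ≤ min y M := by
  refine le_min ?_ ?_
  · have : 0 ≤ a ^ 2 / (4 * M) * (y * y) := by positivity
    nlinarith
  · have : M - (a * y - a ^ 2 / (4 * M) * (y * y)) = (a * y - 2 * M) ^ 2 / (4 * M) := by
      field_simp; ring
    have h2 : 0 ≤ (a * y - 2 * M) ^ 2 / (4 * M) := by positivity
    linarith

lemma abs_min_le (y M : ℝ) (hy : 0 ≤ y) (hM : 0 < M) : |min y M| ≤ M := by
  rw [abs_of_nonneg (le_min hy hM.le)]; exact min_le_right _ _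

lemma min_int_lower {α : Type*} [TopologicalSpace α] [MeasurableSpace α] [OpensMeasurableSpace α]
    (μ : Measure α) [IsProbabilityMeasure μ] (g : α → ℝ) (hg : Continuous g) (h0 : ∀ x, 0 ≤ g x)
    (i1 : Integrable g μ) (i2 : Integrable (fun x => g x * g x) μ)
    (a M : ℝ) (ha : 0 ≤ a) (ha1 : a ≤ 1) (hM : 0 < M) :
    a * ∫ x, g x ∂μ - a ^ 2 / (4 * M) * ∫ x, g x * g x ∂μ ≤ ∫ x, min (g x) M ∂μ := by
  rw [← integral_const_mul, ← integral_const_mul, ← integral_sub (i1.const_mul _) (i2.const_mul _)]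
  refine integral_mono ((i1.const_mul _).sub (i2.const_mul _)) (i1.inf (integrable_const M)) ?_
  intro x
  exact min_ge a (g x) M ha ha1 (h0 x) hM

lemma min_int_upper {α : Type*} [MeasurableSpace α]
    (μ : Measure α) [IsProbabilityMeasure μ] (g : α → ℝ)
    (i1 : Integrable g μ) (M : ℝ) :
    ∫ x, min (g x) M ∂μ ≤ ∫ x, g x ∂μ :=
  integral_mono (i1.inf (integrable_const M)) i1 fun x => min_le_left _ _

lemma min_poly_lower {K : ℕ} (G : MvPolynomial (Fin K) ℝ) (h0 : ∀ x, 0 ≤ eval x G)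
    (a M : ℝ) (ha : 0 ≤ a) (ha1 : a ≤ 1) (hM : 0 < M) :
    a * gE G - a ^ 2 / (4 * M) * gE (G * G) ≤ ∫ x, min (eval x G) M ∂gaussPi (Fin K) := by
  have i2 := integrable_poly (G * G)
  simp only [map_mul] at i2
  have := min_int_lower (gaussPi (Fin K)) (fun x => eval x G) (eval_cont G) h0 (integrable_poly G)
    i2 a M ha ha1 hM
  simpa [gE] using this

lemma g1_m2 : ∫ x : ℝ, x ^ 2 ∂(gaussianReal 0 1) = 1 := by
  rw [g1_stein 1]; simp
lemma g1_m4 : ∫ x : ℝ, x ^ 4 ∂(gaussianReal 0 1) = 3 := by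
  rw [g1_stein 3]; simp only [Nat.reduceSub, g1_m2]; norm_num
lemma g1_m6 : ∫ x : ℝ, x ^ 6 ∂(gaussianReal 0 1) = 15 := by
  rw [g1_stein 5]; simp only [Nat.reduceSub, g1_m4]; norm_num
lemma g1_m8 : ∫ x : ℝ, x ^ 8 ∂(gaussianReal 0 1) = 105 := by
  rw [g1_stein 7]; simp only [Nat.reduceSub, g1_m6]; norm_num

lemma g1_min2_upper (M : ℝ) : ∫ x : ℝ, min (x ^ 2) M ∂(gaussianReal 0 1) ≤ 1 := by
  rw [← g1_m2]; exact min_int_upper _ _ (g1_integrable_pow 2) M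
lemma g1_min4_upper (M : ℝ) : ∫ x : ℝ, min (x ^ 4) M ∂(gaussianReal 0 1) ≤ 3 := by
  rw [← g1_m4]; exact min_int_upper _ _ (g1_integrable_pow 4) M
lemma g1_min2_lower (M : ℝ) (hM : 0 < M) :
    1 - 3 / (4 * M) ≤ ∫ x : ℝ, min (x ^ 2) M ∂(gaussianReal 0 1) := by
  have e : ∀ x : ℝ, x ^ 2 * x ^ 2 = x ^ 4 := fun x => by ring
  have := min_int_lower (gaussianReal 0 1) (fun x => x ^ 2) (by fun_prop) (fun x => by positivity)
    (g1_integrable_pow 2) (by simpa only [e] using g1_integrable_pow 4) 1 M zero_le_one le_rfl hM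
  simp only [e, g1_m2, g1_m4] at this
  convert this using 1
  ring
lemma g1_min4_lower (M : ℝ) (hM : 0 < M) :
    3 - 105 / (4 * M) ≤ ∫ x : ℝ, min (x ^ 4) M ∂(gaussianReal 0 1) := by
  have e : ∀ x : ℝ, x ^ 4 * x ^ 4 = x ^ 8 := fun x => by ring
  have := min_int_lower (gaussianReal 0 1) (fun x => x ^ 4) (by fun_prop) (fun x => by positivity)
    (g1_integrable_pow 4) (by simpa only [e] using g1_integrable_pow 8) 1 M zero_le_one le_rfl hM
  simp only [e, g1_m4, g1_m8] at this
  convert this using 1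
  ring

/-- No constant has law close to the Gaussian. -/
lemma lp_const : ∃ δ > (0 : ℝ), ∀ (K : ℕ) (a : ℝ),
    ¬ levyProkhorovDist (Measure.map (fun x => eval x (C a : MvPolynomial (Fin K) ℝ))
      (gaussPi (Fin K))) (gaussianReal 0 1) ≤ δ := by
  obtain ⟨δ1, h1, H1⟩ := lp_poly (fun x => min (x ^ 2) 100) (by fun_prop) 100
    (fun x => abs_min_le _ _ (by positivity) (by norm_num)) (1/10) (by norm_num)
  obtain ⟨δ2, h2, H2⟩ := lp_poly (fun x => min (x ^ 4) 100) (by fun_prop) 100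
    (fun x => abs_min_le _ _ (by positivity) (by norm_num)) (1/10) (by norm_num)
  refine ⟨min δ1 δ2, lt_min h1 h2, fun K a hd => ?_⟩
  have k1 := H1 K _ (hd.trans (min_le_left _ _))
  have k2 := H2 K _ (hd.trans (min_le_right _ _))
  simp only [eval_C, integral_const, probReal_univ, smul_eq_mul, one_mul] at k1 k2
  have u1 := g1_min2_upper 100
  have l2 := g1_min4_lower 100 (by norm_num)
  rw [abs_lt] at k1 k2
  have k3 : min (a ^ 2) 100 < 11/10 := by linarith [k1.2]
  have k4 : 2 < min (a ^ 4) 100 := by norm_num at l2; linarith [k2.1]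
  have k5 : a ^ 2 < 11/10 := by
    rcases min_lt_iff.1 k3 with h | h
    · exact h
    · norm_num at h
  have k6 := (lt_min_iff.1 k4).1
  nlinarith [sq_nonneg a]

set_option maxHeartbeats 1000000 in
lemma lp_moments (m : ℕ) (ε : ℝ) (hε : 0 < ε) : ∃ δ > (0 : ℝ), ∀ (K : ℕ)
    (Q : MvPolynomial (Fin K) ℝ), DegLT (m + 1) Q →
    levyProkhorovDist (Measure.map (fun x => eval x Q) (gaussPi (Fin K))) (gaussianReal 0 1) ≤ δ →
    1 - ε ≤ gE (Q * Q) ∧ gE ((Q * Q) * (Q * Q)) ≤ 3 + ε := by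
  obtain ⟨C1, hC1, hy1⟩ := hyper (m + 1)
  obtain ⟨C2, hC2, hy2⟩ := hyper (2 * m + 1)
  obtain ⟨B, hB⟩ : ∃ B, B = C2 * (64 * C1) ^ 2 := ⟨_, rfl⟩
  have hB0 : 0 < B := by rw [hB]; positivity
  obtain ⟨δ1, h1, H1⟩ := lp_poly (fun x => min (x ^ 2) (4 * C1)) (by fun_prop) (4 * C1)
    (fun x => abs_min_le _ _ (by positivity) (by positivity)) 1 one_pos
  obtain ⟨δ2, h2, H2⟩ := lp_poly (fun x => min (x ^ 2) (3 / (2 * ε))) (by fun_prop) (3 / (2 * ε))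
    (fun x => abs_min_le _ _ (by positivity) (by positivity)) (ε / 2) (by positivity)
  obtain ⟨δ3, h3, H3⟩ := lp_poly (fun x => min (x ^ 4) (B / (2 * ε))) (by fun_prop) (B / (2 * ε))
    (fun x => abs_min_le _ _ (by positivity) (by positivity)) (ε / 2) (by positivity)
  refine ⟨min δ1 (min δ2 δ3), lt_min h1 (lt_min h2 h3), fun K Q hQ hd => ?_⟩
  have k1 := H1 K Q (hd.trans (min_le_left _ _))
  have k2 := H2 K Q (hd.trans ((min_le_right _ _).trans (min_le_left _ _)))
  have k3 := H3 K Q (hd.trans ((min_le_right _ _).trans (min_le_right _ _)))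
  rw [abs_lt] at k1 k2 k3
  have hp2 : ∀ x, eval x (Q * Q) = (eval x Q) ^ 2 := fun x => by simp [sq]
  have hp4 : ∀ x, eval x ((Q * Q) * (Q * Q)) = (eval x Q) ^ 4 := fun x => by simp; ring
  have q1 := hy1 K Q hQ
  have q2 := hy2 K (Q * Q) (DegLT.mul _ (m + 1) m (by ring) _ _ hQ hQ)
  have hs0 : 0 ≤ gE (Q * Q) := by have := gE_sq_nonneg Q; rwa [sq] at this
  have hs : gE (Q * Q) < 8 := by
    by_contra hcon
    push Not at hcon
    have ha1 : 8 / gE (Q * Q) ≤ 1 := by rw [div_le_one (by linarith)]; exact hcon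
    have := min_poly_lower (Q * Q) (fun x => by rw [hp2]; positivity) (8 / gE (Q * Q)) (4 * C1)
      (by positivity) ha1 (by positivity)
    simp only [hp2] at this
    have u := g1_min2_upper (4 * C1)
    have hne : gE (Q * Q) ≠ 0 := by linarith
    have e1 : (8 / gE (Q * Q)) ^ 2 / (4 * (4 * C1)) * gE ((Q * Q) * (Q * Q)) ≤
      (8 / gE (Q * Q)) ^ 2 / (4 * (4 * C1)) * (C1 * gE (Q * Q) ^ 2) := by gcongr
    have e2 : (8 / gE (Q * Q)) ^ 2 / (4 * (4 * C1)) * (C1 * gE (Q * Q) ^ 2) = 4 := by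
      field_simp; norm_num
    have e3 : 8 / gE (Q * Q) * gE (Q * Q) = 8 := by field_simp
    linarith [k1.2]
  have hq4 : gE ((Q * Q) * (Q * Q)) ≤ 64 * C1 := by
    have : gE (Q * Q) ^ 2 ≤ 64 := by nlinarith
    nlinarith
  have hq40 : 0 ≤ gE ((Q * Q) * (Q * Q)) := by have := gE_sq_nonneg (Q * Q); rwa [sq] at this
  have hq8 : gE (((Q * Q) * (Q * Q)) * ((Q * Q) * (Q * Q))) ≤ B := by
    refine q2.trans ?_
    rw [hB]; gcongr
  constructor
  · have l := g1_min2_lower (3 / (2 * ε)) (by positivity)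
    have u := min_int_upper (gaussPi (Fin K)) _ (integrable_poly (Q * Q)) (3 / (2 * ε))
    simp only [hp2] at u
    have u' : ∫ x, (eval x Q) ^ 2 ∂gaussPi (Fin K) = gE (Q * Q) := by simp only [gE, hp2]
    have e : 3 / (4 * (3 / (2 * ε))) = ε / 2 := by field_simp; norm_num
    linarith [k2.1]
  · have l := min_poly_lower ((Q * Q) * (Q * Q)) (fun x => by rw [hp4]; positivity) 1 (B / (2 * ε))
      zero_le_one le_rfl (by positivity)
    simp only [hp4] at l
    have u := g1_min4_upper (B / (2 * ε))
    have e1 : (1 : ℝ) ^ 2 / (4 * (B / (2 * ε))) * gE (((Q * Q) * (Q * Q)) * ((Q * Q) * (Q * Q))) ≤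
        1 ^ 2 / (4 * (B / (2 * ε))) * B := by gcongr
    have e2 : (1 : ℝ) ^ 2 / (4 * (B / (2 * ε))) * B = ε / 2 := by field_simp; norm_num
    linarith [k3.2]

lemma inv_pow_le_tsum (q : ℕ) (g : ℝ) (hg : 0 ≤ g) :
    (ENNReal.ofReal g ^ q)⁻¹ ≤
      1 + ∑' k : ℕ, ENNReal.ofReal (2 ^ (q * (k + 1)) * Real.exp 1 * Real.exp (-(2 ^ k * g))) := by
  rcases Nat.eq_zero_or_pos q with rfl | hq
  · simp
  rcases eq_or_lt_of_le hg with rfl | hg0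
  · have : ∑' k : ℕ, ENNReal.ofReal (2 ^ (q * (k + 1)) * Real.exp 1 * Real.exp (-(2 ^ k * 0))) = ⊤ := by
      rw [eq_top_iff, ← ENNReal.tsum_const_eq_top_of_ne_zero (α := ℕ) (one_ne_zero)]
      refine ENNReal.tsum_le_tsum fun k => ?_
      rw [← ENNReal.ofReal_one]
      refine ENNReal.ofReal_le_ofReal ?_
      have h1 : (1 : ℝ) ≤ 2 ^ (q * (k + 1)) := one_le_pow₀ (by norm_num)
      have h2 : (1 : ℝ) ≤ Real.exp 1 := Real.one_le_exp (by norm_num)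
      simp only [mul_zero, neg_zero, Real.exp_zero, mul_one]
      nlinarith
    rw [this]; simp
  · rw [← ENNReal.ofReal_pow hg, ← ENNReal.ofReal_inv_of_pos (by positivity)]
    rcases le_total 1 g with h1 | h1
    · refine le_add_right ?_
      rw [← ENNReal.ofReal_one]
      exact ENNReal.ofReal_le_ofReal (inv_le_one_of_one_le₀ (one_le_pow₀ h1))
    · obtain ⟨k, hk1, hk2⟩ := exists_nat_pow_near_of_lt_one hg0 h1 (y := (1 / 2 : ℝ)) (by norm_num) (by norm_num)
      refine le_add_left (le_trans ?_ (ENNReal.le_tsum k))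
      refine ENNReal.ofReal_le_ofReal ?_
      have a1 : (2 : ℝ) ^ k * g ≤ 1 := by
        calc (2 : ℝ) ^ k * g ≤ 2 ^ k * (1 / 2) ^ k := by gcongr
          _ = 1 := by rw [← mul_pow]; norm_num
      have a2 : 1 ≤ Real.exp 1 * Real.exp (-(2 ^ k * g)) := by
        rw [← Real.exp_add]; exact Real.one_le_exp (by linarith)
      have a3 : (g ^ q)⁻¹ ≤ 2 ^ (q * (k + 1)) := by
        rw [← inv_pow, mul_comm q, pow_mul]
        refine pow_le_pow_left₀ (by positivity) ?_ _
        rw [inv_le_comm₀ hg0 (by positivity)]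
        calc ((2 : ℝ) ^ (k + 1))⁻¹ = (1 / 2) ^ (k + 1) := by rw [one_div, inv_pow]
          _ ≤ g := hk1.le
      rw [mul_assoc]
      nlinarith [show (0 : ℝ) ≤ 2 ^ (q * (k + 1)) by positivity]

lemma neg_moment {α : Type*} [MeasurableSpace α] (μ : Measure α) [IsProbabilityMeasure μ]
    (g : α → ℝ) (hg : Measurable g) (h0 : ∀ x, 0 ≤ g x) (q : ℕ) (A : ℝ) (hA : 0 ≤ A)
    (H : ∀ k : ℕ, (∫ x, Real.exp (-(2 ^ k * g x)) ∂μ) * (2 ^ k) ^ (q + 1) ≤ A) :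
    ∫⁻ x, (ENNReal.ofReal (g x) ^ q)⁻¹ ∂μ ≤ ENNReal.ofReal (1 + 2 ^ q * Real.exp 1 * A * 2) := by
  have hme : ∀ k : ℕ, Measurable fun x => Real.exp (-(2 ^ k * g x)) := fun k => by fun_prop
  have hintg : ∀ k : ℕ, Integrable (fun x => Real.exp (-(2 ^ k * g x))) μ := fun k => by
    refine Integrable.of_bound (hme k).aestronglyMeasurable 1 (Eventually.of_forall fun x => ?_)
    rw [Real.norm_eq_abs, abs_of_pos (Real.exp_pos _), Real.exp_le_one_iff]
    have := h0 x
    have : 0 ≤ 2 ^ k * g x := by positivity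
    linarith
  calc ∫⁻ x, (ENNReal.ofReal (g x) ^ q)⁻¹ ∂μ
      ≤ ∫⁻ x, (1 + ∑' k : ℕ, ENNReal.ofReal
          (2 ^ (q * (k + 1)) * Real.exp 1 * Real.exp (-(2 ^ k * g x)))) ∂μ :=
        lintegral_mono fun x => inv_pow_le_tsum q (g x) (h0 x)
    _ = 1 + ∑' k : ℕ, ∫⁻ x, ENNReal.ofReal
          (2 ^ (q * (k + 1)) * Real.exp 1 * Real.exp (-(2 ^ k * g x))) ∂μ := by
        rw [lintegral_add_left measurable_const, lintegral_tsum]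
        · simp
        · intro k; exact (((hme k).const_mul _).ennreal_ofReal).aemeasurable
    _ ≤ 1 + ∑' k : ℕ, ENNReal.ofReal (2 ^ q * Real.exp 1 * A * (1 / 2) ^ k) := by
        gcongr with k
        rw [← ofReal_integral_eq_lintegral_ofReal ((hintg k).const_mul _)
          (Eventually.of_forall fun x => by positivity), integral_const_mul]
        refine ENNReal.ofReal_le_ofReal ?_
        have h1 := H k
        have h2 : (2 : ℝ) ^ (q * (k + 1)) = 2 ^ q * ((2 ^ k) ^ (q + 1) * (1 / 2) ^ k) := by
          rw [one_div, inv_pow]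
          have : (2 : ℝ) ^ k ≠ 0 := by positivity
          field_simp
          ring
        calc 2 ^ (q * (k + 1)) * Real.exp 1 * ∫ x, Real.exp (-(2 ^ k * g x)) ∂μ
            = (2 ^ q * Real.exp 1 * (1 / 2) ^ k) *
              ((∫ x, Real.exp (-(2 ^ k * g x)) ∂μ) * (2 ^ k) ^ (q + 1)) := by rw [h2]; ring
          _ ≤ (2 ^ q * Real.exp 1 * (1 / 2) ^ k) * A := by gcongr
          _ = _ := by ring
    _ = ENNReal.ofReal (1 + 2 ^ q * Real.exp 1 * A * 2) := by
        rw [← ENNReal.ofReal_tsum_of_nonneg (fun k => by positivity)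
          (summable_geometric_two.mul_left _), tsum_mul_left, tsum_geometric_two,
          ENNReal.ofReal_add zero_le_one (by positivity), ENNReal.ofReal_one]

set_option maxHeartbeats 1000000 in
theorem main_succ (n q : ℕ) :
    ∃ δ > (0 : ℝ), ∃ B > (0 : ℝ),
      ∀ (K : ℕ) (P Q R : MvPolynomial (Fin K) ℝ),
        P.totalDegree ≤ n + 1 → P = Q + R → Q ∈ chaos K (n + 1) → R.totalDegree ≤ n →
        levyProkhorovDist (Measure.map (fun x => eval x Q) (gaussPi (Fin K)))
          (gaussianReal 0 1) ≤ δ →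
        ∫⁻ x, (ENNReal.ofReal (sqField P x) ^ q)⁻¹ ∂gaussPi (Fin K) ≤ ENNReal.ofReal B ∧
          1 / 2 ≤ gE (P * P) := by
  obtain ⟨c, hc, hlap⟩ := laplace_le n
  obtain ⟨δt, hδt, Cd, hCd, hten⟩ := tensor_decay n (2 ^ n * (q + 1))
  obtain ⟨ε, hε⟩ : ∃ ε, ε = min (1 / 2) (δt / 28) := ⟨_, rfl⟩
  have hε0 : 0 < ε := by rw [hε]; exact lt_min (by norm_num) (by positivity)
  have hε1 : ε ≤ 1 / 2 := by rw [hε]; exact min_le_left _ _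
  have hε2 : ε ≤ δt / 28 := by rw [hε]; exact min_le_right _ _
  obtain ⟨δ, hδ, hmom⟩ := lp_moments (n + 1) ε hε0
  obtain ⟨A, hA⟩ : ∃ A, A = (Cd + 1) / (c ^ 2) ^ (q + 1) := ⟨_, rfl⟩
  have hA0 : 0 < A := by rw [hA]; positivity
  refine ⟨δ, hδ, 1 + 2 ^ q * Real.exp 1 * A * 2, by positivity, ?_⟩
  intro K P Q R hP hPQ hQ hR hd
  have hP' : DegLT (n + 2) P := degLT_of_totalDegree (by omega)
  have hR' : DegLT (n + 1) (P - Q) := by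
    rw [hPQ, add_sub_cancel_left]; exact degLT_of_totalDegree (by omega)
  have hQ' := chaos_degLT hQ
  obtain ⟨m1, m2⟩ := hmom K Q hQ' hd
  have hbb : BB (e0 K) (n + 1) P P = (n + 1).factorial * gE (Q * Q) := by
    rw [BB_congr (e0 K) hR', chaos_sq hQ, BB_gE_e0 hQ' hQ']
    have : ((n + 1).factorial : ℝ) ≠ 0 := by positivity
    field_simp
  have hf1 : (1 : ℝ) ≤ (n + 1).factorial := by exact_mod_cast Nat.one_le_iff_ne_zero.2 (Nat.factorial_ne_zero _)
  have hbb2 : ((n + 1).factorial : ℝ) / 2 ≤ BB (e0 K) (n + 1) P P := by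
    rw [hbb]; nlinarith
  have hV : ∀ r s, 1 ≤ r → 1 ≤ s → r + s = n + 1 → VV r s P ≤ δt * BB (e0 K) (n + 1) P P ^ 2 := by
    intro r s hr hs hrs
    have hrs' : s + r = n + 1 := by omega
    rw [VV_congr hrs' hR']
    have h4 := fourth_moment hr hs (Q := Q) (by rw [hrs']; exact hQ)
    have hk : gE ((Q * Q) * (Q * Q)) - 3 * gE (Q * Q) ^ 2 ≤ 7 * ε := by nlinarith
    have hfac : (r.factorial : ℝ) * s.factorial ≤ (n + 1).factorial := by
      rw [← hrs]
      exact_mod_cast Nat.le_of_dvd (Nat.factorial_pos _) (Nat.factorial_mul_factorial_dvd_factorial_add r s)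
    calc VV r s Q ≤ ((r.factorial : ℝ) * s.factorial) ^ 2 * (7 * ε) := h4.trans (by gcongr)
      _ ≤ ((n + 1).factorial : ℝ) ^ 2 * (7 * (δt / 28)) := by gcongr
      _ = δt * (((n + 1).factorial : ℝ) / 2) ^ 2 := by ring
      _ ≤ _ := by gcongr
  constructor
  · have hcont : Continuous fun x => sqField P x := by
      unfold sqField
      exact continuous_finsetSum _ fun i _ => (eval_cont _).pow 2
    refine neg_moment (gaussPi (Fin K)) (fun x => sqField P x) hcont.measurable
      (fun x => Finset.sum_nonneg fun i _ => sq_nonneg _) q A hA0.le ?_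
    intro k
    obtain ⟨t, ht⟩ : ∃ t, t = Real.sqrt (2 ^ (k + 1)) := ⟨_, rfl⟩
    have ht2 : t ^ 2 = 2 ^ (k + 1) := by rw [ht]; exact Real.sq_sqrt (by positivity)
    have h1 := hlap K P t hP'
    have e1 : ∀ x, -(t ^ 2 * sqField P x) / 2 = -(2 ^ k * sqField P x) := fun x => by
      rw [ht2]; ring
    simp only [e1] at h1
    have hL0 : 0 ≤ ∫ x, Real.exp (-(2 ^ k * sqField P x)) ∂gaussPi (Fin K) :=
      integral_nonneg fun x => (Real.exp_pos _).le
    have h2 := hten K ((c * t) • P) (by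
      intro r s hr hs hrs
      have := hV r s hr hs hrs
      rw [VV_smul, BB_smul_left, BB_smul_right]
      calc (c * t) ^ 4 * VV r s P ≤ (c * t) ^ 4 * (δt * BB (e0 K) (n + 1) P P ^ 2) := by gcongr
        _ = _ := by ring)
    rw [BB_smul_left, BB_smul_right] at h2
    have h3 : c ^ 2 * 2 ^ k ≤ c * t * (c * t * BB (e0 K) (n + 1) P P) := by
      have : c * t * (c * t * BB (e0 K) (n + 1) P P) = c ^ 2 * (2 ^ k * (2 * BB (e0 K) (n + 1) P P)) := by
        calc _ = c ^ 2 * (t ^ 2 * BB (e0 K) (n + 1) P P) := by ring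
          _ = _ := by rw [ht2]; ring
      rw [this]
      have : 1 ≤ 2 * BB (e0 K) (n + 1) P P := by linarith
      have : (0 : ℝ) < 2 ^ k := by positivity
      gcongr
      nlinarith
    obtain ⟨L, hL⟩ : ∃ L, L = ∫ x, Real.exp (-(2 ^ k * sqField P x)) ∂gaussPi (Fin K) := ⟨_, rfl⟩
    rw [← hL] at h1 hL0 ⊢
    have h4 : (L * (c ^ 2 * 2 ^ k) ^ (q + 1)) ^ (2 ^ n) ≤ (Cd + 1) ^ (2 ^ n) := by
      calc (L * (c ^ 2 * 2 ^ k) ^ (q + 1)) ^ (2 ^ n)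
          = (c ^ 2 * 2 ^ k) ^ (2 ^ n * (q + 1)) * L ^ (2 ^ n) := by
            rw [mul_pow, ← pow_mul, mul_comm (q + 1), mul_comm]
        _ ≤ (c * t * (c * t * BB (e0 K) (n + 1) P P)) ^ (2 ^ n * (q + 1)) *
            phi (n + 1) ((c * t) • P) := by
          have h30 : 0 ≤ c * t * (c * t * BB (e0 K) (n + 1) P P) := le_trans (by positivity) h3
          have h31 := pow_nonneg h30 (2 ^ n * (q + 1))
          gcongr
        _ ≤ Cd := h2
        _ ≤ Cd + 1 := by linarith
        _ ≤ (Cd + 1) ^ (2 ^ n) := le_self_pow₀ (by linarith) (by positivity)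
    have h5 := (pow_le_pow_iff_left₀ (by positivity) (by positivity) (by positivity)).1 h4
    rw [hA, le_div_iff₀ (by positivity)]
    rw [mul_pow] at h5
    linarith
  · have h := gE_sum_le P {n + 1}
    rw [Finset.sum_singleton, BB_gE_e0 hP' hP', hbb] at h
    have : ((n + 1).factorial : ℝ) ≠ 0 := by positivity
    rw [mul_div_cancel_left₀ _ this] at h
    linarith

theorem main_all (m q : ℕ) :
    ∃ δ > (0 : ℝ), ∃ r > (0 : ℝ), ∃ C > (0 : ℝ),
      ∀ (K : ℕ) (P Q R : MvPolynomial (Fin K) ℝ),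
        P.totalDegree ≤ m → P = Q + R → Q ∈ chaos K m → R.totalDegree ≤ m - 1 →
        levyProkhorovDist (Measure.map (fun x => eval x Q) (gaussPi (Fin K)))
          (gaussianReal 0 1) ≤ δ →
        ∫⁻ x, (ENNReal.ofReal (sqField P x) ^ q)⁻¹ ∂gaussPi (Fin K) ≤
          ENNReal.ofReal (C * (∫ x, (eval x P) ^ 2 ∂gaussPi (Fin K)) ^ (r / 2)) := by
  rcases m with _ | n
  · obtain ⟨δ, hδ, H⟩ := lp_const
    refine ⟨δ, hδ, 1, one_pos, 1, one_pos, ?_⟩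
    intro K P Q R _ _ hQ _ hd
    obtain ⟨a, rfl⟩ := chaos_zero hQ
    exact absurd hd (H K a)
  · obtain ⟨δ, hδ, B, hB, H⟩ := main_succ n q
    refine ⟨δ, hδ, 2, two_pos, 2 * B, by positivity, ?_⟩
    intro K P Q R h1 h2 h3 h4 h5
    obtain ⟨k1, k2⟩ := H K P Q R h1 h2 h3 (by simpa using h4) h5
    refine k1.trans (ENNReal.ofReal_le_ofReal ?_)
    have e : ∫ x, (eval x P) ^ 2 ∂gaussPi (Fin K) = gE (P * P) := by
      simp only [gE, map_mul, sq]
    rw [e, div_self two_ne_zero, Real.rpow_one]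
    nlinarith

/-- Quantitative negative-moment bound on a sum of chaoses: if the projection on
the top chaos is close in law to `N(0,1)`, then the negative `q`-moment of the carré du champ is
controlled by a power of the `L²`-norm. -/
theorem negative_moments_sum_of_chaoses_quantitative (m q : ℕ) :
    ∃ δ > (0:ℝ), ∃ r > (0:ℝ), ∃ C > (0:ℝ),
      ∀ (K : ℕ) (P Q R : MvPolynomial (Fin K) ℝ),
        P.totalDegree ≤ m → P = Q + R → Q ∈ chaos K m → R.totalDegree ≤ m - 1 →
        levyProkhorovDist
            (Measure.map (fun x => eval x Q) (gaussPi (Fin K))) (gaussianReal 0 1) ≤ δ →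
        ∫⁻ x, (ENNReal.ofReal (sqField P x) ^ q)⁻¹ ∂gaussPi (Fin K)
          ≤ ENNReal.ofReal
              (C * (∫ x, (eval x P) ^ 2 ∂gaussPi (Fin K)) ^ (r / 2)) := by
  exact main_all m q
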